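/- arXiv:1604.08830 — 5 statements merged into one kernel-verified Lean document; each statement's English description precedes it below -/
import Mathlib

section
/- Let n ≥ 2, −∞ < μ < 1/4 and 1 < p < p_c := 1 + 2/(n−2+α₊). Then there exist constants 0 < c₁ < c₂ and a positive function v, twice continuously differentiable on (0,1) and continuous on [0,1], satisfying (1−t²)v''(t) − (n−1)t v'(t) + (μ/t²)v(t) + Λ(−2/(p−1))v(t) = v(t)^p for all t ∈ (0,1), and c₁ t^{α₊} < v(t) < c₂ t^{α₊} for all t ∈ (0,1]. -/
open Real Set

noncomputable def lap {n : ℕ} (u : EuclideanSpace ℝ (Fin n) → ℝ)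
    (x : EuclideanSpace ℝ (Fin n)) : ℝ :=
  ∑ i : Fin n, iteratedFDeriv ℝ 2 u x ![EuclideanSpace.single i 1, EuclideanSpace.single i 1]

noncomputable def x1 {n : ℕ} (x : EuclideanSpace ℝ (Fin n)) : ℝ :=
  if h : 0 < n then x ⟨0, h⟩ else 0

def halfSpace (n : ℕ) : Set (EuclideanSpace ℝ (Fin n)) := {x | 0 < x1 x}

noncomputable def aPlus (μ : ℝ) : ℝ := 1 / 2 + Real.sqrt (1 / 4 - μ)

noncomputable def aMinus (μ : ℝ) : ℝ := 1 / 2 - Real.sqrt (1 / 4 - μ)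

noncomputable def Lam (n : ℕ) (s : ℝ) : ℝ := s * (s + n - 2)


section abstractIteration
open MeasureTheory Filter Topology

noncomputable def iterOp (P : ℝ → ℝ) (h : ℝ → ℝ → ℝ) (x : ℝ → ℝ) (t : ℝ) : ℝ :=
  ∫ s in t..1, (∫ r in (0:ℝ)..s, h r (x r)) / P s

structure IterPre (P : ℝ → ℝ) (h : ℝ → ℝ → ℝ) (a b : ℝ → ℝ) (C : ℝ) : Prop where
  hP : ∀ t ∈ Ioo (0:ℝ) 1, 0 < P t
  hPc : ContinuousOn P (Ioo 0 1)
  hh : ContinuousOn (Function.uncurry h) (Ioo (0:ℝ) 1 ×ˢ Ioi (0:ℝ))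
  ha0 : ∀ t ∈ Ioo (0:ℝ) 1, 0 < a t
  hac : ContinuousOn a (Ioo 0 1)
  hbc : ContinuousOn b (Ioo 0 1)
  hab : ∀ t ∈ Ioo (0:ℝ) 1, a t ≤ b t
  hmono : ∀ t ∈ Ioo (0:ℝ) 1, ∀ x y, a t ≤ x → x ≤ y → y ≤ b t → h t x ≤ h t y
  hnn : ∀ t ∈ Ioo (0:ℝ) 1, 0 ≤ h t (a t)
  hgint : ∀ s ∈ Ioo (0:ℝ) 1, IntervalIntegrable (fun r => h r (b r)) volume 0 s
  hC : ∀ s ∈ Ioo (0:ℝ) 1, (∫ r in (0:ℝ)..s, h r (b r)) / P s ≤ C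

structure IterData (P : ℝ → ℝ) (h : ℝ → ℝ → ℝ) (a b : ℝ → ℝ) (C : ℝ) : Prop
    extends IterPre P h a b C where
  hsub : ∀ t ∈ Ioo (0:ℝ) 1, a t ≤ iterOp P h a t
  hsup : ∀ t ∈ Ioo (0:ℝ) 1, iterOp P h b t ≤ b t

structure IterGood (h : ℝ → ℝ → ℝ) (a b x : ℝ → ℝ) : Prop where
  bd : ∀ t ∈ Ioo (0:ℝ) 1, a t ≤ x t ∧ x t ≤ b t
  ms : AEStronglyMeasurable (fun r => h r (x r)) (volume.restrict (Ioo (0:ℝ) 1))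

variable {P : ℝ → ℝ} {h : ℝ → ℝ → ℝ} {a b : ℝ → ℝ} {C : ℝ}

lemma IterPre.comp_cont (D : IterPre P h a b C) {x : ℝ → ℝ} (hx : ContinuousOn x (Ioo 0 1))
    (hb : ∀ t ∈ Ioo (0:ℝ) 1, a t ≤ x t) :
    ContinuousOn (fun r => h r (x r)) (Ioo 0 1) := by
  have : ContinuousOn (fun r => (r, x r)) (Ioo (0:ℝ) 1) := continuousOn_id.prodMk hx
  exact D.hh.comp this (fun r hr => ⟨hr, lt_of_lt_of_le (D.ha0 r hr) (hb r hr)⟩)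

lemma IterPre.good_of_cont (D : IterPre P h a b C) {x : ℝ → ℝ} (hx : ContinuousOn x (Ioo 0 1))
    (hb : ∀ t ∈ Ioo (0:ℝ) 1, a t ≤ x t ∧ x t ≤ b t) : IterGood h a b x :=
  ⟨hb, (D.comp_cont hx (fun t ht => (hb t ht).1)).aestronglyMeasurable measurableSet_Ioo⟩

lemma IterPre.nonneg (D : IterPre P h a b C) {x : ℝ → ℝ} (G : IterGood h a b x)
    {r : ℝ} (hr : r ∈ Ioo (0:ℝ) 1) : 0 ≤ h r (x r) :=
  (D.hnn r hr).trans (D.hmono r hr _ _ le_rfl (G.bd r hr).1 (G.bd r hr).2)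

lemma IterPre.le_b (D : IterPre P h a b C) {x : ℝ → ℝ} (G : IterGood h a b x)
    {r : ℝ} (hr : r ∈ Ioo (0:ℝ) 1) : h r (x r) ≤ h r (b r) :=
  D.hmono r hr _ _ (G.bd r hr).1 (G.bd r hr).2 le_rfl

lemma IterPre.int1 (D : IterPre P h a b C) {x : ℝ → ℝ} (G : IterGood h a b x)
    {s : ℝ} (hs : s ∈ Ioo (0:ℝ) 1) : IntervalIntegrable (fun r => h r (x r)) volume 0 s := by
  refine (D.hgint s hs).mono_fun ?_ ?_
  · rw [uIoc_of_le hs.1.le]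
    have hsub : Ioc (0:ℝ) s ⊆ Ioo 0 1 := fun r hr => ⟨hr.1, hr.2.trans_lt hs.2⟩
    exact G.ms.mono_measure (Measure.restrict_mono hsub le_rfl)
  · rw [uIoc_of_le hs.1.le]
    refine (ae_restrict_iff' measurableSet_Ioc).2 (Eventually.of_forall fun r hr => ?_)
    have hr' : r ∈ Ioo (0:ℝ) 1 := ⟨hr.1, hr.2.trans_lt hs.2⟩
    show ‖h r (x r)‖ ≤ ‖h r (b r)‖
    rw [Real.norm_of_nonneg (D.nonneg G hr'), Real.norm_eq_abs]
    exact (D.le_b G hr').trans (le_abs_self _)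

lemma IterPre.inner_mono (D : IterPre P h a b C) {x x' : ℝ → ℝ} (G : IterGood h a b x)
    (G' : IterGood h a b x') (hxx : ∀ t ∈ Ioo (0:ℝ) 1, x t ≤ x' t)
    {s : ℝ} (hs : s ∈ Ioo (0:ℝ) 1) :
    (∫ r in (0:ℝ)..s, h r (x r)) ≤ ∫ r in (0:ℝ)..s, h r (x' r) := by
  refine intervalIntegral.integral_mono_on_of_le_Ioo hs.1.le (D.int1 G hs) (D.int1 G' hs) ?_
  intro r hr
  have hr' : r ∈ Ioo (0:ℝ) 1 := ⟨hr.1, hr.2.trans hs.2⟩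
  exact D.hmono r hr' _ _ (G.bd r hr').1 (hxx r hr') (G'.bd r hr').2

lemma IterPre.inner_nonneg (D : IterPre P h a b C) {x : ℝ → ℝ} (G : IterGood h a b x)
    {s : ℝ} (hs : s ∈ Ioo (0:ℝ) 1) : 0 ≤ ∫ r in (0:ℝ)..s, h r (x r) := by
  refine intervalIntegral.integral_nonneg_of_ae_restrict hs.1.le ?_
  rw [← restrict_Ioo_eq_restrict_Icc]
  exact (ae_restrict_iff' measurableSet_Ioo).2 (Eventually.of_forall fun r hr =>
    D.nonneg G ⟨hr.1, hr.2.trans hs.2⟩)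

lemma IterPre.inner_cont (D : IterPre P h a b C) {x : ℝ → ℝ} (G : IterGood h a b x) :
    ContinuousOn (fun s => ∫ r in (0:ℝ)..s, h r (x r)) (Ioo 0 1) := by
  intro s hs
  obtain ⟨s', h1, h2⟩ := exists_between hs.2
  have hs' : s' ∈ Ioo (0:ℝ) 1 := ⟨hs.1.trans h1, h2⟩
  have := intervalIntegral.continuousOn_primitive_interval
    (a := (0:ℝ)) (b := s') (f := fun r => h r (x r)) (μ := volume) (by
      rw [uIcc_of_le hs'.1.le]
      exact (intervalIntegrable_iff_integrableOn_Icc_of_le hs'.1.le).1 (D.int1 G hs'))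
  rw [uIcc_of_le hs'.1.le] at this
  exact (this.continuousAt (Icc_mem_nhds hs.1 h1)).continuousWithinAt

lemma IterPre.quot_cont (D : IterPre P h a b C) {x : ℝ → ℝ} (G : IterGood h a b x) :
    ContinuousOn (fun s => (∫ r in (0:ℝ)..s, h r (x r)) / P s) (Ioo 0 1) :=
  (D.inner_cont G).div D.hPc (fun s hs => (D.hP s hs).ne')

lemma IterPre.good_b (D : IterPre P h a b C) : IterGood h a b b :=
  D.good_of_cont D.hbc (fun t ht => ⟨D.hab t ht, le_rfl⟩)
lemma IterPre.good_a (D : IterPre P h a b C) : IterGood h a b a :=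
  D.good_of_cont D.hac (fun t ht => ⟨le_rfl, D.hab t ht⟩)

lemma IterPre.quot_nonneg (D : IterPre P h a b C) {x : ℝ → ℝ} (G : IterGood h a b x)
    {s : ℝ} (hs : s ∈ Ioo (0:ℝ) 1) : 0 ≤ (∫ r in (0:ℝ)..s, h r (x r)) / P s :=
  div_nonneg (D.inner_nonneg G hs) (D.hP s hs).le

lemma IterPre.quot_le (D : IterPre P h a b C) {x : ℝ → ℝ} (G : IterGood h a b x)
    {s : ℝ} (hs : s ∈ Ioo (0:ℝ) 1) : (∫ r in (0:ℝ)..s, h r (x r)) / P s ≤ C :=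
  (div_le_div_of_nonneg_right (D.inner_mono G D.good_b (fun t ht => (G.bd t ht).2) hs)
    (D.hP s hs).le).trans (D.hC s hs)

lemma IterPre.int2 (D : IterPre P h a b C) {x : ℝ → ℝ} (G : IterGood h a b x) :
    IntervalIntegrable (fun s => (∫ r in (0:ℝ)..s, h r (x r)) / P s) volume 0 1 := by
  rw [intervalIntegrable_iff_integrableOn_Ioo_of_le zero_le_one]
  refine IntegrableOn.of_bound (C := C) (by simp)
    ((D.quot_cont G).aestronglyMeasurable measurableSet_Ioo) ?_
  refine (ae_restrict_iff' measurableSet_Ioo).2 (Eventually.of_forall fun s hs => ?_)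
  rw [Real.norm_of_nonneg (D.quot_nonneg G hs)]
  exact D.quot_le G hs

lemma IterPre.int2' (D : IterPre P h a b C) {x : ℝ → ℝ} (G : IterGood h a b x)
    {t : ℝ} (ht : t ∈ Ioo (0:ℝ) 1) :
    IntervalIntegrable (fun s => (∫ r in (0:ℝ)..s, h r (x r)) / P s) volume t 1 :=
  (D.int2 G).mono_set (by rw [uIcc_of_le ht.2.le, uIcc_of_le zero_le_one]
                          exact Icc_subset_Icc_left ht.1.le)

lemma IterPre.hasDerivAt_op (D : IterPre P h a b C) {x : ℝ → ℝ} (G : IterGood h a b x)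
    {t : ℝ} (ht : t ∈ Ioo (0:ℝ) 1) :
    HasDerivAt (iterOp P h x) (-((∫ r in (0:ℝ)..t, h r (x r)) / P t)) t := by
  refine intervalIntegral.integral_hasDerivAt_left (D.int2' G ht) ?_ ?_
  · exact (D.quot_cont G).stronglyMeasurableAtFilter isOpen_Ioo t ht
  · exact (D.quot_cont G).continuousAt (Ioo_mem_nhds ht.1 ht.2)

lemma IterPre.op_cont (D : IterPre P h a b C) {x : ℝ → ℝ} (G : IterGood h a b x) :
    ContinuousOn (iterOp P h x) (Ioo 0 1) :=
  fun _ ht => (D.hasDerivAt_op G ht).continuousAt.continuousWithinAt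

lemma IterPre.op_mono (D : IterPre P h a b C) {x x' : ℝ → ℝ} (G : IterGood h a b x)
    (G' : IterGood h a b x') (hxx : ∀ t ∈ Ioo (0:ℝ) 1, x t ≤ x' t)
    {t : ℝ} (ht : t ∈ Ioo (0:ℝ) 1) : iterOp P h x t ≤ iterOp P h x' t := by
  refine intervalIntegral.integral_mono_on_of_le_Ioo ht.2.le (D.int2' G ht) (D.int2' G' ht) ?_
  intro s hs
  have hs' : s ∈ Ioo (0:ℝ) 1 := ⟨ht.1.trans hs.1, hs.2⟩
  exact div_le_div_of_nonneg_right (D.inner_mono G G' hxx hs') (D.hP s hs').le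

lemma IterData.op_good (D : IterData P h a b C) {x : ℝ → ℝ} (G : IterGood h a b x) :
    IterGood h a b (iterOp P h x) :=
  D.good_of_cont (D.op_cont G) fun t ht =>
    ⟨(D.hsub t ht).trans (D.op_mono D.good_a G (fun t ht => (G.bd t ht).1) ht),
     (D.op_mono G D.good_b (fun t ht => (G.bd t ht).2) ht).trans (D.hsup t ht)⟩

noncomputable def iterSeq (P : ℝ → ℝ) (h : ℝ → ℝ → ℝ) (a : ℝ → ℝ) : ℕ → ℝ → ℝ
  | 0 => a
  | k + 1 => iterOp P h (iterSeq P h a k)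

lemma IterData.seq_good (D : IterData P h a b C) (k : ℕ) : IterGood h a b (iterSeq P h a k) := by
  induction k with
  | zero => exact D.good_a
  | succ k ih => exact D.op_good ih

lemma IterData.seq_step (D : IterData P h a b C) (k : ℕ) :
    ∀ t ∈ Ioo (0:ℝ) 1, iterSeq P h a k t ≤ iterSeq P h a (k+1) t := by
  induction k with
  | zero => exact D.hsub
  | succ k ih => exact fun t ht => D.op_mono (D.seq_good k) (D.seq_good (k+1)) ih ht

theorem IterData.exists_fixed (D : IterData P h a b C) :
    ∃ y : ℝ → ℝ, IterGood h a b y ∧ ∀ t ∈ Ioo (0:ℝ) 1, y t = iterOp P h y t := by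
  have hlim : ∀ t ∈ Ioo (0:ℝ) 1, Tendsto (fun k => iterSeq P h a k t) atTop
      (𝓝 (⨆ k, iterSeq P h a k t)) := fun t ht =>
    tendsto_atTop_ciSup (monotone_nat_of_le_succ fun k => D.seq_step k t ht)
      ⟨b t, by rintro _ ⟨k, rfl⟩; exact ((D.seq_good k).bd t ht).2⟩
  set y : ℝ → ℝ := fun t => ⨆ k, iterSeq P h a k t with hy
  have hbd : ∀ t ∈ Ioo (0:ℝ) 1, a t ≤ y t ∧ y t ≤ b t := fun t ht =>
    ⟨ge_of_tendsto' (hlim t ht) fun k => ((D.seq_good k).bd t ht).1,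
     le_of_tendsto' (hlim t ht) fun k => ((D.seq_good k).bd t ht).2⟩
  have hhlim : ∀ r ∈ Ioo (0:ℝ) 1, Tendsto (fun k => h r (iterSeq P h a k r)) atTop
      (𝓝 (h r (y r))) := by
    intro r hr
    have hpos : 0 < y r := lt_of_lt_of_le (D.ha0 r hr) (hbd r hr).1
    have hc : ContinuousAt (Function.uncurry h) (r, y r) :=
      D.hh.continuousAt (prod_mem_nhds (Ioo_mem_nhds hr.1 hr.2) (Ioi_mem_nhds hpos))
    exact hc.tendsto.comp (tendsto_const_nhds.prodMk_nhds (hlim r hr))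
  have G : IterGood h a b y := by
    refine ⟨hbd, aestronglyMeasurable_of_tendsto_ae atTop
      (f := fun k r => h r (iterSeq P h a k r)) (fun k => (D.seq_good k).ms) ?_⟩
    exact (ae_restrict_iff' measurableSet_Ioo).2 (Eventually.of_forall hhlim)
  refine ⟨y, G, fun t ht => ?_⟩
  have hin : ∀ s ∈ Ioo (0:ℝ) 1, Tendsto (fun k => ∫ r in (0:ℝ)..s, h r (iterSeq P h a k r)) atTop
      (𝓝 (∫ r in (0:ℝ)..s, h r (y r))) := by
    intro s hs
    refine intervalIntegral.tendsto_integral_filter_of_dominated_convergence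
      (fun r => h r (b r)) (Eventually.of_forall fun k => ?_) (Eventually.of_forall fun k => ?_)
      (D.hgint s hs) ?_
    · exact (intervalIntegrable_iff.1 (D.int1 (D.seq_good k) hs)).aestronglyMeasurable
    · refine Eventually.of_forall fun r hr => ?_
      rw [uIoc_of_le hs.1.le] at hr
      have hr' : r ∈ Ioo (0:ℝ) 1 := ⟨hr.1, hr.2.trans_lt hs.2⟩
      rw [Real.norm_of_nonneg (D.nonneg (D.seq_good k) hr')]
      exact D.le_b (D.seq_good k) hr'
    · refine Eventually.of_forall fun r hr => ?_
      rw [uIoc_of_le hs.1.le] at hr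
      exact hhlim r ⟨hr.1, hr.2.trans_lt hs.2⟩
  have hout : Tendsto (fun k => iterOp P h (iterSeq P h a k) t) atTop (𝓝 (iterOp P h y t)) := by
    have hne : ∀ᵐ s : ℝ, s ≠ 1 := by simp [ae_iff]
    refine intervalIntegral.tendsto_integral_filter_of_dominated_convergence
      (fun r => C) (Eventually.of_forall fun k => ?_) (Eventually.of_forall fun k => ?_)
      (by simp) ?_
    · exact (intervalIntegrable_iff.1 (D.int2' (D.seq_good k) ht)).aestronglyMeasurable
    · filter_upwards [hne] with s hs1 hs
      rw [uIoc_of_le ht.2.le] at hs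
      have hs' : s ∈ Ioo (0:ℝ) 1 := ⟨ht.1.trans hs.1, lt_of_le_of_ne hs.2 hs1⟩
      rw [Real.norm_of_nonneg (D.quot_nonneg (D.seq_good k) hs')]
      exact D.quot_le (D.seq_good k) hs'
    · filter_upwards [hne] with s hs1 hs
      rw [uIoc_of_le ht.2.le] at hs
      have hs' : s ∈ Ioo (0:ℝ) 1 := ⟨ht.1.trans hs.1, lt_of_le_of_ne hs.2 hs1⟩
      exact (hin s hs').div_const _
  exact tendsto_nhds_unique ((tendsto_add_atTop_iff_nat 1).2 (hlim t ht)) hout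

/-- The fixed point with its derivatives. -/
theorem IterData.exists_sol (D : IterData P h a b C) :
    ∃ y z : ℝ → ℝ, (∀ t ∈ Ioo (0:ℝ) 1, a t ≤ y t ∧ y t ≤ b t) ∧
      (∀ t ∈ Ioo (0:ℝ) 1, HasDerivAt y (-(z t / P t)) t) ∧
      (∀ t ∈ Ioo (0:ℝ) 1, HasDerivAt z (h t (y t)) t) := by
  obtain ⟨y, G, hfix⟩ := D.exists_fixed
  have hd : ∀ t ∈ Ioo (0:ℝ) 1, HasDerivAt y (-((∫ r in (0:ℝ)..t, h r (y r)) / P t)) t := by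
    intro t ht
    refine (D.hasDerivAt_op G ht).congr_of_eventuallyEq ?_
    filter_upwards [Ioo_mem_nhds ht.1 ht.2] with s hs using hfix s hs
  have hyc : ContinuousOn y (Ioo 0 1) := fun t ht => (hd t ht).continuousAt.continuousWithinAt
  have hhc := D.comp_cont hyc (fun t ht => (G.bd t ht).1)
  refine ⟨y, fun t => ∫ r in (0:ℝ)..t, h r (y r), G.bd, hd, fun t ht => ?_⟩
  exact intervalIntegral.integral_hasDerivAt_right (D.int1 G ht)
    (hhc.stronglyMeasurableAtFilter isOpen_Ioo t ht)
    (hhc.continuousAt (Ioo_mem_nhds ht.1 ht.2))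


lemma barrier_inner {F F' g : ℝ → ℝ} (hF : ContinuousOn F (Ico 0 1)) (hF0 : F 0 = 0)
    (hF' : ∀ t ∈ Ioo (0:ℝ) 1, HasDerivAt F (F' t) t) (hg : ContinuousOn g (Ico 0 1))
    (hle : ∀ t ∈ Ioo (0:ℝ) 1, 0 ≤ F' t + g t) {s : ℝ} (hs : s ∈ Ioo (0:ℝ) 1) :
    0 ≤ F s + ∫ r in (0:ℝ)..s, g r := by
  have hsub : Icc 0 s ⊆ Ico 0 1 := fun r hr => ⟨hr.1, hr.2.trans_lt hs.2⟩
  have hgi : IntegrableOn g (uIcc 0 s) := by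
    rw [uIcc_of_le hs.1.le]; exact (hg.mono hsub).integrableOn_Icc
  have hc : ContinuousOn (fun s => F s + ∫ r in (0:ℝ)..s, g r) (Icc 0 s) := by
    have := intervalIntegral.continuousOn_primitive_interval hgi
    rw [uIcc_of_le hs.1.le] at this
    exact (hF.mono hsub).add this
  have hd : ∀ t ∈ Ioo 0 s, HasDerivAt (fun s => F s + ∫ r in (0:ℝ)..s, g r) (F' t + g t) t := by
    intro t ht
    have ht' : t ∈ Ioo (0:ℝ) 1 := ⟨ht.1, ht.2.trans hs.2⟩
    have hgo : ContinuousOn g (Ioo 0 1) := hg.mono Ioo_subset_Ico_self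
    refine (hF' t ht').add (intervalIntegral.integral_hasDerivAt_right ?_
      (hgo.stronglyMeasurableAtFilter isOpen_Ioo t ht')
      (hgo.continuousAt (Ioo_mem_nhds ht'.1 ht'.2)))
    refine ContinuousOn.intervalIntegrable (hg.mono ?_)
    rw [uIcc_of_le ht.1.le]; exact fun r hr => ⟨hr.1, hr.2.trans_lt ht'.2⟩
  have hm := monotoneOn_of_deriv_nonneg (convex_Icc 0 s) hc
    (fun t ht => by
      rw [interior_Icc] at ht; exact (hd t ht).differentiableAt.differentiableWithinAt)
    (fun t ht => by
      rw [interior_Icc] at ht; rw [(hd t ht).deriv]; exact hle t ⟨ht.1, ht.2.trans hs.2⟩)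
  have := hm (left_mem_Icc.2 hs.1.le) (right_mem_Icc.2 hs.1.le) hs.1.le
  simpa [hF0] using this

lemma barrier_outer {Y Y' q : ℝ → ℝ} (hY : ContinuousOn Y (Icc 0 1)) (hY1 : Y 1 = 0)
    (hY' : ∀ t ∈ Ioo (0:ℝ) 1, HasDerivAt Y (Y' t) t) (hq : ContinuousOn q (Ioo 0 1))
    (hqi : IntervalIntegrable q volume 0 1)
    (hle : ∀ t ∈ Ioo (0:ℝ) 1, 0 ≤ Y' t + q t) {t : ℝ} (ht : t ∈ Ioo (0:ℝ) 1) :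
    Y t ≤ ∫ s in t..1, q s := by
  have hc : ContinuousOn (fun s => Y s + ∫ r in (0:ℝ)..s, q r) (Icc 0 1) := by
    have := intervalIntegral.continuousOn_primitive_interval
      (a := (0:ℝ)) (b := 1) (f := q) (μ := volume) (by
      rw [uIcc_of_le zero_le_one]
      exact (intervalIntegrable_iff_integrableOn_Icc_of_le zero_le_one).1 hqi)
    rw [uIcc_of_le zero_le_one] at this
    exact hY.add this
  have hi : ∀ t ∈ Ioo (0:ℝ) 1, IntervalIntegrable q volume 0 t := fun t ht =>
    hqi.mono_set (by rw [uIcc_of_le ht.1.le, uIcc_of_le zero_le_one]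
                     exact Icc_subset_Icc_right ht.2.le)
  have hd : ∀ t ∈ Ioo (0:ℝ) 1, HasDerivAt (fun s => Y s + ∫ r in (0:ℝ)..s, q r) (Y' t + q t) t := by
    intro t ht
    exact (hY' t ht).add (intervalIntegral.integral_hasDerivAt_right (hi t ht)
      (hq.stronglyMeasurableAtFilter isOpen_Ioo t ht)
      (hq.continuousAt (Ioo_mem_nhds ht.1 ht.2)))
  have hm := monotoneOn_of_deriv_nonneg (convex_Icc 0 1) hc
    (fun t ht => by
      rw [interior_Icc] at ht; exact (hd t ht).differentiableAt.differentiableWithinAt)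
    (fun t ht => by
      rw [interior_Icc] at ht; rw [(hd t ht).deriv]; exact hle t ht)
  have h1 := hm ⟨ht.1.le, ht.2.le⟩ (right_mem_Icc.2 zero_le_one) ht.2.le
  have h2 := intervalIntegral.integral_add_adjacent_intervals (hi t ht)
    (hqi.mono_set (by rw [uIcc_of_le ht.2.le, uIcc_of_le zero_le_one]
                      exact Icc_subset_Icc_left ht.1.le))
  simp only [hY1] at h1
  linarith

/-- A function together with the data needed to test it as a barrier. -/
structure Barrier (P : ℝ → ℝ) (h : ℝ → ℝ → ℝ) (Y Y' F F' : ℝ → ℝ) : Prop where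
  hY : ContinuousOn Y (Icc 0 1)
  hY1 : Y 1 = 0
  hY' : ∀ t ∈ Ioo (0:ℝ) 1, HasDerivAt Y (Y' t) t
  hFP : ∀ t ∈ Ioo (0:ℝ) 1, F t = P t * Y' t
  hF : ContinuousOn F (Ico 0 1)
  hF0 : F 0 = 0
  hF' : ∀ t ∈ Ioo (0:ℝ) 1, HasDerivAt F (F' t) t
  hg : ContinuousOn (fun r => h r (Y r)) (Ico 0 1)

theorem iterData_of_barriers {a' Fa Fa' b' Fb Fb' : ℝ → ℝ}
    (hP : ∀ t ∈ Ioo (0:ℝ) 1, 0 < P t)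
    (hPc : ContinuousOn P (Ioo 0 1))
    (hh : ContinuousOn (Function.uncurry h) (Ioo (0:ℝ) 1 ×ˢ Ioi (0:ℝ)))
    (ha0 : ∀ t ∈ Ioo (0:ℝ) 1, 0 < a t)
    (hab : ∀ t ∈ Ioo (0:ℝ) 1, a t ≤ b t)
    (hmono : ∀ t ∈ Ioo (0:ℝ) 1, ∀ x y, a t ≤ x → x ≤ y → y ≤ b t → h t x ≤ h t y)
    (hnn : ∀ t ∈ Ioo (0:ℝ) 1, 0 ≤ h t (a t))
    (Ba : Barrier P h a a' Fa Fa') (Bb : Barrier P h b b' Fb Fb')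
    (hsub : ∀ t ∈ Ioo (0:ℝ) 1, 0 ≤ Fa' t + h t (a t))
    (hsup : ∀ t ∈ Ioo (0:ℝ) 1, Fb' t + h t (b t) ≤ 0)
    (hC : ∀ t ∈ Ioo (0:ℝ) 1, -b' t ≤ C) : IterData P h a b C := by
  have keyb : ∀ s ∈ Ioo (0:ℝ) 1, (∫ r in (0:ℝ)..s, h r (b r)) / P s ≤ -b' s := by
    intro s hs
    have := barrier_inner (F := fun t => -Fb t) (F' := fun t => -Fb' t) (g := fun r => -h r (b r))
      Bb.hF.neg (by simp [Bb.hF0]) (fun t ht => (Bb.hF' t ht).neg) Bb.hg.neg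
      (fun t ht => by have := hsup t ht; linarith) hs
    rw [intervalIntegral.integral_neg, Bb.hFP s hs] at this
    rw [div_le_iff₀ (hP s hs)]
    linarith
  have keya : ∀ s ∈ Ioo (0:ℝ) 1, -a' s ≤ (∫ r in (0:ℝ)..s, h r (a r)) / P s := by
    intro s hs
    have := barrier_inner Ba.hF Ba.hF0 Ba.hF' Ba.hg hsub hs
    rw [Ba.hFP s hs] at this
    rw [le_div_iff₀ (hP s hs)]
    linarith
  have D : IterPre P h a b C :=
    { hP := hP, hPc := hPc, hh := hh, ha0 := ha0
      hac := Ba.hY.mono Ioo_subset_Icc_self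
      hbc := Bb.hY.mono Ioo_subset_Icc_self
      hab := hab, hmono := hmono, hnn := hnn
      hgint := fun s hs => by
        refine ContinuousOn.intervalIntegrable (Bb.hg.mono ?_)
        rw [uIcc_of_le hs.1.le]; exact fun r hr => ⟨hr.1, hr.2.trans_lt hs.2⟩
      hC := fun s hs => (keyb s hs).trans (hC s hs) }
  refine { toIterPre := D, hsub := fun t ht => ?_, hsup := fun t ht => ?_ }
  · exact barrier_outer Ba.hY Ba.hY1 Ba.hY' (D.quot_cont D.good_a) (D.int2 D.good_a)
      (fun t ht => by have := keya t ht; linarith) ht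
  · have := barrier_outer (Y := fun t => -b t) (Y' := fun t => -b' t)
      (q := fun s => -((∫ r in (0:ℝ)..s, h r (b r)) / P s))
      Bb.hY.neg (by simp [Bb.hY1]) (fun t ht => (Bb.hY' t ht).neg)
      (D.quot_cont D.good_b).neg (D.int2 D.good_b).neg
      (fun t ht => by have := keyb t ht; linarith) ht
    rw [intervalIntegral.integral_neg] at this
    unfold iterOp
    linarith

end abstractIteration
section limitAtOne
open Filter Topology

lemma exists_limit_at_one {v v1 v2 g : ℝ → ℝ} {d C C' : ℝ} (hd : 2 ≤ d)
    (hv : ∀ t ∈ Ioo (0:ℝ) 1, HasDerivAt v (v1 t) t)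
    (hv1 : ∀ t ∈ Ioo (0:ℝ) 1, HasDerivAt v1 (v2 t) t)
    (hode : ∀ t ∈ Ioo (0:ℝ) 1, (1 - t^2) * v2 t - (d - 1) * t * v1 t = g t)
    (hg : ∀ t ∈ Ioo (9/10:ℝ) 1, -C ≤ g t) (hC : 0 ≤ C)
    (hb : ∀ t ∈ Ioo (0:ℝ) 1, |v t| ≤ C') :
    ∃ L, Tendsto v (𝓝[<] 1) (𝓝 L) := by
  set Z : ℝ → ℝ := fun t => v t - C * t^2 with hZdef
  set Z1 : ℝ → ℝ := fun t => v1 t - 2 * C * t with hZ1def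
  set U : ℝ → ℝ := fun t => (1 - t^2) ^ ((d-1)/2) * Z1 t with hU
  have hZ : ∀ t ∈ Ioo (0:ℝ) 1, HasDerivAt Z (Z1 t) t := by
    intro t ht
    have := (hv t ht).sub (((hasDerivAt_id t).pow 2).const_mul C)
    refine this.congr_deriv ?_
    simp [hZ1def]; ring
  have hZ1 : ∀ t ∈ Ioo (0:ℝ) 1, HasDerivAt Z1 (v2 t - 2 * C) t := by
    intro t ht
    have := (hv1 t ht).sub ((hasDerivAt_id t).const_mul (2 * C))
    refine this.congr_deriv ?_
    simp
  have hUd : ∀ t ∈ Ioo (0:ℝ) 1, HasDerivAt U ((1 - t^2) ^ ((d-1)/2 - 1) *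
      (g t - 2 * C * (1 - t^2) + 2 * C * (d - 1) * t^2)) t := by
    intro t ht
    have hx : 0 < 1 - t^2 := by nlinarith [ht.1, ht.2]
    have h1 : HasDerivAt (fun t : ℝ => 1 - t^2) (-(2 * t)) t := by
      have := ((hasDerivAt_id t).pow 2).const_sub 1
      refine this.congr_deriv ?_
      simp
    have h2 := (h1.rpow_const (p := (d-1)/2) (Or.inl hx.ne')).mul (hZ1 t ht)
    refine h2.congr_deriv ?_
    have hs : (1 - t^2) ^ ((d-1)/2) = (1 - t^2) ^ ((d-1)/2 - 1) * (1 - t^2) := by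
      rw [← Real.rpow_add_one hx.ne']; congr 1; ring
    rw [hs, ← hode t ht]
    simp only [hZ1def]
    ring
  have hsub : Ioo (9/10:ℝ) 1 ⊆ Ioo 0 1 := Ioo_subset_Ioo_left (by norm_num)
  have hUm : MonotoneOn U (Ioo (9/10:ℝ) 1) := by
    refine monotoneOn_of_deriv_nonneg (convex_Ioo _ _)
      (fun t ht => (hUd t (hsub ht)).continuousAt.continuousWithinAt)
      (fun t ht => ?_) (fun t ht => ?_)
    · rw [interior_Ioo] at ht; exact (hUd t (hsub ht)).differentiableAt.differentiableWithinAt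
    · rw [interior_Ioo] at ht; rw [(hUd t (hsub ht)).deriv]
      have hx : 0 < 1 - t^2 := by nlinarith [ht.1, ht.2]
      refine mul_nonneg (Real.rpow_nonneg hx.le _) ?_
      have h1 := hg t ht
      have h2 : (3/4:ℝ) ≤ t^2 := by nlinarith [ht.1]
      have h3 : 0 ≤ C * ((d - 2) * t^2) := by have : 0 ≤ d - 2 := by linarith
                                              positivity
      nlinarith [mul_nonneg hC (sub_nonneg.2 h2)]
  have hsign : ∀ t ∈ Ioo (0:ℝ) 1, ∃ k > 0, U t = k * Z1 t := fun t ht =>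
    ⟨(1 - t^2) ^ ((d-1)/2), Real.rpow_pos_of_pos (by nlinarith [ht.1, ht.2]) _, rfl⟩
  have hZb : ∀ t ∈ Ioo (0:ℝ) 1, |Z t| ≤ C' + C := by
    intro t ht
    have h1 := hb t ht
    rw [abs_le] at h1 ⊢
    have h2 : C * t^2 ≤ C * 1 := mul_le_mul_of_nonneg_left (by nlinarith [ht.1, ht.2]) hC
    have h3 : 0 ≤ C * t^2 := by positivity
    constructor <;> simp only [hZdef] <;> linarith
  have hfin : ∀ L, Tendsto Z (𝓝[<] 1) (𝓝 L) → ∃ L, Tendsto v (𝓝[<] 1) (𝓝 L) := by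
    intro L hL
    have h1 : Tendsto (fun t : ℝ => C * t^2) (𝓝[<] 1) (𝓝 (C * 1^2)) :=
      (Continuous.tendsto (by fun_prop) 1).mono_left nhdsWithin_le_nhds
    exact ⟨_, (hL.add h1).congr fun t => by simp [hZdef]⟩
  by_cases hcase : ∃ t₂ ∈ Ioo (9/10:ℝ) 1, 0 < Z1 t₂
  · obtain ⟨t₂, ht₂, hpos⟩ := hcase
    have hs2 : Ioo t₂ 1 ⊆ Ioo 0 1 := Ioo_subset_Ioo_left (by linarith [ht₂.1])
    have hm : MonotoneOn Z (Ioo t₂ 1) := by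
      refine monotoneOn_of_deriv_nonneg (convex_Ioo _ _)
        (fun t ht => (hZ t (hs2 ht)).continuousAt.continuousWithinAt)
        (fun t ht => ?_) (fun t ht => ?_)
      · rw [interior_Ioo] at ht; exact (hZ t (hs2 ht)).differentiableAt.differentiableWithinAt
      · rw [interior_Ioo] at ht; rw [(hZ t (hs2 ht)).deriv]
        have h1 := hUm ht₂ ⟨ht₂.1.trans ht.1, ht.2⟩ ht.1.le
        obtain ⟨k, hk, hkU⟩ := hsign t (hs2 ht)
        obtain ⟨k', hk', hkU'⟩ := hsign t₂ (hsub ht₂)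
        rw [hkU, hkU'] at h1
        have : 0 < k * Z1 t := lt_of_lt_of_le (mul_pos hk' hpos) h1
        exact (pos_of_mul_pos_right this hk.le).le
    refine hfin _ (MonotoneOn.tendsto_nhdsWithin_Ioo_left (nonempty_Ioo.2 ht₂.2) hm ⟨C' + C, ?_⟩)
    rintro _ ⟨t, ht, rfl⟩
    exact (abs_le.1 (hZb t (hs2 ht))).2
  · push Not at hcase
    have hm : MonotoneOn (fun t => -Z t) (Ioo (9/10) 1) := by
      refine monotoneOn_of_deriv_nonneg (convex_Ioo _ _)
        (fun t ht => (hZ t (hsub ht)).neg.continuousAt.continuousWithinAt)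
        (fun t ht => ?_) (fun t ht => ?_)
      · rw [interior_Ioo] at ht; exact (hZ t (hsub ht)).neg.differentiableAt.differentiableWithinAt
      · rw [interior_Ioo] at ht
        have := (hZ t (hsub ht)).neg.deriv
        rw [show (fun t => -Z t) = -Z from rfl, this]
        linarith [hcase t ht]
    have := (MonotoneOn.tendsto_nhdsWithin_Ioo_left (nonempty_Ioo.2 (by norm_num)) hm ⟨C' + C, by
      rintro _ ⟨t, ht, rfl⟩
      have := (abs_le.1 (hZb t (hsub ht))).1
      show -Z t ≤ _
      linarith⟩).neg
    simp only [neg_neg] at this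
    exact hfin _ this

end limitAtOne

section concrete

lemma rpow_diff_le {p M x y : ℝ} (hp : 1 < p) (hx : 0 < x) (hxy : x ≤ y) (hy : y ≤ M) :
    y ^ (p-1) * y - x ^ (p-1) * x ≤ p * M ^ (p-1) * (y - x) := by
  have hy0 : 0 < y := hx.trans_le hxy
  rw [← Real.rpow_add_one hy0.ne', ← Real.rpow_add_one hx.ne']
  simp only [sub_add_cancel]
  have := Convex.image_sub_le_mul_sub_of_deriv_le (D := Icc x y) (f := fun z : ℝ => z ^ p)
    (C := p * M ^ (p-1)) (convex_Icc x y)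
    (fun z hz => (Real.continuousAt_rpow_const z p (Or.inl (hx.trans_le hz.1).ne')).continuousWithinAt)
    (fun z hz => by
      rw [interior_Icc] at hz
      exact (Real.hasDerivAt_rpow_const (Or.inl (hx.trans hz.1).ne')).differentiableAt.differentiableWithinAt)
    (fun z hz => by
      rw [interior_Icc] at hz
      rw [(Real.hasDerivAt_rpow_const (Or.inl (hx.trans hz.1).ne')).deriv]
      exact mul_le_mul_of_nonneg_left (Real.rpow_le_rpow (hx.trans hz.1).le (hz.2.le.trans hy)
        (by linarith)) (by linarith))
    x (left_mem_Icc.2 hxy) y (right_mem_Icc.2 hxy) hxy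
  exact this

noncomputable def fP (α N : ℝ) (t : ℝ) : ℝ := t ^ (2*α) * (1 - t^2) ^ (-N)

noncomputable def fK (α d : ℝ) (m : ℕ) (t : ℝ) : ℝ :=
  2 * m * (1 + 2*α) + (4 * m * (m+1) - 2 * m * (d-1)) * (t^2 / (1 - t^2))

noncomputable def fh (α d κ p N : ℝ) (m : ℕ) (t y : ℝ) : ℝ :=
  t ^ (2*α) * (1 - t^2) ^ (-N-1) *
    ((fK α d m t + κ) * y - t ^ (α*(p-1)) * (((1 - t^2)^m)⁻¹ * y) ^ (p-1) * y)

noncomputable def fY (m : ℕ) (c β : ℝ) (t : ℝ) : ℝ := c * Real.exp (-(β * t^2)) * (1 - t^2)^m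

/-- `Lθ/θ` for `θ = exp (-β t²)`. -/
noncomputable def fR (α d β : ℝ) (t : ℝ) : ℝ :=
  (1 - t^2) * (4 * β^2 * t^2 - 2 * β) - 4 * α * β * (1 - t^2) + 2 * β * (d-1) * t^2

noncomputable def fY' (k : ℕ) (c β : ℝ) (t : ℝ) : ℝ :=
  c * Real.exp (-(β * t^2)) * (1 - t^2)^k * (-2 * t * ((k:ℝ) + 1 + β * (1 - t^2)))

noncomputable def fF (α N : ℝ) (k : ℕ) (c β : ℝ) (t : ℝ) : ℝ :=
  Real.exp (-(β * t^2)) * t ^ (2*α+1) * (1 - t^2) ^ ((k:ℝ) - N) *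
    (-2 * c * ((k:ℝ) + 1 + β * (1 - t^2)))

noncomputable def fF' (α d N : ℝ) (k : ℕ) (c β : ℝ) (t : ℝ) : ℝ :=
  t ^ (2*α) * (1 - t^2) ^ (-N-1) * fY (k+1) c β t * (fR α d β t - fK α d (k+1) t)

lemma one_sub_sq_pos {t : ℝ} (ht : t ∈ Ioo (0:ℝ) 1) : 0 < 1 - t^2 := by
  nlinarith [ht.1, ht.2]

lemma hasDerivAt_one_sub_sq (t : ℝ) : HasDerivAt (fun t : ℝ => 1 - t^2) (-(2 * t)) t := by
  have := ((hasDerivAt_id t).pow 2).const_sub 1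
  refine this.congr_deriv ?_
  simp

lemma hasDerivAt_expsq (β t : ℝ) : HasDerivAt (fun t : ℝ => Real.exp (-(β * t^2)))
    (Real.exp (-(β * t^2)) * (-(2 * β * t))) t := by
  have := (((hasDerivAt_id t).pow 2).const_mul β).neg.exp
  refine this.congr_deriv ?_
  simp; ring

lemma barrier_fY {α d κ p N c β : ℝ} {k : ℕ} (hα : 0 < α) (hp : 1 < p)
    (hN : N = 2 * ((k:ℝ)+1) - (d-1)/2) :
    Barrier (fP α N) (fh α d κ p N (k+1)) (fY (k+1) c β) (fY' k c β) (fF α N k c β)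
      (fF' α d N k c β) where
  hY := by unfold fY; fun_prop
  hY1 := by simp [fY]
  hY' := by
    intro t ht
    have h1 := (((hasDerivAt_expsq β t).const_mul c)).mul ((hasDerivAt_one_sub_sq t).pow (k+1))
    refine h1.congr_deriv ?_
    simp only [fY', add_tsub_cancel_right]
    push_cast
    simp only [Pi.pow_apply]
    ring
  hFP := by
    intro t ht
    have hx := one_sub_sq_pos ht
    unfold fF fP fY'
    rw [Real.rpow_add_one ht.1.ne', show (k:ℝ) - N = k + -N by ring, Real.rpow_add hx,
      Real.rpow_natCast]
    ring
  hF := by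
    intro t ht
    have hx : 0 < 1 - t^2 := by nlinarith [ht.1, ht.2]
    refine ContinuousAt.continuousWithinAt ?_
    unfold fF
    have h1 : ContinuousAt (fun t : ℝ => t ^ (2*α+1)) t :=
      Real.continuousAt_rpow_const t _ (Or.inr (by linarith))
    have h2 : ContinuousAt (fun t : ℝ => (1 - t^2) ^ ((k:ℝ) - N)) t :=
      ContinuousAt.rpow_const (by fun_prop) (Or.inl hx.ne')
    fun_prop
  hF0 := by
    unfold fF
    rw [Real.zero_rpow (by linarith)]; simp
  hF' := by
    intro t ht
    have hx := one_sub_sq_pos ht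
    have h1 : HasDerivAt (fun t : ℝ => t ^ (2*α+1)) ((2*α+1) * t ^ (2*α)) t := by
      have := Real.hasDerivAt_rpow_const (x := t) (p := 2*α+1) (Or.inl ht.1.ne')
      simpa using this
    have h2 := (hasDerivAt_one_sub_sq t).rpow_const (p := (k:ℝ) - N) (Or.inl hx.ne')
    have h3 : HasDerivAt (fun t : ℝ => -2 * c * ((k:ℝ) + 1 + β * (1 - t^2)))
        (-2 * c * (β * (-(2*t)))) t :=
      (((hasDerivAt_one_sub_sq t).const_mul β).const_add ((k:ℝ)+1)).const_mul (-2*c)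
    have h4 := (((hasDerivAt_expsq β t).mul h1).mul h2).mul h3
    refine h4.congr_deriv ?_
    have e1 : (1 - t^2) ^ ((k:ℝ) - N) = (1 - t^2) ^ (-N-1) * (1 - t^2)^k * (1 - t^2) := by
      rw [← Real.rpow_natCast (1 - t^2) k, ← Real.rpow_add hx, ← Real.rpow_add_one hx.ne']; congr 1; ring
    have e2 : (1 - t^2) ^ ((k:ℝ) - N - 1) = (1 - t^2) ^ (-N-1) * (1 - t^2)^k := by
      rw [← Real.rpow_natCast (1 - t^2) k, ← Real.rpow_add hx]; congr 1; ring
    simp only [fF', fY, fR, fK, Pi.mul_apply]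
    rw [e1, e2, Real.rpow_add_one ht.1.ne', hN]
    push_cast
    generalize (1 - t^2) ^ (-(2 * ((k:ℝ)+1) - (d-1)/2) - 1) = Q
    generalize t ^ (2*α) = T
    generalize Real.exp (-(β * t^2)) = E
    rw [pow_succ]
    generalize hX : (1 - t^2)^k = X
    field_simp
    ring
  hg := by
    intro t ht
    have hx : 0 < 1 - t^2 := by nlinarith [ht.1, ht.2]
    refine ContinuousAt.continuousWithinAt ?_
    unfold fh fK fY
    have h1 : ContinuousAt (fun t : ℝ => t ^ (2*α)) t :=
      Real.continuousAt_rpow_const t _ (Or.inr (by linarith))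
    have h1' : ContinuousAt (fun t : ℝ => t ^ (α*(p-1))) t :=
      Real.continuousAt_rpow_const t _ (Or.inr (mul_pos hα (by linarith)).le)
    have h2 : ContinuousAt (fun t : ℝ => (1 - t^2) ^ (-N-1)) t :=
      ContinuousAt.rpow_const (by fun_prop) (Or.inl hx.ne')
    have h3 : ContinuousAt (fun t : ℝ => t^2 / (1 - t^2)) t :=
      ContinuousAt.div (by fun_prop) (by fun_prop) hx.ne'
    have h4 : ContinuousAt (fun t : ℝ => ((1 - t^2)^(k+1))⁻¹) t :=
      ContinuousAt.inv₀ (by fun_prop) (by positivity)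
    have h5 : ContinuousAt (fun t : ℝ => (((1 - t^2)^(k+1))⁻¹ *
        (c * Real.exp (-(β * t^2)) * (1 - t^2)^(k+1))) ^ (p-1)) t :=
      ContinuousAt.rpow_const (by fun_prop) (Or.inr (by linarith))
    fun_prop


lemma inv_mul_fY {m : ℕ} {c β t : ℝ} (hx : 0 < 1 - t^2) :
    ((1 - t^2)^m)⁻¹ * fY m c β t = c * Real.exp (-(β * t^2)) := by
  unfold fY; field_simp

lemma fh_fY {α d κ p N c β t : ℝ} {m : ℕ} (hx : 0 < 1 - t^2) :
    fh α d κ p N m t (fY m c β t) = t ^ (2*α) * (1 - t^2) ^ (-N-1) * fY m c β t *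
      (fK α d m t + κ - t ^ (α*(p-1)) * (c * Real.exp (-(β * t^2))) ^ (p-1)) := by
  unfold fh
  rw [inv_mul_fY hx]; ring

lemma fK_ge {α d t : ℝ} {m : ℕ} (hm : d - 1 ≤ 2 * ((m:ℝ)+1)) (hx : 0 < 1 - t^2) :
    2 * m * (1 + 2*α) ≤ fK α d m t := by
  unfold fK
  have h1 : 0 ≤ (4 * (m:ℝ) * (m+1) - 2 * m * (d-1)) := by
    have : 0 ≤ (m:ℝ) * (2 * ((m:ℝ)+1) - (d-1)) :=
      mul_nonneg (Nat.cast_nonneg m) (by linarith)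
    nlinarith
  have h2 : 0 ≤ t^2 / (1 - t^2) := by positivity
  nlinarith [mul_nonneg h1 h2]

lemma fh_mono {α d κ p N M t x y : ℝ} {m : ℕ} (hα : 0 < α) (hκ : 0 < κ) (hp : 1 < p)
    (ht : t ∈ Ioo (0:ℝ) 1) (hK : p * M ^ (p-1) ≤ fK α d m t) (hx : 0 < x) (hxy : x ≤ y)
    (hy : ((1 - t^2)^m)⁻¹ * y ≤ M) :
    fh α d κ p N m t x ≤ fh α d κ p N m t y := by
  have hX := one_sub_sq_pos ht
  have hφ : 0 < ((1 - t^2)^m)⁻¹ := by positivity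
  unfold fh
  set φ := ((1 - t^2)^m)⁻¹ with hφdef
  have hM : 0 < M := lt_of_lt_of_le (mul_pos hφ (hx.trans_le hxy)) hy
  have h1 := rpow_diff_le hp (mul_pos hφ hx) (mul_le_mul_of_nonneg_left hxy hφ.le) hy
  have h2 : (φ * y) ^ (p-1) * y - (φ * x) ^ (p-1) * x ≤ p * M ^ (p-1) * (y - x) := by
    refine le_of_mul_le_mul_left ?_ hφ
    linarith [h1]
  have h0 : 0 ≤ (p * M ^ (p-1)) * (y - x) :=
    mul_nonneg (by positivity) (by linarith)
  have hτ0 : 0 ≤ t ^ (α*(p-1)) := Real.rpow_nonneg ht.1.le _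
  have hτ1 : t ^ (α*(p-1)) ≤ 1 :=
    Real.rpow_le_one ht.1.le ht.2.le (mul_pos hα (by linarith)).le
  refine mul_le_mul_of_nonneg_left ?_ (mul_nonneg (Real.rpow_nonneg ht.1.le _)
    (Real.rpow_nonneg hX.le _))
  have h3 : t ^ (α*(p-1)) * ((φ * y) ^ (p-1) * y - (φ * x) ^ (p-1) * x) ≤
      p * M ^ (p-1) * (y - x) := by
    calc _ ≤ t ^ (α*(p-1)) * (p * M ^ (p-1) * (y - x)) := mul_le_mul_of_nonneg_left h2 hτ0
      _ ≤ 1 * (p * M ^ (p-1) * (y - x)) := mul_le_mul_of_nonneg_right hτ1 h0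
      _ = _ := one_mul _
  have h4 : p * M ^ (p-1) * (y - x) ≤ fK α d m t * (y - x) :=
    mul_le_mul_of_nonneg_right hK (by linarith)
  have h5 : 0 ≤ κ * (y - x) := mul_nonneg hκ.le (by linarith)
  linarith

/-- The choice of the constant in the supersolution. -/
lemma exists_super {α d κ p : ℝ} (hα : 0 < α) (hd : 2 ≤ d) (hκ : 0 < κ) (hp : 1 < p) :
    ∃ M > 0, ∀ t ∈ Ioo (0:ℝ) 1,
      fR α d κ t + κ ≤ t ^ (α*(p-1)) * (M * Real.exp (-(κ * t^2))) ^ (p-1) := by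
  set C := 4 * κ^2 + 2 * κ * (1 + 2*α) + 2 * κ * (d-1) with hC
  have hd1 : 0 < d - 1 := by linarith
  have hp1 : 0 < p - 1 := by linarith
  have hC0 : 0 < C := by positivity
  set t₀ := Real.sqrt (κ / C) with ht₀
  have ht₀0 : 0 < t₀ := Real.sqrt_pos.2 (by positivity)
  have ht₀2 : t₀^2 = κ / C := Real.sq_sqrt (by positivity)
  set E := (t₀ ^ (α*(p-1)) * Real.exp (-κ) ^ (p-1)) with hE
  have hE0 : 0 < E := by positivity
  refine ⟨(C / E) ^ (p-1)⁻¹, by positivity, fun t ht => ?_⟩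
  have hX := one_sub_sq_pos ht
  have hle : fR α d κ t + κ ≤ -κ + C * t^2 := by
    unfold fR
    have e1 : 0 ≤ κ^2 * t^2 * t^2 := by positivity
    have e2 : 0 ≤ κ * α := by positivity
    rw [hC]
    nlinarith
  have ht0 := ht.1
  by_cases hc : t ≤ t₀
  · have h1 : t^2 ≤ κ / C := by rw [← ht₀2]; exact pow_le_pow_left₀ ht.1.le hc 2
    have h2 : C * t^2 ≤ κ := by rw [le_div_iff₀ hC0] at h1; linarith
    have h3 : 0 ≤ t ^ (α*(p-1)) * ((C / E) ^ (p-1)⁻¹ * Real.exp (-(κ * t^2))) ^ (p-1) := by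
      positivity
    linarith
  · push Not at hc
    have h1 : C * t^2 ≤ C := by nlinarith
    rw [Real.mul_rpow (by positivity) (by positivity), ← Real.rpow_mul (by positivity),
      inv_mul_cancel₀ hp1.ne', Real.rpow_one]
    have h2 : E ≤ t ^ (α*(p-1)) * Real.exp (-(κ * t^2)) ^ (p-1) := by
      rw [hE]
      refine mul_le_mul (Real.rpow_le_rpow ht₀0.le hc.le (by positivity))
        (Real.rpow_le_rpow (Real.exp_pos _).le (Real.exp_le_exp.2 ?_) hp1.le) (by positivity)
        (by positivity)
      nlinarith
    have h3 : C ≤ C / E * (t ^ (α*(p-1)) * Real.exp (-(κ * t^2)) ^ (p-1)) := by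
      calc C = C / E * E := by field_simp
        _ ≤ _ := mul_le_mul_of_nonneg_left h2 (by positivity)
    linarith

lemma fP_cont {α N : ℝ} : ContinuousOn (fP α N) (Ioo 0 1) := by
  intro t ht
  have hx := one_sub_sq_pos ht
  refine ContinuousAt.continuousWithinAt ?_
  unfold fP
  exact (Real.continuousAt_rpow_const t _ (Or.inl ht.1.ne')).mul
    (ContinuousAt.rpow_const (by fun_prop) (Or.inl hx.ne'))

lemma fP_pos {α N t : ℝ} (ht : t ∈ Ioo (0:ℝ) 1) : 0 < fP α N t :=
  mul_pos (Real.rpow_pos_of_pos ht.1 _) (Real.rpow_pos_of_pos (one_sub_sq_pos ht) _)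

lemma fh_cont {α d κ p N : ℝ} {m : ℕ} :
    ContinuousOn (Function.uncurry (fh α d κ p N m)) (Ioo (0:ℝ) 1 ×ˢ Ioi (0:ℝ)) := by
  rintro ⟨t, y⟩ ⟨ht, hy⟩
  simp only at ht hy
  have hy' : 0 < y := hy
  have hx := one_sub_sq_pos ht
  refine ContinuousAt.continuousWithinAt ?_
  unfold Function.uncurry fh fK
  have h1 : ContinuousAt (fun q : ℝ × ℝ => q.1 ^ (2*α)) (t, y) :=
    ContinuousAt.rpow_const (by fun_prop) (Or.inl ht.1.ne')
  have h1' : ContinuousAt (fun q : ℝ × ℝ => q.1 ^ (α*(p-1))) (t, y) :=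
    ContinuousAt.rpow_const (by fun_prop) (Or.inl ht.1.ne')
  have h2 : ContinuousAt (fun q : ℝ × ℝ => (1 - q.1^2) ^ (-N-1)) (t, y) :=
    ContinuousAt.rpow_const (by fun_prop) (Or.inl hx.ne')
  have h3 : ContinuousAt (fun q : ℝ × ℝ => q.1^2 / (1 - q.1^2)) (t, y) :=
    ContinuousAt.div (by fun_prop) (by fun_prop) hx.ne'
  have h4 : ContinuousAt (fun q : ℝ × ℝ => ((1 - q.1^2)^m)⁻¹) (t, y) :=
    ContinuousAt.inv₀ (by fun_prop) (by positivity)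
  have h5 : ContinuousAt (fun q : ℝ × ℝ => (((1 - q.1^2)^m)⁻¹ * q.2) ^ (p-1)) (t, y) :=
    ContinuousAt.rpow_const (by fun_prop) (Or.inl (by positivity))
  fun_prop

/-- The transformed problem. -/
theorem exists_y {α d κ p : ℝ} (hα : 0 < α) (hd : 2 ≤ d) (hκ : 0 < κ) (hp : 1 < p) :
    ∃ (ε M : ℝ) (m : ℕ) (y z : ℝ → ℝ), 0 < ε ∧ 0 < M ∧
      (∀ t ∈ Ioo (0:ℝ) 1, ε * (1 - t^2)^m ≤ y t ∧ y t ≤ M * (1 - t^2)^m) ∧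
      (∀ t ∈ Ioo (0:ℝ) 1, HasDerivAt y (-(z t / fP α (2 * m - (d-1)/2) t)) t) ∧
      (∀ t ∈ Ioo (0:ℝ) 1, HasDerivAt z (fh α d κ p (2 * m - (d-1)/2) m t (y t)) t) := by
  obtain ⟨M, hM, hsup⟩ := exists_super hα hd hκ hp
  have hp1 : 0 < p - 1 := by linarith
  set ε := min (κ ^ (p-1)⁻¹) (M * Real.exp (-κ)) with hε
  have hε0 : 0 < ε := lt_min (by positivity) (by positivity)
  have hεp : ε ^ (p-1) ≤ κ := by
    calc ε ^ (p-1) ≤ (κ ^ (p-1)⁻¹) ^ (p-1) :=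
          Real.rpow_le_rpow hε0.le (min_le_left _ _) hp1.le
      _ = κ := by rw [← Real.rpow_mul hκ.le, inv_mul_cancel₀ hp1.ne', Real.rpow_one]
  obtain ⟨k, hk⟩ := exists_nat_ge (max (p * M ^ (p-1)) d)
  have hk1 := (le_max_left _ _).trans hk
  have hk2 := (le_max_right _ _).trans hk
  set N : ℝ := 2 * ((k:ℝ)+1) - (d-1)/2 with hN
  have hK : ∀ t ∈ Ioo (0:ℝ) 1, p * M ^ (p-1) ≤ fK α d (k+1) t := by
    intro t ht
    refine le_trans ?_ (fK_ge (α := α) (d := d) (m := k+1) (by push_cast; linarith)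
      (one_sub_sq_pos ht))
    push_cast
    have : 0 ≤ ((k:ℝ)+1) * α := by positivity
    nlinarith
  have hexp : ∀ t ∈ Ioo (0:ℝ) 1, Real.exp (-(κ * t^2)) ≤ 1 := fun t ht =>
    Real.exp_le_one_iff.2 (by have := sq_nonneg t; nlinarith)
  have hexp' : ∀ t ∈ Ioo (0:ℝ) 1, Real.exp (-κ) ≤ Real.exp (-(κ * t^2)) := fun t ht =>
    Real.exp_le_exp.2 (by have := one_sub_sq_pos ht; nlinarith)
  have D : IterData (fP α N) (fh α d κ p N (k+1)) (fY (k+1) ε 0) (fY (k+1) M κ)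
      (2 * M * (k + 1 + κ)) := by
    refine iterData_of_barriers (fun t ht => fP_pos ht) fP_cont fh_cont ?_ ?_ ?_ ?_
      (barrier_fY hα hp hN) (barrier_fY hα hp hN) ?_ ?_ ?_
    · intro t ht
      have := one_sub_sq_pos ht
      unfold fY; positivity
    · intro t ht
      have := one_sub_sq_pos ht
      unfold fY
      refine mul_le_mul_of_nonneg_right ?_ (by positivity)
      simp only [zero_mul, neg_zero, Real.exp_zero, mul_one]
      exact (min_le_right _ _).trans (mul_le_mul_of_nonneg_left (hexp' t ht) hM.le)
    · intro t ht x y hax hxy hyb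
      have hX := one_sub_sq_pos ht
      refine fh_mono hα hκ hp ht (hK t ht) (lt_of_lt_of_le ?_ hax) hxy ?_
      · unfold fY; positivity
      · calc ((1 - t^2)^(k+1))⁻¹ * y ≤ ((1 - t^2)^(k+1))⁻¹ * fY (k+1) M κ t :=
              mul_le_mul_of_nonneg_left hyb (by positivity)
          _ = M * Real.exp (-(κ * t^2)) := inv_mul_fY hX
          _ ≤ M * 1 := mul_le_mul_of_nonneg_left (hexp t ht) hM.le
          _ = M := mul_one M
    · intro t ht
      have hX := one_sub_sq_pos ht
      have ht0 := ht.1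
      rw [fh_fY hX]
      have hτ1 : t ^ (α*(p-1)) ≤ 1 := Real.rpow_le_one ht.1.le ht.2.le (by positivity)
      have hK0 : 0 ≤ fK α d (k+1) t := le_trans (by positivity) (hK t ht)
      refine mul_nonneg (by unfold fY; positivity) ?_
      simp only [zero_mul, neg_zero, Real.exp_zero, mul_one]
      have : t ^ (α*(p-1)) * ε ^ (p-1) ≤ 1 * κ :=
        mul_le_mul hτ1 hεp (by positivity) zero_le_one
      linarith
    · intro t ht
      have hX := one_sub_sq_pos ht
      have ht0 := ht.1
      rw [fh_fY hX, fF', ← mul_add]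
      have hτ1 : t ^ (α*(p-1)) ≤ 1 := Real.rpow_le_one ht.1.le ht.2.le (by positivity)
      refine mul_nonneg (by unfold fY; positivity) ?_
      simp only [zero_mul, neg_zero, Real.exp_zero, mul_one]
      have : t ^ (α*(p-1)) * ε ^ (p-1) ≤ 1 * κ :=
        mul_le_mul hτ1 hεp (by positivity) zero_le_one
      have hR : fR α d 0 t = 0 := by simp [fR]
      rw [hR]
      linarith
    · intro t ht
      have hX := one_sub_sq_pos ht
      have ht0 := ht.1
      rw [fh_fY hX, fF', ← mul_add]
      refine mul_nonpos_of_nonneg_of_nonpos (by unfold fY; positivity) ?_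
      have := hsup t ht
      linarith
    · intro t ht
      have hX := one_sub_sq_pos ht
      have ht0 := ht.1
      have hX1 : 1 - t^2 ≤ 1 := by nlinarith
      unfold fY'
      have e1 : Real.exp (-(κ * t^2)) * (1 - t^2)^k ≤ 1 * 1 :=
        mul_le_mul (hexp t ht) (pow_le_one₀ hX.le hX1) (by positivity) zero_le_one
      have e2 : t * ((k:ℝ) + 1 + κ * (1 - t^2)) ≤ 1 * ((k:ℝ) + 1 + κ) := by
        refine mul_le_mul ht.2.le ?_ (by positivity) zero_le_one
        nlinarith
      have e3 := mul_le_mul e1 e2 (by positivity) (by norm_num)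
      have e4 := mul_le_mul_of_nonneg_left e3 (by positivity : 0 ≤ 2 * M)
      nlinarith
  obtain ⟨y, z, hbd, hy, hz⟩ := D.exists_sol
  have hN' : 2 * ((k+1 : ℕ) : ℝ) - (d-1)/2 = N := by rw [hN]; push_cast; ring
  refine ⟨ε, M, k+1, y, z, hε0, hM, fun t ht => ?_, ?_, ?_⟩
  · have hX := one_sub_sq_pos ht
    obtain ⟨h1, h2⟩ := hbd t ht
    unfold fY at h1 h2
    simp only [zero_mul, neg_zero, Real.exp_zero, mul_one] at h1
    refine ⟨h1, h2.trans (mul_le_mul_of_nonneg_right ?_ (by positivity))⟩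
    nlinarith [hexp t ht]
  · rw [hN']; exact hy
  · rw [hN']; exact hz

noncomputable def fpsi (α : ℝ) (m : ℕ) (t : ℝ) : ℝ := t ^ α * ((1 - t^2)^m)⁻¹

noncomputable def fl (α : ℝ) (m : ℕ) (t : ℝ) : ℝ := α / t + 2 * m * t / (1 - t^2)

lemma hasDerivAt_rpow_log {α t : ℝ} (ht : t ∈ Ioo (0:ℝ) 1) :
    HasDerivAt (fun t : ℝ => t ^ α) (t ^ α * (α / t)) t := by
  have := Real.hasDerivAt_rpow_const (x := t) (p := α) (Or.inl ht.1.ne')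
  refine this.congr_deriv ?_
  rw [Real.rpow_sub_one ht.1.ne']; ring

lemma hasDerivAt_fpsi {α t : ℝ} {m : ℕ} (ht : t ∈ Ioo (0:ℝ) 1) :
    HasDerivAt (fpsi α m) (fpsi α m t * fl α m t) t := by
  have hx := one_sub_sq_pos ht
  have ht0 := ht.1
  have h1 := ((hasDerivAt_one_sub_sq t).pow m).inv (by simp only [Pi.pow_apply]; positivity)
  have h2 := (hasDerivAt_rpow_log (α := α) ht).mul h1
  refine h2.congr_deriv ?_
  simp only [fpsi, fl, Pi.pow_apply, Pi.inv_apply]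
  rcases m with _ | m
  · simp
  · simp only [add_tsub_cancel_right]
    rw [pow_succ]
    field_simp

lemma hasDerivAt_fl {α t : ℝ} {m : ℕ} (ht : t ∈ Ioo (0:ℝ) 1) :
    HasDerivAt (fl α m) (-(α / t^2) + 2 * m * (1 + t^2) / (1 - t^2)^2) t := by
  have hx := one_sub_sq_pos ht
  have ht0 := ht.1
  have h1 := ((hasDerivAt_const t α).div (hasDerivAt_id t) ht.1.ne').add
    ((((hasDerivAt_id t).const_mul (2 * (m:ℝ)))).div (hasDerivAt_one_sub_sq t) hx.ne')
  refine h1.congr_deriv ?_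
  simp only [id]
  field_simp
  ring

lemma hasDerivAt_fP {α N t : ℝ} (ht : t ∈ Ioo (0:ℝ) 1) :
    HasDerivAt (fP α N) (fP α N t * (2 * α / t + 2 * N * t / (1 - t^2))) t := by
  have hx := one_sub_sq_pos ht
  have h1 := (hasDerivAt_rpow_log (α := 2*α) ht).mul
    ((hasDerivAt_one_sub_sq t).rpow_const (p := -N) (Or.inl hx.ne'))
  refine h1.congr_deriv ?_
  simp only [fP]
  rw [Real.rpow_sub_one hx.ne']
  have := ht.1
  field_simp

theorem exists_v0 {α d κ p μ Λ : ℝ} (hα : 0 < α) (hd : 2 ≤ d) (hκ : 0 < κ) (hp : 1 < p)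
    (hμ : μ = α - α^2) (hΛ : Λ = κ + α * (α + d - 2)) :
    ∃ (ε M : ℝ) (v v1 v2 : ℝ → ℝ), 0 < ε ∧ 0 < M ∧
      (∀ t ∈ Ioo (0:ℝ) 1, ε * t ^ α ≤ v t ∧ v t ≤ M * t ^ α) ∧
      (∀ t ∈ Ioo (0:ℝ) 1, HasDerivAt v (v1 t) t) ∧
      (∀ t ∈ Ioo (0:ℝ) 1, HasDerivAt v1 (v2 t) t) ∧
      (∀ t ∈ Ioo (0:ℝ) 1, (1 - t^2) * v2 t - (d - 1) * t * v1 t + μ / t^2 * v t + Λ * v t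
        = v t ^ p) := by
  obtain ⟨ε, M, m, y, z, hε, hM, hbd, hy, hz⟩ := exists_y hα hd hκ hp
  set N : ℝ := 2 * m - (d-1)/2 with hN
  set w : ℝ → ℝ := fun t => -(z t / fP α N t) with hw
  set w' : ℝ → ℝ := fun t => -(fh α d κ p N m t (y t) / fP α N t)
    - w t * (2 * α / t + 2 * N * t / (1 - t^2)) with hw'
  have hwd : ∀ t ∈ Ioo (0:ℝ) 1, HasDerivAt w (w' t) t := by
    intro t ht
    have hP : 0 < fP α N t := fP_pos ht
    have := ((hz t ht).div (hasDerivAt_fP (α := α) (N := N) ht) hP.ne').neg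
    refine this.congr_deriv ?_
    simp only [hw', hw]
    field_simp
    ring
  refine ⟨ε, M, fun t => fpsi α m t * y t, fun t => fpsi α m t * (w t + fl α m t * y t),
    fun t => fpsi α m t * fl α m t * (w t + fl α m t * y t) + fpsi α m t *
      (w' t + ((-(α / t^2) + 2 * m * (1 + t^2) / (1 - t^2)^2) * y t + fl α m t * w t)),
    hε, hM, ?_, ?_, ?_, ?_⟩
  · intro t ht
    have hX := one_sub_sq_pos ht
    have ht0 := ht.1
    obtain ⟨h1, h2⟩ := hbd t ht
    have hψ : 0 ≤ fpsi α m t := by unfold fpsi; positivity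
    have e : ∀ c, fpsi α m t * (c * (1 - t^2)^m) = c * t ^ α := by
      intro c; unfold fpsi; field_simp
    refine ⟨?_, ?_⟩
    · rw [← e ε]; exact mul_le_mul_of_nonneg_left h1 hψ
    · rw [← e M]; exact mul_le_mul_of_nonneg_left h2 hψ
  · intro t ht
    refine ((hasDerivAt_fpsi ht).mul (hy t ht)).congr_deriv ?_
    simp only [hw]; ring
  · intro t ht
    exact (hasDerivAt_fpsi ht).mul ((hwd t ht).add ((hasDerivAt_fl ht).mul (hy t ht)))
  · intro t ht
    have hX := one_sub_sq_pos ht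
    have ht0 := ht.1
    have hy0 : 0 < y t := lt_of_lt_of_le (by positivity) (hbd t ht).1
    have hψ : 0 < fpsi α m t := by unfold fpsi; positivity
    simp only
    have hpow : (fpsi α m t * y t) ^ p =
        t ^ (α*(p-1)) * (((1 - t^2)^m)⁻¹ * y t) ^ (p-1) * (fpsi α m t * y t) := by
      have e1 : (fpsi α m t * y t) ^ p = (fpsi α m t * y t) ^ (p-1) * (fpsi α m t * y t) := by
        rw [← Real.rpow_add_one (by positivity)]; congr 1; ring
      rw [e1, Real.rpow_mul ht.1.le, ← Real.mul_rpow (by positivity) (by positivity)]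
      congr 2
      unfold fpsi; ring
    have hhP : fh α d κ p N m t (y t) / fP α N t = ((fK α d m t + κ) * y t -
        t ^ (α*(p-1)) * (((1 - t^2)^m)⁻¹ * y t) ^ (p-1) * y t) / (1 - t^2) := by
      unfold fh fP
      rw [Real.rpow_sub_one hX.ne']
      have a1 : 0 < t ^ (2*α) := by positivity
      have a2 : 0 < (1 - t^2) ^ (-N) := by positivity
      field_simp
    rw [hpow]
    simp only [hw']
    rw [hhP]
    generalize t ^ (α*(p-1)) * (((1 - t^2)^m)⁻¹ * y t) ^ (p-1) = S
    generalize w t = W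
    generalize y t = Y
    generalize fpsi α m t = ψ at hψ
    unfold fK fl
    rw [hN, hμ, hΛ]
    field_simp
    ring

end concrete

section final
open Filter Topology

theorem exists_v {α d κ p μ Λ : ℝ} (hα : 0 < α) (hd : 2 ≤ d) (hκ : 0 < κ) (hp : 1 < p)
    (hμ : μ = α - α^2) (hΛ : Λ = κ + α * (α + d - 2)) :
    ∃ c₁ c₂ : ℝ, 0 < c₁ ∧ c₁ < c₂ ∧ ∃ v : ℝ → ℝ,
      (∀ t ∈ Set.Ioc (0 : ℝ) 1, 0 < v t) ∧
      ContDiffOn ℝ 2 v (Set.Ioo 0 1) ∧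
      ContinuousOn v (Set.Icc 0 1) ∧
      (∀ t ∈ Set.Ioo (0 : ℝ) 1,
        (1 - t ^ 2) * deriv (deriv v) t - (d - 1) * t * deriv v t
          + (μ / t ^ 2) * v t + Λ * v t = v t ^ p) ∧
      (∀ t ∈ Set.Ioc (0 : ℝ) 1, c₁ * t ^ α < v t ∧ v t < c₂ * t ^ α) := by
  obtain ⟨ε, M, u, v1, v2, hε, hM, hbd, hu, hv1, hode⟩ := exists_v0 hα hd hκ hp hμ hΛ
  have hupos : ∀ t ∈ Ioo (0:ℝ) 1, 0 < u t := fun t ht =>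
    lt_of_lt_of_le (mul_pos hε (Real.rpow_pos_of_pos ht.1 _)) (hbd t ht).1
  have huM : ∀ t ∈ Ioo (0:ℝ) 1, u t ≤ M := fun t ht =>
    (hbd t ht).2.trans (by
      have := Real.rpow_le_one ht.1.le ht.2.le hα.le
      nlinarith)
  obtain ⟨L, hL⟩ : ∃ L, Tendsto u (𝓝[<] 1) (𝓝 L) := by
    refine exists_limit_at_one (g := fun t => u t ^ p - (μ / t^2 + Λ) * u t) (d := d)
      (C := (|μ| * 2 + |Λ|) * M) (C' := M) hd hu hv1 ?_ ?_ (by positivity) ?_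
    · intro t ht
      have := hode t ht
      linarith
    · intro t ht
      have ht' : t ∈ Ioo (0:ℝ) 1 := ⟨by linarith [ht.1], ht.2⟩
      have h1 : 0 < u t ^ p := Real.rpow_pos_of_pos (hupos t ht') _
      have h2 : μ / t^2 ≤ |μ| * 2 := by
        have : (1/2:ℝ) ≤ t^2 := by nlinarith [ht.1]
        rw [div_le_iff₀ (by linarith)]
        nlinarith [le_abs_self μ, abs_nonneg μ]
      have h3 : (μ / t^2 + Λ) * u t ≤ (|μ| * 2 + |Λ|) * u t :=
        mul_le_mul_of_nonneg_right (add_le_add h2 (le_abs_self _)) (hupos t ht').le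
      have h4 : (|μ| * 2 + |Λ|) * u t ≤ (|μ| * 2 + |Λ|) * M :=
        mul_le_mul_of_nonneg_left (huM t ht') (by positivity)
      linarith
    · intro t ht
      rw [abs_of_pos (hupos t ht)]; exact huM t ht
  have hev : ∀ᶠ t in 𝓝[<] (1:ℝ), t ∈ Ioo (0:ℝ) 1 := Ioo_mem_nhdsLT zero_lt_one
  have hpt : Tendsto (fun t : ℝ => t ^ α) (𝓝[<] 1) (𝓝 1) := by
    have : ContinuousAt (fun t : ℝ => t ^ α) 1 :=
      Real.continuousAt_rpow_const 1 α (Or.inl one_ne_zero)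
    have h := this.tendsto
    rw [Real.one_rpow] at h
    exact h.mono_left nhdsWithin_le_nhds
  have hLε : ε ≤ L := by
    have h1 := hpt.const_mul ε
    rw [mul_one] at h1
    exact le_of_tendsto_of_tendsto h1 hL (hev.mono fun t ht => (hbd t ht).1)
  have hLM : L ≤ M := le_of_tendsto hL (hev.mono fun t ht => huM t ht)
  set v : ℝ → ℝ := fun t => if t ≤ 0 then 0 else if t < 1 then u t else L with hv
  have hvu : ∀ t ∈ Ioo (0:ℝ) 1, v t = u t := fun t ht => by
    simp [hv, ht.2, not_le.2 ht.1]
  have hv0 : v 0 = 0 := by simp [hv]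
  have hv1' : v 1 = L := by simp [hv]
  have hd1 : ∀ t ∈ Ioo (0:ℝ) 1, HasDerivAt v (v1 t) t := fun t ht =>
    (hu t ht).congr_of_eventuallyEq (by
      filter_upwards [Ioo_mem_nhds ht.1 ht.2] with s hs using hvu s hs)
  have hd2 : ∀ t ∈ Ioo (0:ℝ) 1, HasDerivAt (deriv v) (v2 t) t := fun t ht =>
    (hv1 t ht).congr_of_eventuallyEq (by
      filter_upwards [Ioo_mem_nhds ht.1 ht.2] with s hs using (hd1 s hs).deriv)
  have hbds : ∀ t ∈ Ioc (0:ℝ) 1, ε * t ^ α ≤ v t ∧ v t ≤ M * t ^ α := by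
    intro t ht
    rcases ht.2.lt_or_eq with h | h
    · rw [hvu t ⟨ht.1, h⟩]; exact hbd t ⟨ht.1, h⟩
    · subst h; rw [hv1', Real.one_rpow, mul_one, mul_one]; exact ⟨hLε, hLM⟩
  refine ⟨ε / 2, M + 1, by positivity, by linarith, v, ?_, ?_, ?_, ?_, ?_⟩
  · intro t ht
    exact lt_of_lt_of_le (mul_pos hε (Real.rpow_pos_of_pos ht.1 _)) (hbds t ht).1
  · have hv2c : ContinuousOn v2 (Ioo 0 1) := by
      have hc : ContinuousOn (fun t => (u t ^ p - μ / t^2 * u t - Λ * u t + (d-1) * t * v1 t)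
          / (1 - t^2)) (Ioo 0 1) := by
        intro t ht
        have hX := one_sub_sq_pos ht
        have a1 := (hu t ht).continuousAt
        have a2 := (hv1 t ht).continuousAt
        have a3 : ContinuousAt (fun t => u t ^ p) t :=
          a1.rpow_const (Or.inl (hupos t ht).ne')
        have a4 : ContinuousAt (fun t : ℝ => μ / t^2) t :=
          ContinuousAt.div (by fun_prop) (by fun_prop) (pow_ne_zero 2 ht.1.ne')
        refine ContinuousAt.continuousWithinAt (ContinuousAt.div ?_ (by fun_prop) hX.ne')
        fun_prop
      refine hc.congr fun t ht => ?_
      have hX := one_sub_sq_pos ht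
      have := hode t ht
      rw [eq_div_iff hX.ne']; linarith
    rw [show (2 : WithTop ℕ∞) = 1 + 1 from by norm_num,
      contDiffOn_succ_iff_deriv_of_isOpen isOpen_Ioo]
    refine ⟨fun t ht => (hd1 t ht).differentiableAt.differentiableWithinAt, by simp, ?_⟩
    rw [show (1 : WithTop ℕ∞) = 0 + 1 from by norm_num,
      contDiffOn_succ_iff_deriv_of_isOpen isOpen_Ioo]
    refine ⟨fun t ht => (hd2 t ht).differentiableAt.differentiableWithinAt, by simp, ?_⟩
    rw [contDiffOn_zero]
    exact hv2c.congr fun t ht => (hd2 t ht).deriv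
  · intro t ht
    rcases ht.1.eq_or_lt with h | h
    · subst h
      have hz : Tendsto (fun t : ℝ => M * t ^ α) (𝓝[Icc 0 1] 0) (𝓝 0) := by
        have : ContinuousAt (fun t : ℝ => M * t ^ α) 0 :=
          (Real.continuousAt_rpow_const 0 α (Or.inr hα.le)).const_mul M
        have h := this.tendsto
        rw [Real.zero_rpow hα.ne', mul_zero] at h
        exact h.mono_left nhdsWithin_le_nhds
      rw [ContinuousWithinAt, hv0]
      refine tendsto_of_tendsto_of_tendsto_of_le_of_le' tendsto_const_nhds hz ?_ ?_
      · filter_upwards [self_mem_nhdsWithin] with s hs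
        rcases hs.1.eq_or_lt with h | h
        · rw [← h, hv0]
        · exact le_trans (mul_nonneg hε.le (Real.rpow_nonneg h.le _)) (hbds s ⟨h, hs.2⟩).1
      · filter_upwards [self_mem_nhdsWithin] with s hs
        rcases hs.1.eq_or_lt with h | h
        · rw [← h, hv0, Real.zero_rpow hα.ne', mul_zero]
        · exact (hbds s ⟨h, hs.2⟩).2
    · rcases ht.2.lt_or_eq with h' | h'
      · exact (hd1 t ⟨h, h'⟩).continuousAt.continuousWithinAt
      · subst h'
        have h1 : ContinuousWithinAt v (Iio 1) 1 := by
          rw [ContinuousWithinAt, hv1']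
          exact hL.congr' (hev.mono fun t ht => (hvu t ht).symm)
        refine (continuousWithinAt_insert_self.2 h1).mono ?_
        intro s hs
        rcases hs.2.lt_or_eq with h | h
        · exact Or.inr h
        · exact Or.inl h
  · intro t ht
    rw [(hd2 t ht).deriv, (hd1 t ht).deriv, hvu t ht]
    exact hode t ht
  · intro t ht
    have hpos := Real.rpow_pos_of_pos ht.1 α
    obtain ⟨h1, h2⟩ := hbds t ht
    constructor <;> nlinarith

end final

/-- for `1 < p < p_c` the angular equation has a positive solution
`v` with `c₁ t^{α₊} < v(t) < c₂ t^{α₊}` on `(0,1]`. -/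
theorem stmt8 (n : ℕ) (hn : 2 ≤ n) (μ p : ℝ) (hμ : μ < 1 / 4) (hp1 : 1 < p)
    (hpc : p < 1 + 2 / ((n : ℝ) - 2 + aPlus μ)) :
    ∃ c₁ c₂ : ℝ, 0 < c₁ ∧ c₁ < c₂ ∧ ∃ v : ℝ → ℝ,
      (∀ t ∈ Set.Ioc (0 : ℝ) 1, 0 < v t) ∧
      ContDiffOn ℝ 2 v (Set.Ioo 0 1) ∧
      ContinuousOn v (Set.Icc 0 1) ∧
      (∀ t ∈ Set.Ioo (0 : ℝ) 1,
        (1 - t ^ 2) * deriv (deriv v) t - ((n : ℝ) - 1) * t * deriv v t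
          + (μ / t ^ 2) * v t + Lam n (-(2 / (p - 1))) * v t = v t ^ p) ∧
      (∀ t ∈ Set.Ioc (0 : ℝ) 1, c₁ * t ^ aPlus μ < v t ∧ v t < c₂ * t ^ aPlus μ) := by
  have hn' : (2:ℝ) ≤ n := by exact_mod_cast hn
  have hs0 : 0 < Real.sqrt (1 / 4 - μ) := Real.sqrt_pos.2 (by linarith)
  have hs2 : Real.sqrt (1 / 4 - μ) ^ 2 = 1 / 4 - μ := Real.sq_sqrt (by linarith)
  have hα : 0 < aPlus μ := by unfold aPlus; linarith
  have hμα : μ = aPlus μ - aPlus μ ^ 2 := by unfold aPlus; nlinarith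
  have hp0 : 0 < p - 1 := by linarith
  have hs : (n:ℝ) - 2 + aPlus μ < 2 / (p - 1) := by
    have h0 : 0 < (n:ℝ) - 2 + aPlus μ := by linarith
    have h1 : p - 1 < 2 / ((n : ℝ) - 2 + aPlus μ) := by linarith
    rw [lt_div_iff₀ h0] at h1
    rw [lt_div_iff₀ hp0]
    linarith
  refine exists_v (d := (n:ℝ)) (κ := (2 / (p-1) - (n - 2) - aPlus μ) * (2 / (p-1) + aPlus μ))
    hα hn' (mul_pos (by linarith) (by positivity)) hp1 hμα ?_
  unfold Lam
  ring
end

section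
/- Let n ≥ 2, −∞ < μ < 1/4 and 1 < p < p_KO, where p_KO := +∞ if 0 ≤ μ < 1/4 and p_KO := 1 − 2/α₋ if μ < 0. Then there exist constants 0 < c₁ < c₂ and a positive function v, twice continuously differentiable on (0,1), satisfying (1−t²)v''(t) − (n−1)t v'(t) + (μ/t²)v(t) + Λ(−2/(p−1))v(t) = v(t)^p for all t ∈ (0,1), and c₁ t^{α₋} < v(t) < c₂ t^{α₋} for all t ∈ (0,1]. -/
open Real Set

open MeasureTheory Filter Topology

/-- Control of a lower integral on an open interval by its values on compact subintervals. -/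
lemma lint_Ioo_le (φ : ℝ → ENNReal) (l u : ℝ) (hlu : l < u) (C : ENNReal)
    (h : ∀ x y, l < x → x < y → y < u → ∫⁻ s in Ioc x y, φ s ≤ C) :
    ∫⁻ s in Ioo l u, φ s ≤ C := by
  have hU : Ioo l u = ⋃ k : ℕ, Ioc (l + (u - l) / (k + 3)) (u - (u - l) / (k + 3)) := by
    ext x
    simp only [mem_iUnion, mem_Ioc, mem_Ioo]
    constructor
    · rintro ⟨h1, h2⟩
      have hm : 0 < min (x - l) (u - x) := lt_min (by linarith) (by linarith)
      obtain ⟨k, hk⟩ := exists_nat_gt ((u - l) / min (x - l) (u - x))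
      have hk' : (u - l) / (k + 3) < min (x - l) (u - x) := by
        rw [div_lt_iff₀ hm] at hk
        rw [div_lt_iff₀ (by positivity)]
        nlinarith
      refine ⟨k, ?_, ?_⟩
      · have := min_le_left (x - l) (u - x); linarith
      · have := min_le_right (x - l) (u - x); linarith
    · rintro ⟨k, h1, h2⟩
      have : 0 < (u - l) / ((k : ℝ) + 3) := div_pos (by linarith) (by positivity)
      constructor <;> linarith
  have hmono : Monotone (fun k : ℕ => Ioc (l + (u - l) / ((k : ℝ) + 3)) (u - (u - l) / (k + 3))) := by
    intro i j hij
    have hc : (i : ℝ) ≤ j := by exact_mod_cast hij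
    have : (u - l) / ((j : ℝ) + 3) ≤ (u - l) / (i + 3) := by
      have : 0 < u - l := by linarith
      gcongr
    exact Ioc_subset_Ioc (by linarith) (by linarith)
  rw [hU, setLIntegral_iUnion_of_directed _ hmono.directed_le]
  refine iSup_le fun k => ?_
  have h3 : (0 : ℝ) < k + 3 := by positivity
  have h1 : 0 < (u - l) / ((k : ℝ) + 3) := div_pos (by linarith) h3
  have h2 : (u - l) / ((k : ℝ) + 3) ≤ (u - l) / 3 := by
    have : 0 < u - l := by linarith
    have : (0 : ℝ) ≤ k := by positivity
    gcongr
    linarith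
  exact h _ _ (by linarith) (by linarith) (by linarith)

lemma abs_fix (a b : ℝ → ℝ) (g : ℝ → ℝ → ℝ) (w2 W W' : ℝ → ℝ) (c : ℝ) (hc : 0 ≤ c)
    (ha : ∀ t ∈ Ioo (0:ℝ) 1, 0 < a t) (hac : ContinuousOn a (Ioo 0 1))
    (hb : ∀ t ∈ Ioo (0:ℝ) 1, 0 < b t) (hbc : ContinuousOn b (Ioo 0 1))
    (hg : ∀ t ∈ Ioo (0:ℝ) 1, ∀ x y, 0 ≤ x → x ≤ y → y ≤ w2 t → g t x ≤ g t y)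
    (hgz : ∀ t ∈ Ioo (0:ℝ) 1, 0 ≤ g t 0)
    (hgc : ContinuousOn (Function.uncurry g) (Ioo (0:ℝ) 1 ×ˢ Ici 0))
    (hw2 : ∀ t ∈ Ioo (0:ℝ) 1, HasDerivAt w2 (W t / a t) t)
    (hW : ∀ t ∈ Ioo (0:ℝ) 1, HasDerivAt W (W' t) t)
    (hW' : ∀ t ∈ Ioo (0:ℝ) 1, W' t ≤ -(b t * g t (w2 t)))
    (hW0 : ∀ t ∈ Ioo (0:ℝ) 1, 0 ≤ W t)
    (hcw : ∀ t ∈ Ioo (0:ℝ) 1, c ≤ w2 t) :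
    ∃ ω : ℝ → ENNReal, (∀ t ∈ Ioo (0:ℝ) 1, ω t ≤ ENNReal.ofReal (w2 t)) ∧
      (∀ t, ω t = ENNReal.ofReal c + ∫⁻ s in Ioo 0 t, ENNReal.ofReal ((a s)⁻¹) *
        ∫⁻ τ in Ioo s 1, ENNReal.ofReal (b τ * g τ (ω τ).toReal)) ∧
      (∀ s ∈ Ioo (0:ℝ) 1, ∫⁻ τ in Ioo s 1, ENNReal.ofReal (b τ * g τ (ω τ).toReal)
        ≤ ENNReal.ofReal (W s)) := by
  have hw20 : ∀ t ∈ Ioo (0:ℝ) 1, 0 ≤ w2 t := fun t ht => hc.trans (hcw t ht)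
  have hw2c : ContinuousOn w2 (Ioo 0 1) := fun t ht => (hw2 t ht).continuousAt.continuousWithinAt
  have hWc : ContinuousOn W (Ioo 0 1) := fun t ht => (hW t ht).continuousAt.continuousWithinAt
  have hbg : ContinuousOn (fun t => b t * g t (w2 t)) (Ioo 0 1) := by
    refine hbc.mul ?_
    have : ContinuousOn (fun t => (t, w2 t)) (Ioo (0:ℝ) 1) := continuousOn_id.prodMk hw2c
    exact hgc.comp this fun t ht => ⟨ht, hw20 t ht⟩
  have hbg0 : ∀ t ∈ Ioo (0:ℝ) 1, 0 ≤ b t * g t (w2 t) := fun t ht =>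
    mul_nonneg (hb t ht).le ((hgz t ht).trans (hg t ht 0 _ le_rfl (hw20 t ht) le_rfl))
  let F : (ℝ → ENNReal) → ℝ → ENNReal := fun ω τ =>
    ENNReal.ofReal (b τ * g τ ((min (ω τ) (ENNReal.ofReal (w2 τ))).toReal))
  have hFm : ∀ ω₁ ω₂ : ℝ → ENNReal, ω₁ ≤ ω₂ → ∀ τ ∈ Ioo (0:ℝ) 1, F ω₁ τ ≤ F ω₂ τ := by
    intro ω₁ ω₂ h τ hτ
    refine ENNReal.ofReal_le_ofReal (mul_le_mul_of_nonneg_left ?_ (hb τ hτ).le)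
    refine hg τ hτ _ _ ENNReal.toReal_nonneg ?_ ?_
    · refine ENNReal.toReal_mono ?_ (min_le_min_right _ (h τ))
      exact ((min_le_right _ _).trans_lt ENNReal.ofReal_lt_top).ne
    · exact ENNReal.toReal_le_of_le_ofReal (hw20 τ hτ) (min_le_right _ _)
  have hΦm : ∀ ω₁ ω₂ : ℝ → ENNReal, ω₁ ≤ ω₂ → ∀ s, 0 < s →
      ∫⁻ τ in Ioo s 1, F ω₁ τ ≤ ∫⁻ τ in Ioo s 1, F ω₂ τ := by
    intro ω₁ ω₂ h s hs
    exact setLIntegral_mono' measurableSet_Ioo fun τ hτ => hFm _ _ h τ ⟨hs.trans hτ.1, hτ.2⟩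
  let T : (ℝ → ENNReal) →o (ℝ → ENNReal) :=
    { toFun := fun ω t => ENNReal.ofReal c + ∫⁻ s in Ioo 0 t, ENNReal.ofReal ((a s)⁻¹) *
        ∫⁻ τ in Ioo s 1, F ω τ
      monotone' := by
        intro ω₁ ω₂ h t
        refine add_le_add le_rfl (setLIntegral_mono' measurableSet_Ioo fun s hs => ?_)
        exact mul_le_mul_right (hΦm _ _ h s hs.1) _ }
  let Ω : ℝ → ENNReal := fun t => if t ∈ Ioo (0:ℝ) 1 then ENNReal.ofReal (w2 t) else ⊤
  have hΩ : ∀ t ∈ Ioo (0:ℝ) 1, Ω t = ENNReal.ofReal (w2 t) := fun t ht => if_pos ht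
  have hΦΩ : ∀ s ∈ Ioo (0:ℝ) 1, ∫⁻ τ in Ioo s 1, F Ω τ ≤ ENNReal.ofReal (W s) := by
    intro s hs
    have e1 : ∫⁻ τ in Ioo s 1, F Ω τ = ∫⁻ τ in Ioo s 1, ENNReal.ofReal (b τ * g τ (w2 τ)) := by
      refine setLIntegral_congr_fun measurableSet_Ioo fun τ hτ => ?_
      have hτ' : τ ∈ Ioo (0:ℝ) 1 := ⟨hs.1.trans hτ.1, hτ.2⟩
      simp only [F, hΩ τ hτ', min_self, ENNReal.toReal_ofReal (hw20 τ hτ')]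
    rw [e1]
    refine lint_Ioo_le _ _ _ hs.2 _ fun x y hx hxy hy => ?_
    have hsub : Icc x y ⊆ Ioo 0 1 := fun z hz => ⟨by linarith [hz.1, hs.1], by linarith [hz.2]⟩
    have hint : IntegrableOn (fun t => b t * g t (w2 t)) (Icc x y) :=
      (hbg.mono hsub).integrableOn_Icc
    rw [← ofReal_integral_eq_lintegral_ofReal (hint.mono_set Ioc_subset_Icc_self)
      ((ae_restrict_mem measurableSet_Ioc).mono fun z hz => hbg0 z (hsub ⟨hz.1.le, hz.2⟩))]
    refine ENNReal.ofReal_le_ofReal ?_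
    rw [← intervalIntegral.integral_of_le hxy.le]
    have h1 := intervalIntegral.integral_le_sub_of_hasDeriv_right_of_le (g := fun t => - W t)
      (g' := fun t => - W' t) hxy.le ((hWc.mono hsub).neg)
      (fun z hz => ((hW z (hsub ⟨hz.1.le, hz.2.le⟩)).neg).hasDerivWithinAt) hint
      (fun z hz => by have := hW' z (hsub ⟨hz.1.le, hz.2.le⟩); linarith)
    have h2 : W x ≤ W s := by
      have : AntitoneOn W (Icc s x) := by
        have hsub2 : Icc s x ⊆ Ioo 0 1 := fun z hz =>
          ⟨by linarith [hz.1, hs.1], by linarith [hz.2]⟩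
        refine antitoneOn_of_deriv_nonpos (convex_Icc _ _) (hWc.mono hsub2) ?_ ?_
        · intro z hz; rw [interior_Icc] at hz
          exact (hW z (hsub2 ⟨hz.1.le, hz.2.le⟩)).differentiableAt.differentiableWithinAt
        · intro z hz; rw [interior_Icc] at hz
          have hz' := hsub2 ⟨hz.1.le, hz.2.le⟩
          rw [(hW z hz').deriv]
          linarith [hW' z hz', hbg0 z hz']
      exact this ⟨le_rfl, hx.le⟩ ⟨hx.le, le_rfl⟩ hx.le
    have h3 := hW0 y (hsub ⟨hxy.le, le_rfl⟩)
    linarith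
  have hTΩ : T Ω ≤ Ω := by
    intro t
    by_cases ht : t ∈ Ioo (0:ℝ) 1
    swap
    · simp only [Ω, if_neg ht, le_top]
    rw [hΩ t ht]
    have hm2 : MonotoneOn w2 (Ioo 0 1) := by
      refine monotoneOn_of_deriv_nonneg (convex_Ioo _ _) hw2c ?_ ?_
      · intro z hz; rw [interior_Ioo] at hz
        exact (hw2 z hz).differentiableAt.differentiableWithinAt
      · intro z hz; rw [interior_Ioo] at hz
        rw [(hw2 z hz).deriv]; exact div_nonneg (hW0 z hz) (ha z hz).le
    have key : ∫⁻ s in Ioo 0 t, ENNReal.ofReal ((a s)⁻¹) * ∫⁻ τ in Ioo s 1, F Ω τ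
        ≤ ENNReal.ofReal (w2 t - c) := by
      refine lint_Ioo_le _ _ _ ht.1 _ fun x y hx hxy hy => ?_
      have hsub : Icc x y ⊆ Ioo 0 1 := fun z hz => ⟨by linarith [hz.1], by linarith [hz.2, ht.2]⟩
      have hcont : ContinuousOn (fun s => W s / a s) (Icc x y) :=
        (hWc.mono hsub).div (hac.mono hsub) fun z hz => (ha z (hsub hz)).ne'
      calc ∫⁻ s in Ioc x y, ENNReal.ofReal ((a s)⁻¹) * ∫⁻ τ in Ioo s 1, F Ω τ
          ≤ ∫⁻ s in Ioc x y, ENNReal.ofReal (W s / a s) := by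
            refine setLIntegral_mono' measurableSet_Ioc fun s hs => ?_
            have hs' := hsub ⟨hs.1.le, hs.2⟩
            rw [div_eq_inv_mul, ENNReal.ofReal_mul (inv_nonneg.2 (ha s hs').le)]
            exact mul_le_mul_right (hΦΩ s hs') _
        _ = ENNReal.ofReal (∫ s in x..y, W s / a s) := by
            rw [intervalIntegral.integral_of_le hxy.le, ofReal_integral_eq_lintegral_ofReal
              (hcont.integrableOn_Icc.mono_set Ioc_subset_Icc_self)]
            exact (ae_restrict_mem measurableSet_Ioc).mono fun z hz =>
              div_nonneg (hW0 z (hsub ⟨hz.1.le, hz.2⟩)) (ha z (hsub ⟨hz.1.le, hz.2⟩)).le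
        _ ≤ ENNReal.ofReal (w2 t - c) := by
            refine ENNReal.ofReal_le_ofReal ?_
            rw [intervalIntegral.integral_eq_sub_of_hasDerivAt (f := w2)]
            · have h1 := hcw x (hsub ⟨le_rfl, hxy.le⟩)
              have h2 := hm2 (hsub ⟨hxy.le, le_rfl⟩) ht hy.le
              linarith
            · intro z hz
              rw [uIcc_of_le hxy.le] at hz
              exact hw2 z (hsub hz)
            · refine ContinuousOn.intervalIntegrable ?_
              rwa [uIcc_of_le hxy.le]
    calc T Ω t ≤ ENNReal.ofReal c + ENNReal.ofReal (w2 t - c) := add_le_add le_rfl key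
      _ = ENNReal.ofReal (w2 t) := by
        rw [← ENNReal.ofReal_add hc (by linarith [hcw t ht])]; congr 1; ring
  have hle : T.lfp ≤ Ω := T.lfp_le hTΩ
  have hle' : ∀ t ∈ Ioo (0:ℝ) 1, T.lfp t ≤ ENNReal.ofReal (w2 t) := fun t ht => by
    rw [← hΩ t ht]; exact hle t
  have hF : ∀ s, 0 < s → ∫⁻ τ in Ioo s 1, ENNReal.ofReal (b τ * g τ (T.lfp τ).toReal)
      = ∫⁻ τ in Ioo s 1, F T.lfp τ := by
    intro s hs
    refine setLIntegral_congr_fun measurableSet_Ioo fun τ hτ => ?_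
    simp only [F, min_eq_left (hle' τ ⟨hs.trans hτ.1, hτ.2⟩)]
  refine ⟨T.lfp, hle', ?_, ?_⟩
  · intro t
    have h1 : T.lfp t = T T.lfp t := by rw [T.map_lfp]
    rw [h1]
    change ENNReal.ofReal c + (∫⁻ s in Ioo 0 t, ENNReal.ofReal ((a s)⁻¹) *
      ∫⁻ τ in Ioo s 1, F T.lfp τ) = _
    congr 1
    refine setLIntegral_congr_fun measurableSet_Ioo fun s hs => ?_
    rw [hF s hs.1]
  · intro s hs
    rw [hF s hs.1]
    exact (hΦm _ _ hle s hs.1).trans (hΦΩ s hs)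

lemma abs_exist (a b : ℝ → ℝ) (g : ℝ → ℝ → ℝ) (w2 W W' : ℝ → ℝ) (c : ℝ) (hc : 0 ≤ c)
    (ha : ∀ t ∈ Ioo (0:ℝ) 1, 0 < a t) (hac : ContinuousOn a (Ioo 0 1))
    (hb : ∀ t ∈ Ioo (0:ℝ) 1, 0 < b t) (hbc : ContinuousOn b (Ioo 0 1))
    (hg : ∀ t ∈ Ioo (0:ℝ) 1, ∀ x y, 0 ≤ x → x ≤ y → y ≤ w2 t → g t x ≤ g t y)
    (hgz : ∀ t ∈ Ioo (0:ℝ) 1, 0 ≤ g t 0)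
    (hgc : ContinuousOn (Function.uncurry g) (Ioo (0:ℝ) 1 ×ˢ Ici 0))
    (hw2 : ∀ t ∈ Ioo (0:ℝ) 1, HasDerivAt w2 (W t / a t) t)
    (hW : ∀ t ∈ Ioo (0:ℝ) 1, HasDerivAt W (W' t) t)
    (hW' : ∀ t ∈ Ioo (0:ℝ) 1, W' t ≤ -(b t * g t (w2 t)))
    (hW0 : ∀ t ∈ Ioo (0:ℝ) 1, 0 ≤ W t)
    (hcw : ∀ t ∈ Ioo (0:ℝ) 1, c ≤ w2 t) :
    ∃ w P : ℝ → ℝ, ∀ t ∈ Ioo (0:ℝ) 1, c ≤ w t ∧ w t ≤ w2 t ∧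
      HasDerivAt w (P t / a t) t ∧ HasDerivAt P (-(b t * g t (w t))) t := by
  obtain ⟨ω, hω2, hω, hΦ⟩ := abs_fix a b g w2 W W' c hc ha hac hb hbc hg hgz hgc hw2 hW hW' hW0 hcw
  have hw20 : ∀ t ∈ Ioo (0:ℝ) 1, 0 ≤ w2 t := fun t ht => hc.trans (hcw t ht)
  have hOo : ∀ t ∈ Ioo (0:ℝ) 1, Ioo (0:ℝ) 1 ∈ 𝓝 t := fun t ht => isOpen_Ioo.mem_nhds ht
  set w : ℝ → ℝ := fun t => (ω t).toReal with hw
  set Ph : ℝ → ENNReal := fun s => ∫⁻ τ in Ioo s 1, ENNReal.ofReal (b τ * g τ (w τ)) with hPh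
  have hωt : ∀ t ∈ Ioo (0:ℝ) 1, ω t ≠ ⊤ := fun t ht =>
    ((hω2 t ht).trans_lt ENNReal.ofReal_lt_top).ne
  have hw0 : ∀ t, 0 ≤ w t := fun t => ENNReal.toReal_nonneg
  have hwle : ∀ t ∈ Ioo (0:ℝ) 1, w t ≤ w2 t := fun t ht =>
    ENNReal.toReal_le_of_le_ofReal (hw20 t ht) (hω2 t ht)
  have hPt : ∀ t ∈ Ioo (0:ℝ) 1, Ph t ≠ ⊤ := fun t ht =>
    ((hΦ t ht).trans_lt ENNReal.ofReal_lt_top).ne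
  have hPanti : Antitone Ph := fun x y hxy =>
    lintegral_mono_set (Ioo_subset_Ioo_left hxy)
  have hPm : Measurable Ph := hPanti.measurable
  set f : ℝ → ℝ := fun s => (Ph s).toReal / a s with hf
  have hf0 : ∀ s ∈ Ioo (0:ℝ) 1, 0 ≤ f s := fun s hs =>
    div_nonneg ENNReal.toReal_nonneg (ha s hs).le
  have hfm : AEStronglyMeasurable f (volume.restrict (Ioo 0 1)) := by
    have h1 : AEStronglyMeasurable a (volume.restrict (Ioo 0 1)) :=
      hac.aestronglyMeasurable measurableSet_Ioo
    exact (hPm.ennreal_toReal.aemeasurable.div h1.aemeasurable).aestronglyMeasurable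
  have hlin : ∀ t ∈ Ioo (0:ℝ) 1, ω t = ENNReal.ofReal c + ∫⁻ s in Ioo 0 t, ENNReal.ofReal (f s) := by
    intro t ht
    rw [hω t]
    congr 1
    refine setLIntegral_congr_fun measurableSet_Ioo fun s hs => ?_
    have hs' : s ∈ Ioo (0:ℝ) 1 := ⟨hs.1, hs.2.trans ht.2⟩
    simp only [hf]
    rw [div_eq_inv_mul, ENNReal.ofReal_mul (inv_nonneg.2 (ha s hs').le),
      ENNReal.ofReal_toReal (hPt s hs')]
  have hfint : ∀ t ∈ Ioo (0:ℝ) 1, IntegrableOn f (Ioo 0 t) := by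
    intro t ht
    have hsub : Ioo 0 t ⊆ Ioo (0:ℝ) 1 := Ioo_subset_Ioo_right ht.2.le
    refine ⟨hfm.mono_set hsub, ?_⟩
    rw [hasFiniteIntegral_iff_ofReal
      ((ae_restrict_mem measurableSet_Ioo).mono fun z hz => hf0 z (hsub hz))]
    refine lt_of_le_of_lt ?_ (hωt t ht).lt_top
    rw [hlin t ht]
    exact le_add_self
  have hfii : ∀ t ∈ Ioo (0:ℝ) 1, IntervalIntegrable f volume 0 t := by
    intro t ht
    rw [intervalIntegrable_iff_integrableOn_Ioo_of_le ht.1.le]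
    exact hfint t ht
  have hweq : ∀ t ∈ Ioo (0:ℝ) 1, w t = c + ∫ s in (0:ℝ)..t, f s := by
    intro t ht
    have hsub : Ioo 0 t ⊆ Ioo (0:ℝ) 1 := Ioo_subset_Ioo_right ht.2.le
    have hnn : 0 ≤ᵐ[volume.restrict (Ioo 0 t)] f :=
      (ae_restrict_mem measurableSet_Ioo).mono fun z hz => hf0 z (hsub hz)
    simp only [hw]
    rw [hlin t ht, ← ofReal_integral_eq_lintegral_ofReal (hfint t ht) hnn,
      ← ENNReal.ofReal_add hc (integral_nonneg_of_ae hnn),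
      ENNReal.toReal_ofReal (add_nonneg hc (integral_nonneg_of_ae hnn)),
      intervalIntegral.integral_of_le ht.1.le, integral_Ioc_eq_integral_Ioo]
  have hcle : ∀ t ∈ Ioo (0:ℝ) 1, c ≤ w t := by
    intro t ht
    rw [hweq t ht]
    have : 0 ≤ ∫ s in (0:ℝ)..t, f s := by
      rw [intervalIntegral.integral_of_le ht.1.le, integral_Ioc_eq_integral_Ioo]
      exact setIntegral_nonneg measurableSet_Ioo fun s hs => hf0 s ⟨hs.1, hs.2.trans ht.2⟩
    linarith
  have hwc : ContinuousOn w (Ioo 0 1) := by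
    intro t ht
    obtain ⟨r, hr1, hr2⟩ := exists_between ht.2
    have hr : r ∈ Ioo (0:ℝ) 1 := ⟨ht.1.trans hr1, hr2⟩
    have h1 := intervalIntegral.continuousOn_primitive_interval' (hfii r hr) left_mem_uIcc
    rw [uIcc_of_le hr.1.le] at h1
    have h2 : ContinuousAt (fun b => ∫ x in (0:ℝ)..b, f x) t :=
      h1.continuousAt (Icc_mem_nhds ht.1 hr1)
    have h3 : ContinuousAt (fun b => c + ∫ x in (0:ℝ)..b, f x) t := continuousAt_const.add h2
    refine (h3.congr ?_).continuousWithinAt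
    filter_upwards [hOo t ht] with z hz
    exact (hweq z hz).symm
  set G : ℝ → ℝ := fun τ => b τ * g τ (w τ) with hG
  have hGc : ContinuousOn G (Ioo 0 1) := by
    refine hbc.mul ?_
    have : ContinuousOn (fun t => (t, w t)) (Ioo (0:ℝ) 1) := continuousOn_id.prodMk hwc
    exact hgc.comp this fun t ht => ⟨ht, hw0 t⟩
  have hG0 : ∀ t ∈ Ioo (0:ℝ) 1, 0 ≤ G t := fun t ht =>
    mul_nonneg (hb t ht).le ((hgz t ht).trans (hg t ht 0 _ le_rfl (hw0 t) (hwle t ht)))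
  have hGint : ∀ s ∈ Ioo (0:ℝ) 1, IntegrableOn G (Ioo s 1) := by
    intro s hs
    have hsub : Ioo s 1 ⊆ Ioo (0:ℝ) 1 := Ioo_subset_Ioo_left hs.1.le
    refine ⟨(hGc.mono hsub).aestronglyMeasurable measurableSet_Ioo, ?_⟩
    rw [hasFiniteIntegral_iff_ofReal
      ((ae_restrict_mem measurableSet_Ioo).mono fun z hz => hG0 z (hsub hz))]
    exact (hPt s hs).lt_top
  have hPeq : ∀ s ∈ Ioo (0:ℝ) 1, (Ph s).toReal = ∫ τ in s..1, G τ := by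
    intro s hs
    have hsub : Ioo s 1 ⊆ Ioo (0:ℝ) 1 := Ioo_subset_Ioo_left hs.1.le
    have hnn : 0 ≤ᵐ[volume.restrict (Ioo s 1)] G :=
      (ae_restrict_mem measurableSet_Ioo).mono fun z hz => hG0 z (hsub hz)
    simp only [hPh]
    rw [← ofReal_integral_eq_lintegral_ofReal (hGint s hs) hnn,
      ENNReal.toReal_ofReal (integral_nonneg_of_ae hnn),
      intervalIntegral.integral_of_le hs.2.le, integral_Ioc_eq_integral_Ioo]
  have hPd : ∀ t ∈ Ioo (0:ℝ) 1, HasDerivAt (fun s => (Ph s).toReal) (-(G t)) t := by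
    intro t ht
    have h1 : IntervalIntegrable G volume t 1 := by
      rw [intervalIntegrable_iff_integrableOn_Ioo_of_le ht.2.le]
      exact hGint t ht
    have h2 := intervalIntegral.integral_hasDerivAt_left h1
      (hGc.stronglyMeasurableAtFilter isOpen_Ioo t ht) (hGc.continuousAt (hOo t ht))
    refine h2.congr_of_eventuallyEq ?_
    filter_upwards [hOo t ht] with z hz
    exact hPeq z hz
  have hfc : ContinuousOn f (Ioo 0 1) :=
    ContinuousOn.div (fun t ht => (hPd t ht).continuousAt.continuousWithinAt) hac
      fun t ht => (ha t ht).ne'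
  refine ⟨w, fun s => (Ph s).toReal, fun t ht => ⟨hcle t ht, hwle t ht, ?_, hPd t ht⟩⟩
  have h2 := (intervalIntegral.integral_hasDerivAt_right (hfii t ht)
      (hfc.stronglyMeasurableAtFilter isOpen_Ioo t ht) (hfc.continuousAt (hOo t ht))).const_add c
  refine h2.congr_of_eventuallyEq ?_
  filter_upwards [hOo t ht] with z hz
  exact hweq z hz

lemma rpow_tangent {p x y : ℝ} (hp : 1 < p) (hx : 0 ≤ x) (hxy : x ≤ y) :
    y ^ p - x ^ p ≤ p * y ^ (p - 1) * (y - x) := by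
  rcases eq_or_lt_of_le (hx.trans hxy) with h | h
  · have : x = 0 := by linarith
    subst this; subst h; simp
  have h1 := one_add_mul_self_le_rpow_one_add (s := x / y - 1) (p := p)
    (by have := div_nonneg hx h.le; linarith) hp.le
  have e1 : 1 + (x / y - 1) = x / y := by ring
  rw [e1, Real.div_rpow hx h.le, le_div_iff₀ (rpow_pos_of_pos h p)] at h1
  have e2 : y ^ p = y ^ (p - 1) * y := by
    rw [← Real.rpow_add_one h.ne']; ring_nf
  have e3 : (1 + p * (x / y - 1)) * y ^ p = y ^ p + p * y ^ (p - 1) * (x - y) := by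
    rw [e2]; field_simp
  rw [e3] at h1
  linarith

lemma ode_exist (m p c : ℝ) (hp : 1 < p) (hc : 0 ≤ c) (V q h h1 h2 z z1 z2 : ℝ → ℝ)
    (hV : ContinuousOn V (Ioo 0 1)) (hq : ContinuousOn q (Ioo 0 1))
    (hh : ∀ t ∈ Ioo (0:ℝ) 1, 0 < h t ∧ HasDerivAt h (h1 t) t ∧ HasDerivAt h1 (h2 t) t)
    (hz : ∀ t ∈ Ioo (0:ℝ) 1, 0 < z t ∧ HasDerivAt z (z1 t) t ∧ HasDerivAt z1 (z2 t) t)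
    (hhq : ∀ t ∈ Ioo (0:ℝ) 1, (1 - t ^ 2) * h2 t - m * t * h1 t + V t * h t = q t * h t)
    (hzp : ∀ t ∈ Ioo (0:ℝ) 1, (1 - t ^ 2) * z2 t - m * t * z1 t + V t * z t ≤ z t ^ p)
    (hqp : ∀ t ∈ Ioo (0:ℝ) 1, p * z t ^ (p - 1) ≤ q t)
    (hwr : ∀ t ∈ Ioo (0:ℝ) 1, 0 ≤ h t * z1 t - h1 t * z t)
    (hcz : ∀ t ∈ Ioo (0:ℝ) 1, c * h t ≤ z t) :
    ∃ v v1 v2 : ℝ → ℝ, ContinuousOn v2 (Ioo 0 1) ∧ ∀ t ∈ Ioo (0:ℝ) 1,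
      c * h t ≤ v t ∧ v t ≤ z t ∧ HasDerivAt v (v1 t) t ∧ HasDerivAt v1 (v2 t) t ∧
      (1 - t ^ 2) * v2 t - m * t * v1 t + V t * v t = v t ^ p := by
  have h1t : ∀ t ∈ Ioo (0:ℝ) 1, 0 < 1 - t ^ 2 := fun t ht => by nlinarith [ht.1, ht.2]
  have hhc : ContinuousOn h (Ioo 0 1) := fun t ht => (hh t ht).2.1.continuousAt.continuousWithinAt
  set A : ℝ → ℝ := fun t => (1 - t ^ 2) ^ (m / 2) with hA
  set ρ : ℝ → ℝ := fun t => (1 - t ^ 2) ^ (m / 2 - 1) with hρ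
  have hA0 : ∀ t ∈ Ioo (0:ℝ) 1, 0 < A t := fun t ht => rpow_pos_of_pos (h1t t ht) _
  have hρ0 : ∀ t ∈ Ioo (0:ℝ) 1, 0 < ρ t := fun t ht => rpow_pos_of_pos (h1t t ht) _
  have hAρ : ∀ t ∈ Ioo (0:ℝ) 1, A t = (1 - t ^ 2) * ρ t := by
    intro t ht
    simp only [hA, hρ]
    rw [Real.rpow_sub_one (h1t t ht).ne']
    field_simp [(h1t t ht).ne']
  have hAd : ∀ t ∈ Ioo (0:ℝ) 1, HasDerivAt A (-(m * t * ρ t)) t := by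
    intro t ht
    have e : HasDerivAt (fun t : ℝ => 1 - t ^ 2) (-(2 * t)) t := by
      simpa using (hasDerivAt_pow 2 t).const_sub 1
    have := e.rpow_const (p := m / 2) (Or.inl (h1t t ht).ne')
    convert this using 1
    simp only [hρ]; ring
  have hAc : ContinuousOn A (Ioo 0 1) := fun t ht => (hAd t ht).continuousAt.continuousWithinAt
  have hρc : ContinuousOn ρ (Ioo 0 1) := by
    refine ContinuousOn.rpow_const (by fun_prop) fun t ht => Or.inl (h1t t ht).ne'
  have hzh : ∀ t ∈ Ioo (0:ℝ) 1, h t ^ (p - 1) * (z t / h t) ^ (p - 1) = z t ^ (p - 1) := by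
    intro t ht
    rw [Real.div_rpow (hz t ht).1.le (hh t ht).1.le]
    have := (rpow_pos_of_pos (hh t ht).1 (p - 1)).ne'
    field_simp
  have hhp : ∀ t ∈ Ioo (0:ℝ) 1, h t ^ p = h t ^ (p - 1) * h t := by
    intro t ht
    rw [← Real.rpow_add_one (hh t ht).1.ne']; ring_nf
  have hkey := abs_exist (fun t => A t * h t ^ 2) (fun t => ρ t * h t ^ 2)
    (fun t x => q t * x - h t ^ (p - 1) * x ^ p) (fun t => z t / h t)
    (fun t => A t * (h t * z1 t - h1 t * z t))
    (fun t => ρ t * (h t * ((1 - t ^ 2) * z2 t - m * t * z1 t)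
      - z t * ((1 - t ^ 2) * h2 t - m * t * h1 t))) c hc
    (fun t ht => mul_pos (hA0 t ht) (pow_pos (hh t ht).1 2))
    (hAc.mul (hhc.pow 2))
    (fun t ht => mul_pos (hρ0 t ht) (pow_pos (hh t ht).1 2))
    (hρc.mul (hhc.pow 2)) ?_ ?_ ?_ ?_ ?_ ?_ ?_ ?_
  · obtain ⟨w, P, hwP⟩ := hkey
    set v1 : ℝ → ℝ := fun t => h1 t * w t + P t / (A t * h t) with hv1
    set v2 : ℝ → ℝ := fun t => ((h t * w t) ^ p - V t * (h t * w t) + m * t * v1 t) / (1 - t ^ 2)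
      with hv2
    have hvd : ∀ t ∈ Ioo (0:ℝ) 1, HasDerivAt (fun t => h t * w t) (v1 t) t := by
      intro t ht
      obtain ⟨-, -, hw, -⟩ := hwP t ht
      refine ((hh t ht).2.1.mul hw).congr_deriv ?_
      have := (hh t ht).1.ne'
      have := (hA0 t ht).ne'
      simp only [hv1]
      field_simp
    have hw0 : ∀ t ∈ Ioo (0:ℝ) 1, 0 ≤ w t := fun t ht => hc.trans (hwP t ht).1
    have hv1d : ∀ t ∈ Ioo (0:ℝ) 1, HasDerivAt v1 (v2 t) t := by
      intro t ht
      obtain ⟨-, -, hw, hP⟩ := hwP t ht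
      have n1 := (hh t ht).1.ne'
      have n2 := (hA0 t ht).ne'
      have n3 := (hρ0 t ht).ne'
      have n4 := (h1t t ht).ne'
      refine (((hh t ht).2.2.mul hw).add
        (hP.div ((hAd t ht).mul (hh t ht).2.1) (mul_ne_zero n2 n1))).congr_deriv ?_
      have e1 := hhq t ht
      simp only [hv2, hv1]
      rw [Real.mul_rpow (hh t ht).1.le (hw0 t ht), hhp t ht]
      have eV : V t * h t = q t * h t - ((1 - t ^ 2) * h2 t - m * t * h1 t) := by linarith
      rw [← mul_assoc (V t), eV]
      simp only [Pi.mul_apply]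
      rw [hAρ t ht]
      field_simp
      ring
    refine ⟨fun t => h t * w t, v1, v2, ?_, fun t ht => ⟨?_, ?_, hvd t ht, hv1d t ht, ?_⟩⟩
    · have hvc : ContinuousOn (fun t => h t * w t) (Ioo 0 1) :=
        fun t ht => (hvd t ht).continuousAt.continuousWithinAt
      have hv1c : ContinuousOn v1 (Ioo 0 1) :=
        fun t ht => (hv1d t ht).continuousAt.continuousWithinAt
      refine ContinuousOn.div ?_ (by fun_prop) fun t ht => (h1t t ht).ne'
      refine ((hvc.rpow_const fun t ht => Or.inr (by linarith)).sub (hV.mul hvc)).add ?_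
      exact ContinuousOn.mul (by fun_prop) hv1c
    · have := mul_le_mul_of_nonneg_left (hwP t ht).1 (hh t ht).1.le
      simp only; linarith
    · have h3 := (hwP t ht).2.1
      rw [le_div_iff₀ (hh t ht).1] at h3
      simp only; linarith
    · have n4 := (h1t t ht).ne'
      simp only [hv2]
      field_simp
      ring
  · -- monotonicity
    intro t ht x y hx hxy hy
    have h3 := rpow_tangent hp hx hxy
    have hh0 := rpow_pos_of_pos (hh t ht).1 (p - 1)
    have h4 : y ^ (p - 1) ≤ (z t / h t) ^ (p - 1) :=
      Real.rpow_le_rpow (hx.trans hxy) hy (by linarith)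
    have h5 : p * (h t ^ (p - 1) * y ^ (p - 1)) ≤ q t := by
      refine le_trans ?_ (hqp t ht)
      rw [← hzh t ht]
      gcongr
    have h6 := mul_le_mul_of_nonneg_left h3 hh0.le
    have h7 := mul_le_mul_of_nonneg_right h5 (sub_nonneg.2 hxy)
    nlinarith
  · intro t ht
    simp [Real.zero_rpow (by linarith : p ≠ 0)]
  · -- continuity
    have f1 : ContinuousOn (fun x : ℝ × ℝ => q x.1) (Ioo (0:ℝ) 1 ×ˢ Ici 0) :=
      hq.comp continuousOn_fst fun x hx => hx.1
    have f2 : ContinuousOn (fun x : ℝ × ℝ => h x.1) (Ioo (0:ℝ) 1 ×ˢ Ici 0) :=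
      hhc.comp continuousOn_fst fun x hx => hx.1
    have f3 : ContinuousOn (fun x : ℝ × ℝ => x.2) (Ioo (0:ℝ) 1 ×ˢ Ici 0) := continuousOn_snd
    exact (f1.mul f3).sub ((f2.rpow_const fun x hx => Or.inl (hh x.1 hx.1).1.ne').mul
      (f3.rpow_const fun x hx => Or.inr (by linarith)))
  · intro t ht
    refine ((hz t ht).2.1.div (hh t ht).2.1 (hh t ht).1.ne').congr_deriv ?_
    have := (hh t ht).1.ne'
    have := (hA0 t ht).ne'
    field_simp
  · intro t ht
    refine ((hAd t ht).mul (((hh t ht).2.1.mul (hz t ht).2.2).sub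
      ((hh t ht).2.2.mul (hz t ht).2.1))).congr_deriv ?_
    simp only [Pi.mul_apply, Pi.sub_apply]
    rw [hAρ t ht]
    ring
  · intro t ht
    have n1 := (hh t ht).1.ne'
    have e1 := hhq t ht
    have e2 := hzp t ht
    have e3 : h t ^ 2 * (q t * (z t / h t) - h t ^ (p - 1) * (z t / h t) ^ p)
        = h t * (q t * z t - z t ^ p) := by
      rw [Real.div_rpow (hz t ht).1.le (hh t ht).1.le, hhp t ht]
      have := (rpow_pos_of_pos (hh t ht).1 (p - 1)).ne'
      field_simp
    have e4 : (1 - t ^ 2) * h2 t - m * t * h1 t = (q t - V t) * h t := by linarith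
    rw [mul_assoc (ρ t), e3, e4, ← mul_neg]
    refine mul_le_mul_of_nonneg_left ?_ (hρ0 t ht).le
    have := mul_le_mul_of_nonneg_left e2 (hh t ht).1.le
    nlinarith
  · intro t ht
    exact mul_nonneg (hA0 t ht).le (hwr t ht)
  · intro t ht
    rw [le_div_iff₀ (hh t ht).1]; exact hcz t ht

lemma hK_deriv (α K s t : ℝ) (ht : 0 < t) :
    HasDerivAt (fun t : ℝ => t ^ α * exp (-(K * t ^ s)))
      (t ^ α * exp (-(K * t ^ s)) * (α - K * s * t ^ s) / t) t := by
  have e1 : HasDerivAt (fun t : ℝ => t ^ α) (α * t ^ (α - 1)) t :=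
    Real.hasDerivAt_rpow_const (Or.inl ht.ne')
  have e2 : HasDerivAt (fun t : ℝ => t ^ s) (s * t ^ (s - 1)) t :=
    Real.hasDerivAt_rpow_const (Or.inl ht.ne')
  refine (e1.mul ((e2.const_mul K).neg.exp)).congr_deriv ?_
  rw [Real.rpow_sub_one ht.ne', Real.rpow_sub_one ht.ne']
  simp only [Pi.neg_apply]
  field_simp
  ring

lemma hK_deriv2 (α K s t : ℝ) (ht : 0 < t) :
    HasDerivAt (fun t : ℝ => t ^ α * exp (-(K * t ^ s)) * (α - K * s * t ^ s) / t)
      (t ^ α * exp (-(K * t ^ s)) *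
        ((α - K * s * t ^ s) ^ 2 - (α - K * s * t ^ s) - K * s ^ 2 * t ^ s) / t ^ 2) t := by
  have e2 : HasDerivAt (fun t : ℝ => t ^ s) (s * t ^ (s - 1)) t :=
    Real.hasDerivAt_rpow_const (Or.inl ht.ne')
  refine (((hK_deriv α K s t ht).mul ((e2.const_mul (K * s)).const_sub α)).div
    (hasDerivAt_id t) ht.ne').congr_deriv ?_
  rw [Real.rpow_sub_one ht.ne']
  simp only [Pi.mul_apply, id]
  field_simp
  ring

lemma hK_eq (α K s t μ m lam : ℝ) (ht : 0 < t) (hα : α ^ 2 - α + μ = 0) :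
    (1 - t ^ 2) * (t ^ α * exp (-(K * t ^ s)) *
        ((α - K * s * t ^ s) ^ 2 - (α - K * s * t ^ s) - K * s ^ 2 * t ^ s) / t ^ 2)
      - m * t * (t ^ α * exp (-(K * t ^ s)) * (α - K * s * t ^ s) / t)
      + (μ / t ^ 2 + lam) * (t ^ α * exp (-(K * t ^ s)))
    = ((1 - t ^ 2) / t ^ 2 * (K * s * t ^ s * (1 - 2 * α - s) + K ^ 2 * s ^ 2 * (t ^ s) ^ 2)
      + m * K * s * t ^ s + (lam + μ - m * α)) * (t ^ α * exp (-(K * t ^ s))) := by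
  have hμ : μ = α - α ^ 2 := by linarith
  subst hμ
  field_simp
  ring

lemma thresh (s D β : ℝ) (hs0 : 0 < s) (hs1 : s ≤ 1) (hD : 0 ≤ D) :
    ∃ N : ℝ, 0 < N ∧ ∀ t ∈ Ioo (0:ℝ) 1, D ≤ (1 - t ^ 2) / t ^ 2 * (s ^ 2 * t ^ s) + N * t ^ β := by
  set t0 : ℝ := s ^ 2 / (2 * D + 2) with ht0
  have ht0p : 0 < t0 := by positivity
  have hp0 : 0 < t0 ^ |β| := rpow_pos_of_pos ht0p _
  have ht0h : t0 ≤ 1 / 2 := by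
    rw [ht0, div_le_iff₀ (by positivity)]; nlinarith
  have ht0e : s ^ 2 = t0 * (2 * D + 2) := by rw [ht0]; field_simp
  refine ⟨(D + 1) / t0 ^ |β|, by positivity, fun t ht => ?_⟩
  have h1t : 0 < 1 - t ^ 2 := by nlinarith [ht.1, ht.2]
  have htp := ht.1
  have hn1 : 0 ≤ (1 - t ^ 2) / t ^ 2 * (s ^ 2 * t ^ s) := by positivity
  have hn2 : 0 ≤ (D + 1) / t0 ^ |β| * t ^ β := by positivity
  rcases le_total t t0 with h | h
  · have h1 : t ≤ t ^ s := by
      have := Real.rpow_le_rpow_of_exponent_ge ht.1 ht.2.le hs1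
      simpa using this
    have h2 : D ≤ (1 - t ^ 2) / t ^ 2 * (s ^ 2 * t) := by
      have e : (1 - t ^ 2) / t ^ 2 * (s ^ 2 * t) = (1 - t ^ 2) * s ^ 2 / t := by field_simp
      rw [e, le_div_iff₀ htp]
      have h3 : (3:ℝ) / 4 ≤ 1 - t ^ 2 := by nlinarith
      have h4 : (3:ℝ) / 4 * s ^ 2 ≤ (1 - t ^ 2) * s ^ 2 := by gcongr
      have h5 : D * t ≤ D * t0 := by gcongr
      nlinarith [mul_nonneg hD ht0p.le]
    have h3 : (1 - t ^ 2) / t ^ 2 * (s ^ 2 * t) ≤ (1 - t ^ 2) / t ^ 2 * (s ^ 2 * t ^ s) := by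
      gcongr
    linarith
  · have h1 : t0 ^ |β| ≤ t ^ β :=
      (Real.rpow_le_rpow ht0p.le h (abs_nonneg β)).trans
        (Real.rpow_le_rpow_of_exponent_ge ht.1 ht.2.le (le_abs_self β))
    have h2 : D + 1 ≤ (D + 1) / t0 ^ |β| * t ^ β := by
      rw [div_mul_eq_mul_div, le_div_iff₀ hp0]
      gcongr
    linarith

set_option maxHeartbeats 1000000 in
lemma core (m μ p α lam : ℝ) (hm : 1 ≤ m) (hp : 1 < p) (hα : α ^ 2 - α + μ = 0)
    (hα2 : α < 1 / 2) (hβ : -2 < α * (p - 1)) :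
    ∃ v v1 v2 : ℝ → ℝ, ∃ c1 c2 : ℝ, 0 < c1 ∧ ContinuousOn v2 (Ioo 0 1) ∧ ∀ t ∈ Ioo (0:ℝ) 1,
      c1 * t ^ α < v t ∧ v t < c2 * t ^ α ∧ HasDerivAt v (v1 t) t ∧ HasDerivAt v1 (v2 t) t ∧
      (1 - t ^ 2) * v2 t - m * t * v1 t + (μ / t ^ 2 + lam) * v t = v t ^ p := by
  set δ : ℝ := 1 - 2 * α with hδ
  have hδ0 : 0 < δ := by linarith
  obtain ⟨s, hs0, hs1, hs2, hs3⟩ : ∃ s : ℝ, 0 < s ∧ s ≤ 1 ∧ s ≤ δ / 3 ∧ s ≤ 2 + α * (p - 1) := by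
    refine ⟨min 1 (min (δ / 3) (2 + α * (p - 1))), ?_, min_le_left _ _, ?_, ?_⟩
    · exact lt_min one_pos (lt_min (by linarith) (by linarith))
    · exact (min_le_right _ _).trans (min_le_left _ _)
    · exact (min_le_right _ _).trans (min_le_right _ _)
  set D0 : ℝ := lam + μ - m * α with hD0
  obtain ⟨N, hN0, hN⟩ := thresh s |D0| (α * (p - 1)) hs0 hs1 (abs_nonneg _)
  set M : ℝ := N ^ (1 / (p - 1)) with hM
  have hp1 : 0 < p - 1 := by linarith
  have hM0 : 0 < M := rpow_pos_of_pos hN0 _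
  have hMN : M ^ (p - 1) = N := by
    rw [hM, ← Real.rpow_mul hN0.le]
    field_simp
    simp
  set C : ℝ := N * exp (p - 1) with hC
  have hC0 : 0 < C := by positivity
  set K : ℝ := (p * C + |D0|) / s ^ 2 with hK
  have hK0 : 0 ≤ K := by positivity
  have hKs : K * s ^ 2 = p * C + |D0| := by rw [hK]; field_simp
  have hr : ∀ t ∈ Ioo (0:ℝ) 1, 0 < t ^ s ∧ t ^ s ≤ 1 := fun t ht =>
    ⟨rpow_pos_of_pos ht.1 _, Real.rpow_le_one ht.1.le ht.2.le hs0.le⟩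
  let H : ℝ → ℝ → ℝ := fun K t => t ^ α * exp (-(K * t ^ s))
  let H1 : ℝ → ℝ → ℝ := fun K t => t ^ α * exp (-(K * t ^ s)) * (α - K * s * t ^ s) / t
  let H2 : ℝ → ℝ → ℝ := fun K t => t ^ α * exp (-(K * t ^ s)) *
        ((α - K * s * t ^ s) ^ 2 - (α - K * s * t ^ s) - K * s ^ 2 * t ^ s) / t ^ 2
  let Q : ℝ → ℝ → ℝ := fun K t =>
    (1 - t ^ 2) / t ^ 2 * (K * s * t ^ s * (1 - 2 * α - s) + K ^ 2 * s ^ 2 * (t ^ s) ^ 2)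
      + m * K * s * t ^ s + (lam + μ - m * α)
  have hH0 : ∀ K, ∀ t ∈ Ioo (0:ℝ) 1, 0 < H K t := fun K t ht =>
    mul_pos (rpow_pos_of_pos ht.1 _) (exp_pos _)
  have hHd : ∀ K, ∀ t ∈ Ioo (0:ℝ) 1, HasDerivAt (H K) (H1 K t) t := fun K t ht =>
    hK_deriv α K s t ht.1
  have hH1d : ∀ K, ∀ t ∈ Ioo (0:ℝ) 1, HasDerivAt (H1 K) (H2 K t) t := fun K t ht =>
    hK_deriv2 α K s t ht.1
  have hHe : ∀ K, ∀ t ∈ Ioo (0:ℝ) 1, (1 - t ^ 2) * H2 K t - m * t * H1 K t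
      + (μ / t ^ 2 + lam) * H K t = Q K t * H K t := fun K t ht =>
    hK_eq α K s t μ m lam ht.1 hα
  have hHm1 : ∀ t ∈ Ioo (0:ℝ) 1, t ^ α ≤ H (-1) t ∧ H (-1) t ≤ t ^ α * exp 1 := by
    intro t ht
    have h0 := rpow_pos_of_pos ht.1 α
    obtain ⟨r0, r1⟩ := hr t ht
    constructor
    · exact le_mul_of_one_le_right h0.le (one_le_exp (by linarith))
    · exact mul_le_mul_of_nonneg_left (exp_le_exp.2 (by linarith)) h0.le
  have hQm1 : ∀ t ∈ Ioo (0:ℝ) 1, Q (-1) t ≤ (M * H (-1) t) ^ (p - 1) := by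
    intro t ht
    obtain ⟨r0, r1⟩ := hr t ht
    have h1 := hN t ht
    have h2 : N * t ^ (α * (p - 1)) ≤ (M * H (-1) t) ^ (p - 1) := by
      rw [Real.mul_rpow hM0.le (hH0 _ t ht).le, hMN, Real.rpow_mul ht.1.le]
      refine mul_le_mul_of_nonneg_left ?_ hN0.le
      exact Real.rpow_le_rpow (rpow_pos_of_pos ht.1 α).le (hHm1 t ht).1 hp1.le
    have h1t : 0 < (1 - t ^ 2) / t ^ 2 :=
      div_pos (by nlinarith [ht.1, ht.2]) (pow_pos ht.1 2)
    have h3 : -1 * s * t ^ s * (1 - 2 * α - s) + (-1) ^ 2 * s ^ 2 * (t ^ s) ^ 2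
        ≤ -(s ^ 2 * t ^ s) := by
      have a1 : 2 * s ≤ 1 - 2 * α - s := by linarith
      have a2 := mul_le_mul_of_nonneg_left a1 (mul_pos hs0 r0).le
      have a3 := mul_le_mul_of_nonneg_left r1 (mul_nonneg (sq_nonneg s) r0.le)
      nlinarith
    have h4 := mul_le_mul_of_nonneg_left h3 h1t.le
    have h5 : 0 ≤ m * s * t ^ s := by positivity
    have h6 := le_abs_self D0
    simp only [Q]
    rw [← hD0]
    linarith
  have hqK : ∀ t ∈ Ioo (0:ℝ) 1, p * (M * H (-1) t) ^ (p - 1) ≤ Q K t := by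
    intro t ht
    obtain ⟨r0, r1⟩ := hr t ht
    have htp := ht.1
    have hst : t ^ (s - 2) = t ^ s / t ^ 2 := by
      rw [Real.rpow_sub ht.1]; norm_num
    have h1 : (M * H (-1) t) ^ (p - 1) ≤ C * (t ^ s / t ^ 2) := by
      have a1 : M * H (-1) t ≤ M * (t ^ α * exp 1) :=
        mul_le_mul_of_nonneg_left (hHm1 t ht).2 hM0.le
      refine (Real.rpow_le_rpow (mul_pos hM0 (hH0 _ t ht)).le a1 hp1.le).trans ?_
      rw [Real.mul_rpow hM0.le (by positivity), hMN,
        Real.mul_rpow (by positivity) (exp_pos 1).le, ← Real.rpow_mul ht.1.le, ← hst,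
        ← Real.exp_mul, one_mul, hC]
      have a2 : t ^ (α * (p - 1)) ≤ t ^ (s - 2) :=
        Real.rpow_le_rpow_of_exponent_ge ht.1 ht.2.le (by linarith)
      calc N * (t ^ (α * (p - 1)) * exp (p - 1)) ≤ N * (t ^ (s - 2) * exp (p - 1)) := by gcongr
        _ = N * exp (p - 1) * t ^ (s - 2) := by ring
    have h2 : 1 ≤ t ^ s / t ^ 2 := by
      rw [← hst]
      exact Real.one_le_rpow_of_pos_of_le_one_of_nonpos ht.1 ht.2.le (by linarith)
    have h1t : 0 < 1 - t ^ 2 := by nlinarith [ht.1, ht.2]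
    have h3 : K * s ^ 2 * (t ^ s / t ^ 2) ≤ (1 - t ^ 2) / t ^ 2 * (K * s * t ^ s * (1 - 2 * α - s)
        + K ^ 2 * s ^ 2 * (t ^ s) ^ 2) + m * K * s * t ^ s := by
      have a0 : s ≤ (1 - t ^ 2) * (1 - 2 * α - s) + m * t ^ 2 := by
        have b1 : s ≤ 1 - 2 * α - s := by linarith
        have b2 := mul_le_mul_of_nonneg_left b1 h1t.le
        have b3 : s * t ^ 2 ≤ m * t ^ 2 := by gcongr; linarith
        nlinarith
      have a1 : 0 ≤ (1 - t ^ 2) / t ^ 2 * (K ^ 2 * s ^ 2 * (t ^ s) ^ 2) := by positivity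
      have a2 : K * s * (t ^ s / t ^ 2) * s ≤
          K * s * (t ^ s / t ^ 2) * ((1 - t ^ 2) * (1 - 2 * α - s) + m * t ^ 2) :=
        mul_le_mul_of_nonneg_left a0 (by positivity)
      have a3 : K * s * (t ^ s / t ^ 2) * ((1 - t ^ 2) * (1 - 2 * α - s) + m * t ^ 2)
          = (1 - t ^ 2) / t ^ 2 * (K * s * t ^ s * (1 - 2 * α - s)) + m * K * s * t ^ s := by
        field_simp
      nlinarith
    have h4 := neg_abs_le D0
    have h5 : |D0| ≤ |D0| * (t ^ s / t ^ 2) := le_mul_of_one_le_right (abs_nonneg _) h2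
    have h6 := mul_le_mul_of_nonneg_left h1 (by linarith : (0:ℝ) ≤ p)
    rw [hKs] at h3
    simp only [Q]
    rw [← hD0]
    nlinarith
  have hVc : ContinuousOn (fun t : ℝ => μ / t ^ 2 + lam) (Ioo 0 1) :=
    (continuousOn_const.div (by fun_prop) fun t ht => (pow_pos ht.1 2).ne').add continuousOn_const
  have hrc : ContinuousOn (fun t : ℝ => t ^ s) (Ioo 0 1) :=
    continuousOn_id.rpow_const fun t ht => Or.inl ht.1.ne'
  have hQc : ContinuousOn (Q K) (Ioo 0 1) := by
    have f1 : ContinuousOn (fun t : ℝ => (1 - t ^ 2) / t ^ 2) (Ioo 0 1) :=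
      ContinuousOn.div (by fun_prop) (by fun_prop) fun t ht => (pow_pos ht.1 2).ne'
    exact ((f1.mul (((continuousOn_const.mul hrc).mul continuousOn_const).add
      (continuousOn_const.mul (hrc.pow 2)))).add (continuousOn_const.mul hrc)).add continuousOn_const
  obtain ⟨v, v1, v2, hv2c, hv⟩ := ode_exist m p M hp hM0.le (fun t => μ / t ^ 2 + lam) (Q K)
    (H K) (H1 K) (H2 K) (fun t => M * H (-1) t) (fun t => M * H1 (-1) t) (fun t => M * H2 (-1) t)
    hVc hQc (fun t ht => ⟨hH0 K t ht, hHd K t ht, hH1d K t ht⟩)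
    (fun t ht => ⟨mul_pos hM0 (hH0 _ t ht), (hHd _ t ht).const_mul M, (hH1d _ t ht).const_mul M⟩)
    (hHe K)
    (by
      intro t ht
      have e1 := hHe (-1) t ht
      have e2 := hQm1 t ht
      have hz0 := mul_pos hM0 (hH0 (-1) t ht)
      have e3 : (M * H (-1) t) ^ p = (M * H (-1) t) ^ (p - 1) * (M * H (-1) t) := by
        rw [← Real.rpow_add_one hz0.ne']; ring_nf
      rw [e3]
      refine le_trans (le_of_eq ?_) (mul_le_mul_of_nonneg_right e2 hz0.le)
      linear_combination M * e1)
    hqK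
    (by
      intro t ht
      have e : H K t * (M * H1 (-1) t) - H1 K t * (M * H (-1) t)
          = M * H K t * H (-1) t * ((1 + K) * s * t ^ s) / t := by
        simp only [H, H1]
        ring
      rw [e]
      have b1 := hH0 K t ht
      have b2 := hH0 (-1) t ht
      have b3 := (hr t ht).1
      have b4 := ht.1
      positivity)
    (by
      intro t ht
      have b3 := (hr t ht).1
      refine mul_le_mul_of_nonneg_left ?_ hM0.le
      refine mul_le_mul_of_nonneg_left (exp_le_exp.2 ?_) (rpow_pos_of_pos ht.1 α).le
      nlinarith [mul_nonneg hK0 b3.le])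
  refine ⟨v, v1, v2, M * exp (-K) / 2, 2 * (M * exp 1), by positivity, hv2c, fun t ht => ?_⟩
  obtain ⟨g1, g2, g3, g4, g5⟩ := hv t ht
  have h0 := rpow_pos_of_pos ht.1 α
  refine ⟨?_, ?_, g3, g4, g5⟩
  · refine lt_of_lt_of_le ?_ g1
    have b1 : t ^ α * exp (-K) ≤ H K t := by
      refine mul_le_mul_of_nonneg_left (exp_le_exp.2 ?_) h0.le
      nlinarith [mul_le_mul_of_nonneg_left (hr t ht).2 hK0]
    have b2 := mul_le_mul_of_nonneg_left b1 hM0.le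
    have b3 : 0 < M * (t ^ α * exp (-K)) := by positivity
    linarith
  · refine lt_of_le_of_lt g2 ?_
    have b2 := mul_le_mul_of_nonneg_left (hHm1 t ht).2 hM0.le
    have b3 : 0 < M * (t ^ α * exp 1) := by positivity
    linarith

/-- for `1 < p < p_KO` the angular equation has a positive solution
`v` with `c₁ t^{α₋} < v(t) < c₂ t^{α₋}` on `(0,1]`. -/
theorem stmt10 (n : ℕ) (hn : 2 ≤ n) (μ p : ℝ) (hμ : μ < 1 / 4) (hp1 : 1 < p)
    (hKO : μ < 0 → p < 1 - 2 / aMinus μ) :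
    ∃ c₁ c₂ : ℝ, 0 < c₁ ∧ c₁ < c₂ ∧ ∃ v : ℝ → ℝ,
      (∀ t ∈ Set.Ioc (0 : ℝ) 1, 0 < v t) ∧
      ContDiffOn ℝ 2 v (Set.Ioo 0 1) ∧
      (∀ t ∈ Set.Ioo (0 : ℝ) 1,
        (1 - t ^ 2) * deriv (deriv v) t - ((n : ℝ) - 1) * t * deriv v t
          + (μ / t ^ 2) * v t + Lam n (-(2 / (p - 1))) * v t = v t ^ p) ∧
      (∀ t ∈ Set.Ioc (0 : ℝ) 1, c₁ * t ^ aMinus μ < v t ∧ v t < c₂ * t ^ aMinus μ) := by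
  have hsq : 0 < Real.sqrt (1 / 4 - μ) := Real.sqrt_pos.2 (by linarith)
  have hsq2 : Real.sqrt (1 / 4 - μ) ^ 2 = 1 / 4 - μ := Real.sq_sqrt (by linarith)
  have hα : aMinus μ ^ 2 - aMinus μ + μ = 0 := by
    simp only [aMinus]; nlinarith
  have hα2 : aMinus μ < 1 / 2 := by simp only [aMinus]; linarith
  have hn' : (2:ℝ) ≤ n := by exact_mod_cast hn
  have hβ : -2 < aMinus μ * (p - 1) := by
    rcases lt_or_ge μ 0 with h | h
    · have hneg : aMinus μ < 0 := by
        by_contra hcon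
        push Not at hcon
        nlinarith
      have h1 := hKO h
      have h2 : p - 1 < -2 / aMinus μ := by
        have : -2 / aMinus μ = -(2 / aMinus μ) := by ring
        linarith
      rw [lt_div_iff_of_neg hneg] at h2
      linarith
    · have hpos : 0 ≤ aMinus μ := by
        by_contra hcon
        push Not at hcon
        nlinarith
      have : 0 ≤ aMinus μ * (p - 1) := mul_nonneg hpos (by linarith)
      linarith
  obtain ⟨v, v1, v2, c1, c2, hc1, hv2c, hv⟩ := core ((n:ℝ) - 1) μ p (aMinus μ)
    (Lam n (-(2 / (p - 1)))) (by linarith) hp1 hα hα2 hβ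
  have hc12 : c1 < c2 := by
    obtain ⟨g1, g2, -⟩ := hv (1 / 2) ⟨by norm_num, by norm_num⟩
    have h0 : (0:ℝ) < (1 / 2 : ℝ) ^ aMinus μ := rpow_pos_of_pos (by norm_num) _
    exact lt_of_mul_lt_mul_right (g1.trans g2) h0.le
  set u : ℝ → ℝ := fun t => if t < 1 then v t else (c1 + c2) / 2 with hu
  have hOo : ∀ t ∈ Ioo (0:ℝ) 1, Ioo (0:ℝ) 1 ∈ 𝓝 t := fun t ht => isOpen_Ioo.mem_nhds ht
  have huv : ∀ t ∈ Ioo (0:ℝ) 1, u t = v t := fun t ht => if_pos ht.2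
  have hud : ∀ t ∈ Ioo (0:ℝ) 1, HasDerivAt u (v1 t) t := by
    intro t ht
    refine (hv t ht).2.2.1.congr_of_eventuallyEq ?_
    filter_upwards [hOo t ht] with x hx using huv x hx
  have hud2 : ∀ t ∈ Ioo (0:ℝ) 1, HasDerivAt (deriv u) (v2 t) t := by
    intro t ht
    refine (hv t ht).2.2.2.1.congr_of_eventuallyEq ?_
    filter_upwards [hOo t ht] with x hx using (hud x hx).deriv
  have hbd : ∀ t ∈ Set.Ioc (0 : ℝ) 1, c1 * t ^ aMinus μ < u t ∧ u t < c2 * t ^ aMinus μ := by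
    intro t ht
    rcases lt_or_eq_of_le ht.2 with h | h
    · rw [huv t ⟨ht.1, h⟩]
      exact ⟨(hv t ⟨ht.1, h⟩).1, (hv t ⟨ht.1, h⟩).2.1⟩
    · subst h
      simp only [hu, lt_irrefl, if_false, Real.one_rpow]
      constructor <;> linarith
  refine ⟨c1, c2, hc1, hc12, u, ?_, ?_, ?_, hbd⟩
  · intro t ht
    exact (mul_pos hc1 (rpow_pos_of_pos ht.1 _)).trans (hbd t ht).1
  · rw [show (2 : WithTop ℕ∞) = 1 + 1 by norm_num, contDiffOn_succ_iff_deriv_of_isOpen isOpen_Ioo]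
    refine ⟨fun t ht => (hud t ht).differentiableAt.differentiableWithinAt, by simp, ?_⟩
    rw [show (1 : WithTop ℕ∞) = 0 + 1 by norm_num, contDiffOn_succ_iff_deriv_of_isOpen isOpen_Ioo]
    refine ⟨fun t ht => (hud2 t ht).differentiableAt.differentiableWithinAt, by simp, ?_⟩
    rw [contDiffOn_zero]
    exact hv2c.congr fun t ht => (hud2 t ht).deriv
  · intro t ht
    rw [(hud2 t ht).deriv, (hud t ht).deriv, huv t ht]
    have := (hv t ht).2.2.2.2
    linarith
end

section
/- Let n ≥ 2, −∞ < μ < 1/4, p > 1, and assume Λ₀ := Λ(−2/(p−1)) − Λ(α₊) > 0. Suppose w is a positive function, twice continuously differentiable on (0,1), solving (1−t²)w''(t) + (2α₊(1−t²)/t − (n−1)t)w'(t) + Λ₀ w(t) = t^{α₊(p−1)} w(t)^p for all t ∈ (0,1), and suppose w extends continuously to t = 0 with finite limit w(0). Then w(0) > 0. -/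
open Real Set

/-- if `Λ₀ := Λ(−2/(p−1)) − Λ(α₊) > 0` and `w > 0` solves the
transformed angular equation on `(0,1)` and extends continuously to `t = 0`
with finite limit `L`, then `L > 0`. -/
theorem stmt12 (n : ℕ) (hn : 2 ≤ n) (μ p : ℝ) (hμ : μ < 1 / 4) (hp1 : 1 < p)
    (hΛ : 0 < Lam n (-(2 / (p - 1))) - Lam n (aPlus μ))
    (w : ℝ → ℝ)
    (hC2 : ContDiffOn ℝ 2 w (Set.Ioo 0 1))
    (hpos : ∀ t ∈ Set.Ioo (0 : ℝ) 1, 0 < w t)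
    (hode : ∀ t ∈ Set.Ioo (0 : ℝ) 1,
      (1 - t ^ 2) * deriv (deriv w) t
        + (2 * aPlus μ * (1 - t ^ 2) / t - ((n : ℝ) - 1) * t) * deriv w t
        + (Lam n (-(2 / (p - 1))) - Lam n (aPlus μ)) * w t
        = t ^ (aPlus μ * (p - 1)) * w t ^ p)
    (L : ℝ) (hlim : Filter.Tendsto w (nhdsWithin 0 (Set.Ioi 0)) (nhds L)) :
    0 < L := by
  have ha : 1 ≤ 2 * aPlus μ := by
    unfold aPlus
    have := Real.sqrt_nonneg (1 / 4 - μ)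
    linarith
  have hn' : (0 : ℝ) ≤ ((n : ℝ) - 1) / 2 := by
    have : (2 : ℝ) ≤ n := by exact_mod_cast hn
    linarith
  generalize aPlus μ = a at *
  generalize Lam n (-(2 / (p - 1))) - Lam n a = K at *
  by_contra hL
  push Not at hL
  have hp0 : 0 < p - 1 := by linarith
  have heps : 0 < K ^ (1 / (p - 1)) := Real.rpow_pos_of_pos hΛ _
  have hev : ∀ᶠ t in nhdsWithin (0 : ℝ) (Set.Ioi 0), w t < K ^ (1 / (p - 1)) :=
    hlim.eventually (gt_mem_nhds (lt_of_le_of_lt hL heps))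
  obtain ⟨d0, hd0, hd0'⟩ := (mem_nhdsGT_iff_exists_Ioo_subset).1 hev
  have hd0pos : (0 : ℝ) < d0 := hd0
  obtain ⟨d, hd, hdd0, hd1⟩ : ∃ d : ℝ, 0 < d ∧ d ≤ d0 ∧ d ≤ 1 :=
    ⟨min d0 1, lt_min hd0pos one_pos, min_le_left _ _, min_le_right _ _⟩
  have hsub : ∀ t ∈ Set.Ioo (0 : ℝ) d, t ∈ Set.Ioo (0 : ℝ) 1 :=
    fun t ht => ⟨ht.1, lt_of_lt_of_le ht.2 hd1⟩
  have hrhs : ∀ t ∈ Set.Ioo (0 : ℝ) d, t ^ (a * (p - 1)) * w t ^ p ≤ K * w t := by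
    intro t ht
    have hw := hpos t (hsub t ht)
    have h1 : w t < K ^ (1 / (p - 1)) := hd0' ⟨ht.1, lt_of_lt_of_le ht.2 hdd0⟩
    have h2 : w t ^ (p - 1) ≤ K := by
      calc w t ^ (p - 1) ≤ (K ^ (1 / (p - 1))) ^ (p - 1) :=
            Real.rpow_le_rpow hw.le h1.le hp0.le
        _ = K := by
            rw [← Real.rpow_mul hΛ.le, one_div_mul_cancel hp0.ne', Real.rpow_one]
    have h3 : t ^ (a * (p - 1)) ≤ 1 :=
      Real.rpow_le_one ht.1.le (hsub t ht).2.le (by nlinarith)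
    have h4 : w t ^ p = w t ^ (p - 1) * w t := by
      rw [← Real.rpow_add_one hw.ne']; congr 1; ring
    have h5 : 0 < w t ^ p := Real.rpow_pos_of_pos hw _
    calc t ^ (a * (p - 1)) * w t ^ p ≤ 1 * w t ^ p := by gcongr
      _ = w t ^ (p - 1) * w t := by rw [one_mul, h4]
      _ ≤ K * w t := by gcongr
  have hw1 : ∀ t ∈ Set.Ioo (0 : ℝ) 1, HasDerivAt w (deriv w t) t := by
    intro t ht
    exact ((hC2.contDiffAt (isOpen_Ioo.mem_nhds ht)).differentiableAt (by norm_num)).hasDerivAt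
  have hw2 : ∀ t ∈ Set.Ioo (0 : ℝ) 1, HasDerivAt (deriv w) (deriv (deriv w) t) t := by
    intro t ht
    have h := ((contDiffOn_succ_iff_deriv_of_isOpen (n := 1) isOpen_Ioo).1
      (by simpa [one_add_one_eq_two] using hC2)).2.2
    exact ((h.contDiffAt (isOpen_Ioo.mem_nhds ht)).differentiableAt (by norm_num)).hasDerivAt
  obtain ⟨m, hm⟩ : ∃ m : ℝ → ℝ, m = fun t => t ^ (2 * a) * (1 - t ^ 2) ^ (((n : ℝ) - 1) / 2) :=
    ⟨_, rfl⟩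
  have hq : ∀ t ∈ Set.Ioo (0 : ℝ) 1, 0 < 1 - t ^ 2 := by
    intro t ht
    nlinarith [ht.1, ht.2]
  have hmpos : ∀ t ∈ Set.Ioo (0 : ℝ) 1, 0 < m t := by
    intro t ht
    rw [hm]
    exact mul_pos (Real.rpow_pos_of_pos ht.1 _) (Real.rpow_pos_of_pos (hq t ht) _)
  have hmle : ∀ t ∈ Set.Ioo (0 : ℝ) 1, m t ≤ t := by
    intro t ht
    rw [hm]
    have h1 : t ^ (2 * a) ≤ t := by
      calc t ^ (2 * a) ≤ t ^ (1 : ℝ) := Real.rpow_le_rpow_of_exponent_ge ht.1 ht.2.le ha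
        _ = t := Real.rpow_one t
    have h2 : (1 - t ^ 2) ^ (((n : ℝ) - 1) / 2) ≤ 1 :=
      Real.rpow_le_one (hq t ht).le (by nlinarith [ht.1]) hn'
    have h3 := Real.rpow_pos_of_pos ht.1 (2 * a)
    calc t ^ (2 * a) * (1 - t ^ 2) ^ (((n : ℝ) - 1) / 2) ≤ t ^ (2 * a) * 1 := by gcongr
      _ ≤ t := by rw [mul_one]; exact h1
  have hmd : ∀ t ∈ Set.Ioo (0 : ℝ) 1,
      HasDerivAt m (m t * (2 * a / t - ((n : ℝ) - 1) * t / (1 - t ^ 2))) t := by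
    intro t ht
    have hq' := hq t ht
    have ht0 := ht.1
    have h1 : HasDerivAt (fun t : ℝ => t ^ (2 * a)) (2 * a * t ^ (2 * a - 1)) t :=
      Real.hasDerivAt_rpow_const (Or.inl ht.1.ne')
    have h2 : HasDerivAt (fun t : ℝ => 1 - t ^ 2) (-(2 * t)) t := by
      simpa using (hasDerivAt_pow 2 t).const_sub 1
    have h3 := h2.rpow_const (p := ((n : ℝ) - 1) / 2) (Or.inl hq'.ne')
    have h4 := h1.mul h3
    rw [Real.rpow_sub_one ht0.ne', Real.rpow_sub_one hq'.ne'] at h4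
    rw [hm]
    refine h4.congr_deriv ?_
    simp only
    have := hq'.ne'
    field_simp
    ring
  have hgd : ∀ t ∈ Set.Ioo (0 : ℝ) d, ∃ y ≤ 0, HasDerivAt (fun t => m t * deriv w t) y t := by
    intro t ht
    have ht1 := hsub t ht
    refine ⟨_, ?_, (hmd t ht1).mul (hw2 t ht1)⟩
    have hq' := hq t ht1
    have ho := hode t ht1
    have hr := hrhs t ht
    have ht0 := ht.1
    have hne := hq'.ne'
    have e : m t * (2 * a / t - ((n : ℝ) - 1) * t / (1 - t ^ 2)) * deriv w t
        + m t * deriv (deriv w) t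
        = m t / (1 - t ^ 2) * ((1 - t ^ 2) * deriv (deriv w) t
        + (2 * a * (1 - t ^ 2) / t - ((n : ℝ) - 1) * t) * deriv w t) := by
      field_simp
      ring
    rw [e]
    exact mul_nonpos_of_nonneg_of_nonpos (div_pos (hmpos t ht1) hq').le (by linarith)
  have hanti : AntitoneOn (fun t => m t * deriv w t) (Set.Ioo 0 d) := by
    apply antitoneOn_of_deriv_nonpos (convex_Ioo _ _)
    · intro t ht
      obtain ⟨y, _, h⟩ := hgd t ht
      exact h.continuousAt.continuousWithinAt
    · intro t ht
      rw [interior_Ioo] at ht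
      obtain ⟨y, _, h⟩ := hgd t ht
      exact h.differentiableAt.differentiableWithinAt
    · intro t ht
      rw [interior_Ioo] at ht
      obtain ⟨y, hy, h⟩ := hgd t ht
      rw [h.deriv]; exact hy
  have hneg : ∀ s ∈ Set.Ioo (0 : ℝ) d, deriv w s ≤ 0 := by
    intro s hs
    by_contra hcon
    push Not at hcon
    obtain ⟨c, hc⟩ : ∃ c, c = m s * deriv w s := ⟨_, rfl⟩
    have hcpos : 0 < c := hc ▸ mul_pos (hmpos s (hsub s hs)) hcon
    have hsubs : ∀ t ∈ Set.Ioc (0 : ℝ) s, t ∈ Set.Ioo (0 : ℝ) d :=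
      fun t ht => ⟨ht.1, lt_of_le_of_lt ht.2 hs.2⟩
    have hfd : ∀ t ∈ Set.Ioc (0 : ℝ) s,
        HasDerivAt (fun t => w t - c * Real.log t) (deriv w t - c * t⁻¹) t := by
      intro t ht
      exact (hw1 t (hsub t (hsubs t ht))).sub ((Real.hasDerivAt_log ht.1.ne').const_mul c)
    have hmono : MonotoneOn (fun t => w t - c * Real.log t) (Set.Ioc 0 s) := by
      apply monotoneOn_of_deriv_nonneg (convex_Ioc _ _)
      · intro t ht
        exact (hfd t ht).continuousAt.continuousWithinAt
      · intro t ht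
        exact (hfd t (interior_subset ht)).differentiableAt.differentiableWithinAt
      · intro t ht
        have ht' := interior_subset ht
        have ht1 := hsub t (hsubs t ht')
        rw [(hfd t ht').deriv]
        have h1 : c ≤ m t * deriv w t := hc ▸ hanti (hsubs t ht') hs ht'.2
        have h2 : 0 < deriv w t := by
          have := hmpos t ht1
          by_contra h
          push Not at h
          nlinarith
        have h3 : c ≤ t * deriv w t :=
          h1.trans (mul_le_mul_of_nonneg_right (hmle t ht1) h2.le)
        have : c * t⁻¹ ≤ deriv w t := by
          rw [← div_eq_mul_inv, div_le_iff₀ ht1.1]; linarith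
        linarith
    obtain ⟨t, ht⟩ : ∃ t, t = s * Real.exp (-(w s / c)) := ⟨_, rfl⟩
    have hws := hpos s (hsub s hs)
    have htpos : 0 < t := ht ▸ mul_pos hs.1 (Real.exp_pos _)
    have hts : t ≤ s := by
      rw [ht]
      have : Real.exp (-(w s / c)) ≤ 1 := Real.exp_le_one_iff.2 (by have := div_pos hws hcpos; linarith)
      exact mul_le_of_le_one_right hs.1.le this
    have h := hmono ⟨htpos, hts⟩ ⟨hs.1, le_rfl⟩ hts
    simp only at h
    have hl : Real.log t = Real.log s - w s / c := by
      rw [ht, Real.log_mul hs.1.ne' (Real.exp_pos _).ne', Real.log_exp]; ring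
    rw [hl, mul_sub, mul_div_cancel₀ _ hcpos.ne'] at h
    have := hpos t (hsub t (hsubs t ⟨htpos, hts⟩))
    linarith
  have hwanti : AntitoneOn w (Set.Ioo 0 d) := by
    apply antitoneOn_of_deriv_nonpos (convex_Ioo _ _)
    · intro t ht
      exact (hw1 t (hsub t ht)).continuousAt.continuousWithinAt
    · intro t ht
      exact (hw1 t (hsub t (interior_subset ht))).differentiableAt.differentiableWithinAt
    · intro t ht
      exact hneg t (interior_subset ht)
  have hd2 : d / 2 ∈ Set.Ioo (0 : ℝ) d := ⟨by linarith, by linarith⟩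
  have hge : w (d / 2) ≤ L := by
    apply ge_of_tendsto hlim
    filter_upwards [Ioo_mem_nhdsGT hd2.1] with t ht
    exact hwanti ⟨ht.1, ht.2.trans hd2.2⟩ hd2 ht.2.le
  have := hpos _ (hsub _ hd2)
  linarith
end

section
/- (Phragmén–Lindelöf type estimate.) Let n ≥ 2, μ < 1/4 and R > 0. Let h ∈ C²(ℝⁿ₊ ∩ B_R(0)) satisfy Δh + (μ/x₁²)h ≥ 0 on ℝⁿ₊ ∩ B_R(0) (h is L_μ-subharmonic). Assume: (a) there exist ρ ∈ (0,R) and C_ρ > 0 such that h(x) ≤ C_ρ x₁^{α₊} for all x ∈ ℝⁿ₊ with ρ < |x| < R; and (b) for every ε > 0 there exists δ > 0 such that h(x) ≤ ε ( x₁^{α₋} + x₁^{α₊} |x|^{−(n−2+2α₊)} ) for all x ∈ ℝⁿ₊ ∩ B_R(0) with 0 < x₁ < δ. Then there exists C > 0 such that h(x) ≤ C x₁^{α₊} for all x ∈ ℝⁿ₊ ∩ B_R(0) with x₁ sufficiently small. -/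
open Real Set

open Filter Topology

/-- Second derivative test: at a local maximum the second derivative is nonpositive. -/
lemma second_deriv_test (f f' : ℝ → ℝ) (c : ℝ) (h1 : ∀ᶠ t in 𝓝 (0:ℝ), HasDerivAt f (f' t) t)
    (h2 : HasDerivAt f' c 0) (hmax : IsLocalMax f 0) : c ≤ 0 := by
  by_contra hc
  push Not at hc
  have e1 : deriv f =ᶠ[𝓝 0] f' := h1.mono fun t ht => ht.deriv
  have hd2 : deriv (deriv f) 0 = c := by rw [e1.deriv_eq]; exact h2.deriv
  have hd1 : deriv f 0 = 0 := hmax.deriv_eq_zero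
  have hmin : IsLocalMin f 0 :=
    isLocalMin_of_deriv_deriv_pos (by rw [hd2]; exact hc) hd1 h1.self_of_nhds.continuousAt
  have hconst : f =ᶠ[𝓝 0] fun _ => f 0 := by
    filter_upwards [hmin, hmax] with t ha hb using le_antisymm hb ha
  have : deriv (deriv f) 0 = 0 := by
    have e2 := hconst.deriv
    rw [e2.deriv_eq]; simp
  linarith

lemma line_deriv {n : ℕ} (h : EuclideanSpace ℝ (Fin n) → ℝ) (U : Set (EuclideanSpace ℝ (Fin n)))
    (hU : IsOpen U) (hC : ContDiffOn ℝ 2 h U) (x e : EuclideanSpace ℝ (Fin n)) (hx : x ∈ U) :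
    (∀ᶠ t in 𝓝 (0:ℝ), HasDerivAt (fun t : ℝ => h (x + t • e)) (fderiv ℝ h (x + t • e) e) t) ∧
    HasDerivAt (fun t : ℝ => fderiv ℝ h (x + t • e) e) (iteratedFDeriv ℝ 2 h x ![e, e]) 0 := by
  have hl : ∀ t : ℝ, HasDerivAt (fun t : ℝ => x + t • e) e t := fun t => by
    simpa using ((hasDerivAt_id t).smul_const e).const_add x
  have hcont : Tendsto (fun t : ℝ => x + t • e) (𝓝 0) (𝓝 x) := by
    have := (hl 0).continuousAt.tendsto
    simpa using this
  constructor
  · filter_upwards [hcont (hU.mem_nhds hx)] with t ht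
    have hd : DifferentiableAt ℝ h (x + t • e) :=
      ((hC.contDiffAt (hU.mem_nhds ht)).differentiableAt (by norm_num))
    exact hd.hasFDerivAt.comp_hasDerivAt t (hl t)
  · have hc : ContDiffAt ℝ 1 (fderiv ℝ h) x :=
      (hC.contDiffAt (hU.mem_nhds hx)).fderiv_right (by norm_num)
    have hd : HasFDerivAt (fderiv ℝ h) (fderiv ℝ (fderiv ℝ h) x) (x + (0:ℝ) • e) := by
      have := (hc.differentiableAt (by norm_num)).hasFDerivAt
      simpa using this
    have h2 : HasDerivAt (fun t : ℝ => fderiv ℝ h (x + t • e)) (fderiv ℝ (fderiv ℝ h) x e) 0 :=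
      hd.comp_hasDerivAt (0:ℝ) (hl 0)
    have h3 := (ContinuousLinearMap.apply ℝ ℝ e).hasFDerivAt.comp_hasDerivAt (0:ℝ) h2
    rw [iteratedFDeriv_two_apply]
    exact h3

lemma lin_rpow (s d a : ℝ) (t : ℝ) (ht : 0 < s + t * d) :
    HasDerivAt (fun t : ℝ => (s + t * d) ^ a) (a * d * (s + t * d) ^ (a - 1)) t := by
  have h0 : HasDerivAt (fun t : ℝ => s + t * d) d t := by
    simpa using ((hasDerivAt_id t).mul_const d).const_add s
  have := h0.rpow_const (p := a) (Or.inl ht.ne')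
  convert this using 1; ring

lemma quad_rpow (q p m : ℝ) (t : ℝ) (ht : 0 < q + 2 * t * p + t ^ 2) :
    HasDerivAt (fun t : ℝ => (q + 2 * t * p + t ^ 2) ^ m)
      (m * (2 * p + 2 * t) * (q + 2 * t * p + t ^ 2) ^ (m - 1)) t := by
  have h0 : HasDerivAt (fun t : ℝ => q + 2 * t * p + t ^ 2) (2 * p + 2 * t) t := by
    have h1 : HasDerivAt (fun t : ℝ => q + 2 * t * p) (2 * p) t := by
      simpa using (((hasDerivAt_id t).const_mul 2).mul_const p).const_add q
    refine (h1.add (hasDerivAt_pow 2 t)).congr_deriv ?_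
    norm_num
  have := h0.rpow_const (p := m) (Or.inl ht.ne')
  convert this using 1; ring

/-- The barrier along a line. -/
lemma barrier_line (s d q p a b m C ε M : ℝ) (hs : 0 < s) (hq : 0 < q) :
    ∃ g' : ℝ → ℝ,
    (∀ᶠ t in 𝓝 (0:ℝ), HasDerivAt (fun t : ℝ => C * (s + t * d) ^ a + ε * ((s + t * d) ^ b
        + (s + t * d) ^ a * (q + 2 * t * p + t ^ 2) ^ m) + M * (s + t * d) ^ (1/2:ℝ)) (g' t) t) ∧
    HasDerivAt g' (C * (a * (a - 1) * d ^ 2 * s ^ (a - 2)) + ε * (b * (b - 1) * d ^ 2 * s ^ (b - 2)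
      + (a * (a - 1) * d ^ 2 * s ^ (a - 2) * q ^ m
        + 4 * a * m * (d * p) * s ^ (a - 1) * q ^ (m - 1)
        + s ^ a * (4 * m * (m - 1) * p ^ 2 * q ^ (m - 2) + 2 * m * q ^ (m - 1))))
      + M * (-1/4 * d ^ 2 * s ^ (1/2 - 2:ℝ))) 0 := by
  have hs0 : 0 < s + 0 * d := by simpa using hs
  have hq0 : 0 < q + 2 * 0 * p + 0 ^ 2 := by simpa using hq
  have es : ∀ᶠ t in 𝓝 (0:ℝ), 0 < s + t * d := by
    have : ContinuousAt (fun t : ℝ => s + t * d) 0 := by fun_prop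
    exact this.eventually (lt_mem_nhds hs0)
  have eq : ∀ᶠ t in 𝓝 (0:ℝ), 0 < q + 2 * t * p + t ^ 2 := by
    have : ContinuousAt (fun t : ℝ => q + 2 * t * p + t ^ 2) 0 := by fun_prop
    exact this.eventually (lt_mem_nhds hq0)
  refine ⟨fun t => C * (a * d * (s + t * d) ^ (a - 1)) + ε * (b * d * (s + t * d) ^ (b - 1)
        + (a * d * (s + t * d) ^ (a - 1) * (q + 2 * t * p + t ^ 2) ^ m +
          (s + t * d) ^ a * (m * (2 * p + 2 * t) * (q + 2 * t * p + t ^ 2) ^ (m - 1))))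
        + M * ((1/2) * d * (s + t * d) ^ (1/2 - 1:ℝ)), ?_, ?_⟩
  · filter_upwards [es, eq] with t h1 h2
    exact (((lin_rpow s d a t h1).const_mul C).add (((lin_rpow s d b t h1).add
      ((lin_rpow s d a t h1).mul (quad_rpow q p m t h2))).const_mul ε)).add
      ((lin_rpow s d (1/2) t h1).const_mul M)
  · have hl : HasDerivAt (fun t : ℝ => m * (2 * p + 2 * t)) (m * 2) 0 := by
      simpa using (((hasDerivAt_id (0:ℝ)).const_mul 2).const_add (2 * p)).const_mul m
    have := ((((lin_rpow s d (a-1) 0 hs0).const_mul (a * d)).const_mul C).add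
      ((((lin_rpow s d (b-1) 0 hs0).const_mul (b * d)).add
      ((((lin_rpow s d (a-1) 0 hs0).const_mul (a * d)).mul (quad_rpow q p m 0 hq0)).add
       ((lin_rpow s d a 0 hs0).mul (hl.mul (quad_rpow q p (m-1) 0 hq0))))).const_mul ε)).add
      (((lin_rpow s d (1/2-1) 0 hs0).const_mul ((1/2) * d)).const_mul M)
    refine this.congr_deriv ?_
    have r1 : a - 1 - 1 = a - 2 := by ring
    have r2 : b - 1 - 1 = b - 2 := by ring
    have r3 : m - 1 - 1 = m - 2 := by ring
    have r4 : (1/2 - 1 - 1 : ℝ) = 1/2 - 2 := by ring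
    rw [r1, r2, r3, r4]
    simp only [Pi.mul_apply, zero_mul, mul_zero, add_zero, ne_eq, OfNat.ofNat_ne_zero, not_false_eq_true, zero_pow]
    ring

set_option maxHeartbeats 1000000 in
theorem stmt13 (n : ℕ) (hn : 2 ≤ n) (μ R : ℝ) (hμ : μ < 1 / 4) (hR : 0 < R)
    (h : EuclideanSpace ℝ (Fin n) → ℝ)
    (hC2 : ContDiffOn ℝ 2 h (halfSpace n ∩ Metric.ball 0 R))
    (hsub : ∀ x ∈ halfSpace n ∩ Metric.ball 0 R, 0 ≤ lap h x + (μ / (x1 x) ^ 2) * h x)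
    (ha : ∃ ρ ∈ Set.Ioo (0 : ℝ) R, ∃ C > (0 : ℝ), ∀ x ∈ halfSpace n,
      ρ < ‖x‖ → ‖x‖ < R → h x ≤ C * x1 x ^ aPlus μ)
    (hb : ∀ ε > (0 : ℝ), ∃ δ > (0 : ℝ), ∀ x ∈ halfSpace n ∩ Metric.ball 0 R, x1 x < δ →
      h x ≤ ε * (x1 x ^ aMinus μ + x1 x ^ aPlus μ * ‖x‖ ^ (-((n : ℝ) - 2 + 2 * aPlus μ)))) :
    ∃ C > (0 : ℝ), ∃ δ > (0 : ℝ), ∀ x ∈ halfSpace n ∩ Metric.ball 0 R, x1 x < δ →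
      h x ≤ C * x1 x ^ aPlus μ := by
  obtain ⟨ρ, ⟨hρ0, hρR⟩, C, hC, ha⟩ := ha
  have hn0 : 0 < n := by omega
  have hx1 : ∀ x : EuclideanSpace ℝ (Fin n), x1 x = x ⟨0, hn0⟩ := fun x => by simp [x1, hn0]
  set i0 : Fin n := ⟨0, hn0⟩ with hi0
  have hx1c : Continuous (x1 : EuclideanSpace ℝ (Fin n) → ℝ) := by
    have : (x1 : EuclideanSpace ℝ (Fin n) → ℝ) = fun x => x i0 := funext hx1
    rw [this]; fun_prop
  have hsq : Real.sqrt (1/4 - μ) ^ 2 = 1/4 - μ := Real.sq_sqrt (by linarith)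
  have haeq : aPlus μ * (aPlus μ - 1) = -μ := by unfold aPlus; nlinarith
  have hbeq : aMinus μ * (aMinus μ - 1) = -μ := by unfold aMinus; nlinarith
  generalize aPlus μ = a at *
  generalize aMinus μ = b at *
  set U := halfSpace n ∩ Metric.ball (0 : EuclideanSpace ℝ (Fin n)) R with hUdef
  have hU : IsOpen U := (isOpen_lt continuous_const hx1c).inter Metric.isOpen_ball
  set k : ℝ := (n : ℝ) - 2 + 2 * a with hk
  have hne : ∀ x ∈ U, 0 < ‖x‖ := by
    intro x hx
    rw [norm_pos_iff]
    rintro rfl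
    have := hx.1
    simp [halfSpace, hx1] at this
  -- the key claim
  have key : ∀ ε > (0:ℝ), ∀ x ∈ U, h x ≤ C * x1 x ^ a + ε * (x1 x ^ b + x1 x ^ a * ‖x‖ ^ (-k)) := by
    intro ε hε
    obtain ⟨δ, hδ, hb⟩ := hb ε hε
    set W : EuclideanSpace ℝ (Fin n) → ℝ :=
      fun x => C * x1 x ^ a + ε * (x1 x ^ b + x1 x ^ a * ‖x‖ ^ (-k)) with hW
    by_contra! hcon
    obtain ⟨xs, hxs, hxsW⟩ := hcon
    set K : Set (EuclideanSpace ℝ (Fin n)) := {x | δ ≤ x1 x} ∩ Metric.closedBall 0 ρ with hK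
    have hKc : IsCompact K := by
      apply IsCompact.inter_left (isCompact_closedBall _ _)
      exact isClosed_le continuous_const hx1c
    have hKU : K ⊆ U := by
      intro y hy
      refine ⟨lt_of_lt_of_le hδ hy.1, ?_⟩
      have := hy.2
      rw [mem_closedBall_zero_iff] at this
      rw [mem_ball_zero_iff]; linarith
    have hout : ∀ y ∈ U, y ∉ K → h y ≤ W y := by
      intro y hy hyK
      have hs : 0 < x1 y := hy.1
      have t1 : 0 ≤ C * x1 y ^ a := by positivity
      have t2 : 0 ≤ ε * (x1 y ^ b + x1 y ^ a * ‖y‖ ^ (-k)) := by positivity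
      by_cases hd : x1 y < δ
      · have := hb y hy hd
        simp only [hW]; linarith
      · have hr : ρ < ‖y‖ := by
          by_contra hr
          exact hyK ⟨not_lt.1 hd, by rw [mem_closedBall_zero_iff]; exact not_lt.1 hr⟩
        have := ha y hy.1 hr (by simpa using hy.2)
        simp only [hW]; linarith
    have hxsK : xs ∈ K := by
      by_contra hh
      exact absurd (hout xs hxs hh) (not_le.2 hxsW)
    have hwc : ContinuousOn (fun x => (h x - W x) / x1 x ^ (1/2:ℝ)) K := by
      have hp : ∀ c : ℝ, ContinuousOn (fun x : EuclideanSpace ℝ (Fin n) => x1 x ^ c) K := fun c =>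
        hx1c.continuousOn.rpow_const fun x hx => Or.inl (ne_of_gt (hKU hx).1)
      have hq : ContinuousOn (fun x : EuclideanSpace ℝ (Fin n) => ‖x‖ ^ (-k)) K :=
        continuous_norm.continuousOn.rpow_const fun x hx => Or.inl (hne x (hKU hx)).ne'
      refine ContinuousOn.div ((hC2.continuousOn.mono hKU).sub ?_) (hp _) ?_
      · exact (continuousOn_const.mul (hp a)).add
          (continuousOn_const.mul ((hp b).add ((hp a).mul hq)))
      · intro x hx
        have : 0 < x1 x := (hKU hx).1
        positivity
    obtain ⟨x0, hx0K, hx0max⟩ := hKc.exists_isMaxOn ⟨xs, hxsK⟩ hwc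
    have hx0 := hKU hx0K
    set M := (h x0 - W x0) / x1 x0 ^ (1/2:ℝ) with hM
    have hMpos : 0 < M := by
      have h1 := hx0max hxsK
      have hs : 0 < x1 xs := hxs.1
      have h2 : 0 < (h xs - W xs) / x1 xs ^ (1/2:ℝ) := by
        apply div_pos (by simp only [hW]; linarith) (by positivity)
      exact lt_of_lt_of_le h2 h1
    have hle : ∀ y ∈ U, h y - (W y + M * x1 y ^ (1/2:ℝ)) ≤ 0 := by
      intro y hy
      have hs : 0 < x1 y := hy.1
      have hsp : 0 < x1 y ^ (1/2:ℝ) := by positivity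
      by_cases hyK : y ∈ K
      · have h1 : (h y - W y) / x1 y ^ (1/2:ℝ) ≤ M := hx0max hyK
        rw [div_le_iff₀ hsp] at h1
        linarith
      · have := hout y hy hyK
        nlinarith
    have hs : 0 < x1 x0 := hx0.1
    have heq : h x0 = W x0 + M * x1 x0 ^ (1/2:ℝ) := by
      have : x1 x0 ^ (1/2:ℝ) ≠ 0 := by positivity
      rw [hM]; field_simp; ring
    set s := x1 x0 with hsdef
    set q := ‖x0‖ ^ 2 with hqdef
    have hq : 0 < q := by have := hne x0 hx0; positivity
    set m : ℝ := -k / 2 with hm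
    have hnormpow : ∀ y : EuclideanSpace ℝ (Fin n), ‖y‖ ^ (-k) = (‖y‖ ^ 2) ^ m := by
      intro y
      rw [← Real.rpow_natCast ‖y‖ 2, ← Real.rpow_mul (norm_nonneg _)]
      congr 1
      rw [hm]; push_cast; ring
    -- coordinate inequality
    have hcoord : ∀ i : Fin n, iteratedFDeriv ℝ 2 h x0
        ![EuclideanSpace.single i 1, EuclideanSpace.single i 1] ≤
        (C * (a * (a - 1) * (if i = i0 then (1:ℝ) else 0) ^ 2 * s ^ (a - 2)) +
          ε * (b * (b - 1) * (if i = i0 then (1:ℝ) else 0) ^ 2 * s ^ (b - 2)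
      + (a * (a - 1) * (if i = i0 then (1:ℝ) else 0) ^ 2 * s ^ (a - 2) * q ^ m
        + 4 * a * m * ((if i = i0 then (1:ℝ) else 0) * x0 i) * s ^ (a - 1) * q ^ (m - 1)
        + s ^ a * (4 * m * (m - 1) * (x0 i) ^ 2 * q ^ (m - 2) + 2 * m * q ^ (m - 1))))
      + M * (-1/4 * (if i = i0 then (1:ℝ) else 0) ^ 2 * s ^ (1/2 - 2:ℝ))) := by
      intro i
      obtain ⟨g', hg1, hg2⟩ := barrier_line s (if i = i0 then (1:ℝ) else 0) q (x0 i) a b m C ε M hs hq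
      obtain ⟨hh1, hh2⟩ := line_deriv h U hU hC2 x0 (EuclideanSpace.single i 1) hx0
      rw [← sub_nonpos]
      refine second_deriv_test _ _ _ (hh1.and hg1 |>.mono fun t ht => ht.1.sub ht.2)
        (hh2.sub hg2) ?_
      have hlx : ∀ t : ℝ, x1 (x0 + t • EuclideanSpace.single i (1:ℝ)) =
          s + t * (if i = i0 then (1:ℝ) else 0) := by
        intro t
        rw [hsdef, hx1, hx1]
        simp [Pi.single_apply, eq_comm]
      have hlq : ∀ t : ℝ, ‖x0 + t • EuclideanSpace.single i (1:ℝ)‖ ^ 2 =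
          q + 2 * t * x0 i + t ^ 2 := by
        intro t
        rw [norm_add_sq_real, inner_smul_right, norm_smul]
        simp [EuclideanSpace.inner_single_right, hqdef]
        ring
      have hcont : Tendsto (fun t : ℝ => x0 + t • EuclideanSpace.single i (1:ℝ)) (𝓝 0) (𝓝 x0) := by
        have : Continuous (fun t : ℝ => x0 + t • EuclideanSpace.single i (1:ℝ)) := by fun_prop
        simpa using this.tendsto 0
      have hform : ∀ t : ℝ, W (x0 + t • EuclideanSpace.single i (1:ℝ)) + M * x1 (x0 + t • EuclideanSpace.single i (1:ℝ)) ^ (1/2:ℝ) = C * (s + t * (if i = i0 then (1:ℝ) else 0)) ^ a + ε * ((s + t * (if i = i0 then (1:ℝ) else 0)) ^ b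
        + (s + t * (if i = i0 then (1:ℝ) else 0)) ^ a * (q + 2 * t * x0 i + t ^ 2) ^ m) + M * (s + t * (if i = i0 then (1:ℝ) else 0)) ^ (1/2:ℝ) := by
        intro t
        simp only [hW]
        rw [hnormpow, hlx, hlq]
      filter_upwards [hcont (hU.mem_nhds hx0)] with t ht
      have h1 := hle _ ht
      simp only [Pi.sub_apply]
      rw [← hform t, ← hform 0]
      simp only [zero_smul, add_zero]
      have h2 : h x0 - (W x0 + M * x1 x0 ^ (1/2:ℝ)) = 0 := by rw [heq]; ring
      linarith
    have hsum := Finset.sum_le_sum fun i (_ : i ∈ Finset.univ) => hcoord i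
    have hd2 : ∑ i : Fin n, (if i = i0 then (1:ℝ) else 0) ^ 2 = 1 := by simp
    have hdp : ∑ i : Fin n, (if i = i0 then (1:ℝ) else 0) * x0 i = s := by
      simp [hsdef, hx1]
    have hp2 : ∑ i : Fin n, (x0 i) ^ 2 = q := by
      rw [hqdef, EuclideanSpace.norm_sq_eq]; simp
    have hlap : lap h x0 ≤ C * (a * (a - 1) * s ^ (a - 2)) +
          ε * (b * (b - 1) * s ^ (b - 2)
      + (a * (a - 1) * s ^ (a - 2) * q ^ m
        + 4 * a * m * s * s ^ (a - 1) * q ^ (m - 1)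
        + s ^ a * (4 * m * (m - 1) * q * q ^ (m - 2) + n * (2 * m * q ^ (m - 1)))))
      + M * (-1/4 * s ^ (1/2 - 2:ℝ)) := by
      refine hsum.trans (le_of_eq ?_)
      simp only [Finset.sum_add_distrib, ← Finset.mul_sum, ← Finset.sum_mul, hd2, hdp, hp2,
        Finset.sum_const, Finset.card_univ, Fintype.card_fin, nsmul_eq_mul]
      ring
    have hsub0 := hsub x0 hx0
    have q1 : q ^ (m - 1) = q ^ m / q := by rw [Real.rpow_sub_one hq.ne']
    have q2 : q ^ (m - 2) = q ^ m / q ^ 2 := by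
      rw [Real.rpow_sub hq]; norm_cast
    have s2 : ∀ c : ℝ, s ^ (c - 2) = s ^ c / s ^ 2 := by
      intro c
      rw [Real.rpow_sub hs]; norm_cast
    have s1 : s ^ (a - 1) = s ^ a / s := by rw [Real.rpow_sub_one hs.ne']
    have hv : 0 < s ^ (1/2:ℝ) := by positivity
    have hWx : W x0 = C * s ^ a + ε * (s ^ b + s ^ a * q ^ m) := by
      simp only [hW]; rw [hnormpow]
    rw [heq, hWx] at hsub0
    rw [← hsdef] at hsub0
    rw [s2 a, s2 b, s2 (1/2), s1, q1, q2, haeq, hbeq] at hlap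
    have hzero : 4 * a * m * s * (s ^ a / s) * (q ^ m / q)
        + s ^ a * (4 * m * (m - 1) * q * (q ^ m / q ^ 2) + n * (2 * m * (q ^ m / q))) = 0 := by
      have : 4 * a * m * s * (s ^ a / s) * (q ^ m / q)
        + s ^ a * (4 * m * (m - 1) * q * (q ^ m / q ^ 2) + n * (2 * m * (q ^ m / q)))
        = s ^ a * (q ^ m / q) * (2 * m) * (2 * a + 2 * (m - 1) + n) := by
        field_simp; ring
      rw [this, show 2 * a + 2 * (m - 1) + n = 0 by rw [hm, hk]; ring, mul_zero]
    have hfin : 0 ≤ M * (s ^ (1/2:ℝ) / s ^ 2) * (μ - 1/4) := by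
      have e : (-μ * (s ^ a / s ^ 2) * q ^ m + 4 * a * m * s * (s ^ a / s) * (q ^ m / q)
        + s ^ a * (4 * m * (m - 1) * q * (q ^ m / q ^ 2) + n * (2 * m * (q ^ m / q))))
          = -μ * (s ^ a / s ^ 2) * q ^ m := by linarith
      rw [e] at hlap
      have := add_le_add_left hlap (μ / s ^ 2 * (C * s ^ a + ε * (s ^ b + s ^ a * q ^ m) + M * s ^ (1/2:ℝ)))
      refine (hsub0.trans this).trans (le_of_eq ?_)
      ring
    have : 0 < M * (s ^ (1/2:ℝ) / s ^ 2) := by positivity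
    exact absurd hfin (not_le.2 (mul_neg_of_pos_of_neg this (by linarith)))
  refine ⟨C, hC, 1, one_pos, fun x hx _ => ?_⟩
  have hs : 0 < x1 x := hx.1
  have hr := hne x hx
  set T := x1 x ^ b + x1 x ^ a * ‖x‖ ^ (-k) with hT
  have hTp : 0 < T := by positivity
  refine le_of_forall_pos_le_add fun η hη => ?_
  have := key (η / T) (by positivity) x hx
  rw [← hT, div_mul_cancel₀ _ hTp.ne'] at this
  exact this
end

section
/- (Keller–Osserman type bound.) Let n ≥ 2, μ < 1/4, p > 1 and R > 0. Then there exists a constant C > 0, depending only on n, μ, p and R (in particular independent of the solution), such that every positive u ∈ C²(ℝⁿ₊ ∩ B_R(0)) satisfying Δu + (μ/x₁²)u = u^p on ℝⁿ₊ ∩ B_R(0) obeys u(x) ≤ C x₁^{−2/(p−1)} for all x ∈ ℝⁿ₊ ∩ B_{R/2}(0). -/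
open Real Set

/-- One-dimensional second-order comparison at a touching point. -/
lemma second_deriv_touch {f g f' g' : ℝ → ℝ} {a b : ℝ}
    (hf : ∀ᶠ t in nhds (0 : ℝ), HasDerivAt f (f' t) t) (hf' : HasDerivAt f' a 0)
    (hg : ∀ᶠ t in nhds (0 : ℝ), HasDerivAt g (g' t) t) (hg' : HasDerivAt g' b 0)
    (hmax : IsLocalMax (fun t => f t - g t) 0) : a ≤ b := by
  by_contra! hab
  have hd : ∀ᶠ t in nhds (0 : ℝ), HasDerivAt (fun t => f t - g t) (f' t - g' t) t := by
    filter_upwards [hf, hg] with t h1 h2 using h1.sub h2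
  have hde : deriv (fun t => f t - g t) =ᶠ[nhds 0] fun t => f' t - g' t := by
    filter_upwards [hd] with t h using h.deriv
  have hdd : deriv (deriv (fun t => f t - g t)) 0 = a - b := by
    rw [hde.deriv_eq]
    exact (hf'.sub hg').deriv
  have hmin := isLocalMin_of_deriv_deriv_pos (f := fun t => f t - g t) (x₀ := 0)
    (by rw [hdd]; linarith) hmax.deriv_eq_zero hd.self_of_nhds.continuousAt
  have hc : (fun t => f t - g t) =ᶠ[nhds 0] fun _ => f 0 - g 0 := by
    filter_upwards [hmin, hmax] with t h1 h2 using le_antisymm h2 h1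
  have h0 : deriv (deriv (fun t => f t - g t)) 0 = 0 := by
    rw [hc.deriv.deriv_eq]
    simp
  linarith

lemma line_deriv2 {E : Type*} [NormedAddCommGroup E] [NormedSpace ℝ E] {u : E → ℝ} {y : E}
    (hu : ContDiffAt ℝ 2 u y) (e : E) :
    (∀ᶠ t in nhds (0 : ℝ), HasDerivAt (fun t : ℝ => u (y + t • e)) (fderiv ℝ u (y + t • e) e) t) ∧
    HasDerivAt (fun t : ℝ => fderiv ℝ u (y + t • e) e) (iteratedFDeriv ℝ 2 u y ![e, e]) 0 := by
  have hl : ∀ t : ℝ, HasDerivAt (fun t : ℝ => y + t • e) e t := fun t => by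
    simpa using ((hasDerivAt_id t).smul_const e).const_add y
  have hy : y + (0 : ℝ) • e = y := by simp
  have ht : Filter.Tendsto (fun t : ℝ => y + t • e) (nhds 0) (nhds y) := by
    have := (hl 0).continuousAt
    simpa [ContinuousAt] using this
  constructor
  · have h1 : ∀ᶠ z in nhds y, ContDiffAt ℝ 2 u z := hu.eventually (by simp)
    filter_upwards [ht.eventually h1] with t h
    exact (h.differentiableAt (by simp)).hasFDerivAt.comp_hasDerivAt t (hl t)
  · have h2 : DifferentiableAt ℝ (fderiv ℝ u) y :=
      (hu.fderiv_right (m := 1) (by norm_num)).differentiableAt (by simp)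
    have h3 : HasFDerivAt (fderiv ℝ u) (fderiv ℝ (fderiv ℝ u) y) (y + (0 : ℝ) • e) := by
      rw [hy]; exact h2.hasFDerivAt
    have hgen : ∀ (F : E → ℝ) (F' : E →L[ℝ] ℝ), HasFDerivAt F F' (y + (0 : ℝ) • e) →
        HasDerivAt (fun t : ℝ => F (y + t • e)) (F' e) 0 :=
      fun F F' h => HasFDerivAt.comp_hasDerivAt (l := F) (0 : ℝ) h (hl 0)
    have h5 : HasFDerivAt (fun z => fderiv ℝ u z e)
        ((ContinuousLinearMap.apply ℝ ℝ e).comp (fderiv ℝ (fderiv ℝ u) y)) (y + (0 : ℝ) • e) :=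
      (ContinuousLinearMap.apply ℝ ℝ e).hasFDerivAt.comp _ h3
    have h4 : HasDerivAt (fun t : ℝ => fderiv ℝ u (y + t • e) e)
        (((ContinuousLinearMap.apply ℝ ℝ e).comp (fderiv ℝ (fderiv ℝ u) y)) e) 0 :=
      hgen _ _ h5
    refine h4.congr_deriv ?_
    simp [iteratedFDeriv_two_apply]

lemma barrier_deriv2 {c b M α : ℝ} (hc : 0 < c) :
    (∀ᶠ t in nhds (0 : ℝ), HasDerivAt (fun t : ℝ => M * (c - 2 * b * t - t ^ 2) ^ (-α))
      (M * ((-2 * b - 2 * t) * (-α) * (c - 2 * b * t - t ^ 2) ^ (-α - 1))) t) ∧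
    HasDerivAt (fun t : ℝ => M * ((-2 * b - 2 * t) * (-α) * (c - 2 * b * t - t ^ 2) ^ (-α - 1)))
      (M * (4 * α * (α + 1) * b ^ 2 * c ^ (-α - 2) + 2 * α * c ^ (-α - 1))) 0 := by
  have hq : ∀ t : ℝ, HasDerivAt (fun t : ℝ => c - 2 * b * t - t ^ 2) (-2 * b - 2 * t) t := by
    intro t
    have := (((hasDerivAt_id t).const_mul (2 * b)).const_sub c).sub ((hasDerivAt_id t).pow 2)
    refine HasDerivAt.congr_deriv this ?_
    simp
  have hpos : ∀ᶠ t in nhds (0 : ℝ), 0 < c - 2 * b * t - t ^ 2 := by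
    have := (hq 0).continuousAt
    exact this.eventually (lt_mem_nhds (by simpa using hc))
  constructor
  · filter_upwards [hpos] with t ht
    exact ((hq t).rpow_const (Or.inl ht.ne')).const_mul M
  · have h1 := (hq 0).rpow_const (p := -α - 1) (Or.inl (by simpa using hc.ne'))
    have h2 : HasDerivAt (fun t : ℝ => (-2 * b - 2 * t) * (-α)) (-2 * (-α)) 0 := by
      have := (((hasDerivAt_id (0 : ℝ)).const_mul 2).const_sub (-2 * b)).mul_const (-α)
      simpa using this
    have h3 := (h2.mul h1).const_mul M
    refine HasDerivAt.congr_deriv h3 ?_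
    have : -α - 1 - 1 = -α - 2 := by ring
    simp [this]
    left; ring

lemma ko_local {n : ℕ} {μ p r : ℝ} (hp1 : 1 < p) (hr : 0 < r)
    (x₀ : EuclideanSpace ℝ (Fin n)) (u : EuclideanSpace ℝ (Fin n) → ℝ)
    (hu : ∀ x ∈ Metric.closedBall x₀ r, ContDiffAt ℝ 2 u x)
    (hpos : ∀ x ∈ Metric.closedBall x₀ r, 0 < u x)
    (hx : ∀ x ∈ Metric.closedBall x₀ r, r ≤ x1 x)
    (heq : ∀ x ∈ Metric.closedBall x₀ r, lap u x + (μ / (x1 x) ^ 2) * u x = u x ^ p)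
    (α K : ℝ) (hα : α = 2 / (p - 1)) (hK : K = 4 * α * (α + 1) + 2 * n * α + |μ|) :
    u x₀ ≤ K ^ (1 / (p - 1)) * r ^ (-α) := by
  have hp : 0 < p - 1 := by linarith
  have hα0 : 0 < α := by rw [hα]; positivity
  have hK0 : 0 < K := by rw [hK]; positivity
  set φ : EuclideanSpace ℝ (Fin n) → ℝ := fun x => r ^ 2 - ‖x - x₀‖ ^ 2 with hφ
  have hφc : Continuous φ := by fun_prop
  have hφnn : ∀ x ∈ Metric.closedBall x₀ r, 0 ≤ φ x := by
    intro x hx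
    rw [mem_closedBall_iff_norm] at hx
    have := norm_nonneg (x - x₀)
    simp only [hφ]; nlinarith
  have hx₀ : x₀ ∈ Metric.closedBall x₀ r := Metric.mem_closedBall_self hr.le
  obtain ⟨y, hy, hymax⟩ := (isCompact_closedBall x₀ r).exists_isMaxOn ⟨x₀, hx₀⟩
    (f := fun x => φ x ^ α * u x) (by
      apply ContinuousOn.mul
      · exact hφc.continuousOn.rpow_const (fun x _ => Or.inr hα0.le)
      · exact fun x hx => (hu x hx).continuousAt.continuousWithinAt)
  set M := φ y ^ α * u y with hM
  have hMmax : ∀ x ∈ Metric.closedBall x₀ r, φ x ^ α * u x ≤ M := fun x hx => hymax hx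
  have hφ₀ : φ x₀ = r ^ 2 := by simp [hφ]
  have hM0 : 0 < M := lt_of_lt_of_le (by rw [hφ₀]; have := hpos _ hx₀; positivity) (hMmax x₀ hx₀)
  have hφy : 0 < φ y := by
    rcases (hφnn y hy).lt_or_eq with h | h
    · exact h
    · rw [hM, ← h, Real.zero_rpow hα0.ne'] at hM0; simp at hM0
  have hb : ∀ x ∈ Metric.closedBall x₀ r, 0 < φ x → u x ≤ M * φ x ^ (-α) := by
    intro x hx h
    have := hMmax x hx
    rw [Real.rpow_neg h.le, ← div_eq_mul_inv, le_div_iff₀ (by positivity)]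
    linarith
  have huy : u y = M * φ y ^ (-α) := by
    rw [hM, Real.rpow_neg hφy.le]
    field_simp
  have hin : ∀ x, 0 < φ x → x ∈ Metric.closedBall x₀ r := by
    intro x h
    rw [mem_closedBall_iff_norm]
    simp only [hφ] at h
    exact (abs_le_of_sq_le_sq' (by linarith) hr.le).2
  have hline : ∀ (i : Fin n) (t : ℝ), φ (y + t • EuclideanSpace.single i (1 : ℝ))
      = φ y - 2 * ((y - x₀) i) * t - t ^ 2 := by
    intro i t
    have : y + t • EuclideanSpace.single i (1 : ℝ) - x₀
        = (y - x₀) + t • EuclideanSpace.single i (1 : ℝ) := by abel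
    simp only [hφ, this]
    rw [norm_add_sq_real, norm_smul, inner_smul_right, EuclideanSpace.inner_single_right]
    simp
    ring
  have hcoord : ∀ i : Fin n, iteratedFDeriv ℝ 2 u y
      ![EuclideanSpace.single i 1, EuclideanSpace.single i 1]
      ≤ M * (4 * α * (α + 1) * ((y - x₀) i) ^ 2 * φ y ^ (-α - 2) + 2 * α * φ y ^ (-α - 1)) := by
    intro i
    obtain ⟨h1, h2⟩ := line_deriv2 (hu y hy) (EuclideanSpace.single i (1 : ℝ))
    obtain ⟨h3, h4⟩ := barrier_deriv2 (b := (y - x₀) i) (M := M) (α := α) hφy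
    refine second_deriv_touch h1 h2 h3 h4 ?_
    have hc : Continuous fun t : ℝ => φ (y + t • EuclideanSpace.single i (1 : ℝ)) := by fun_prop
    have hev : ∀ᶠ t in nhds (0 : ℝ), 0 < φ (y + t • EuclideanSpace.single i (1 : ℝ)) :=
      hc.continuousAt.eventually (lt_mem_nhds (by simpa using hφy))
    filter_upwards [hev] with t ht
    have := hb _ (hin _ ht) ht
    rw [← hline]
    simp
    linarith
  have hlap : lap u y ≤ M * (4 * α * (α + 1) * ‖y - x₀‖ ^ 2 * φ y ^ (-α - 2)
      + 2 * n * α * φ y ^ (-α - 1)) := by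
    unfold lap
    refine (Finset.sum_le_sum fun i _ => hcoord i).trans (le_of_eq ?_)
    rw [← Finset.mul_sum, Finset.sum_add_distrib, ← Finset.sum_mul, ← Finset.mul_sum,
      EuclideanSpace.real_norm_sq_eq]
    simp
    left; ring
  -- the key inequality
  have hφle : φ y ≤ r ^ 2 := by simp only [hφ]; nlinarith [norm_nonneg (y - x₀)]
  have hnle : ‖y - x₀‖ ^ 2 ≤ r ^ 2 := by have := hφy; simp only [hφ] at this; linarith
  set P := φ y ^ (-α - 2) with hP
  have hP0 : 0 < P := by positivity
  have hP1 : φ y ^ (-α - 1) = P * φ y := by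
    rw [hP, show -α - 1 = (-α - 2) + 1 by ring, Real.rpow_add_one hφy.ne']
  have hP2 : φ y ^ (-α) = P * φ y * φ y := by
    rw [← hP1, ← Real.rpow_add_one hφy.ne']; ring_nf
  have hpp : u y ^ p = M ^ p * P := by
    rw [huy, Real.mul_rpow hM0.le (by positivity), ← Real.rpow_mul hφy.le, hP]
    congr 2
    rw [hα]; field_simp; ring
  have hmu : μ / (x1 y) ^ 2 * u y ≤ |μ| * r ^ 2 * (M * P) := by
    have h1 : μ / (x1 y) ^ 2 ≤ |μ| / r ^ 2 :=
      div_le_div₀ (abs_nonneg _) (le_abs_self _) (by positivity)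
        (pow_le_pow_left₀ hr.le (hx y hy) 2)
    calc μ / (x1 y) ^ 2 * u y ≤ |μ| / r ^ 2 * u y :=
          mul_le_mul_of_nonneg_right h1 (hpos y hy).le
      _ = |μ| / r ^ 2 * (M * P) * (φ y * φ y) := by rw [huy, hP2]; ring
      _ ≤ |μ| / r ^ 2 * (M * P) * (r ^ 2 * r ^ 2) := by gcongr
      _ = _ := by field_simp
  have hkey : M ^ p * P ≤ K * r ^ 2 * M * P := by
    rw [← hpp, ← heq y hy]
    have : lap u y ≤ M * (4 * α * (α + 1) * r ^ 2 * P + 2 * n * α * (P * r ^ 2)) := by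
      refine hlap.trans ?_
      rw [hP1]
      gcongr
    rw [hK]
    nlinarith
  have hkey2 : M ^ (p - 1) ≤ K * r ^ 2 := by
    have h := le_of_mul_le_mul_right hkey hP0
    rw [show p = (p - 1) + 1 by ring, Real.rpow_add_one hM0.ne'] at h
    exact le_of_mul_le_mul_right (by simpa using h) hM0
  have hMle : M ≤ K ^ (1 / (p - 1)) * r ^ α := by
    have h := Real.rpow_le_rpow (by positivity) hkey2 (z := 1 / (p - 1)) (by positivity)
    rw [← Real.rpow_mul hM0.le, mul_one_div_cancel hp.ne', Real.rpow_one,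
      Real.mul_rpow hK0.le (by positivity), ← Real.rpow_natCast, ← Real.rpow_mul hr.le] at h
    convert h using 3
    rw [hα]; push_cast; ring
  have hfin := hb x₀ hx₀ (by rw [hφ₀]; positivity)
  rw [hφ₀, ← Real.rpow_natCast, ← Real.rpow_mul hr.le] at hfin
  calc u x₀ ≤ _ := hfin
    _ ≤ (K ^ (1 / (p - 1)) * r ^ α) * r ^ (((2 : ℕ) : ℝ) * -α) := by gcongr
    _ = _ := by rw [mul_assoc, ← Real.rpow_add hr]; congr 2; push_cast; ring

/-- Keller–Osserman type bound: every positive classical solution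
of `Δu + (μ/x₁²)u = u^p` on `ℝⁿ₊ ∩ B_R(0)` satisfies `u ≤ C x₁^{−2/(p−1)}` on
`ℝⁿ₊ ∩ B_{R/2}(0)`, with `C` independent of the solution. -/
theorem stmt14 (n : ℕ) (hn : 2 ≤ n) (μ p R : ℝ) (hμ : μ < 1 / 4) (hp1 : 1 < p)
    (hR : 0 < R) :
    ∃ C > (0 : ℝ), ∀ u : EuclideanSpace ℝ (Fin n) → ℝ,
      ContDiffOn ℝ 2 u (halfSpace n ∩ Metric.ball 0 R) →
      (∀ x ∈ halfSpace n ∩ Metric.ball 0 R, 0 < u x) →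
      (∀ x ∈ halfSpace n ∩ Metric.ball 0 R,
        lap u x + (μ / (x1 x) ^ 2) * u x = u x ^ p) →
      ∀ x ∈ halfSpace n ∩ Metric.ball 0 (R / 2), u x ≤ C * x1 x ^ (-(2 / (p - 1))) := by
  have hn0 : 0 < n := by omega
  have hp : 0 < p - 1 := by linarith
  obtain ⟨α, hα⟩ : ∃ α, α = 2 / (p - 1) := ⟨_, rfl⟩
  have hα0 : 0 < α := by rw [hα]; positivity
  obtain ⟨K, hK⟩ : ∃ K, K = 4 * α * (α + 1) + 2 * n * α + |μ| := ⟨_, rfl⟩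
  have hK0 : 0 < K := by rw [hK]; positivity
  have hx1 : ∀ x : EuclideanSpace ℝ (Fin n), x1 x = x ⟨0, hn0⟩ := fun x => by simp [x1, hn0]
  refine ⟨K ^ (1 / (p - 1)) * 2 ^ α, by positivity, ?_⟩
  intro u hu hpos heq x hx
  have hd : 0 < x1 x := hx.1
  have hxn : ‖x‖ < R / 2 := by simpa using hx.2
  have hle : ∀ z : EuclideanSpace ℝ (Fin n), |z ⟨0, hn0⟩| ≤ ‖z‖ := fun z => by
    simpa using PiLp.norm_apply_le z ⟨0, hn0⟩
  have hdR : x1 x < R / 2 := by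
    rw [hx1]; exact (le_abs_self _).trans_lt ((hle x).trans_lt hxn)
  have hopen : IsOpen (halfSpace n ∩ Metric.ball (0 : EuclideanSpace ℝ (Fin n)) R) := by
    refine IsOpen.inter ?_ Metric.isOpen_ball
    simp only [halfSpace, hx1]
    exact isOpen_lt continuous_const (by fun_prop)
  have hr : ∀ z ∈ Metric.closedBall x (x1 x / 2), x1 x / 2 ≤ x1 z := by
    intro z hz
    rw [mem_closedBall_iff_norm] at hz
    have := (abs_le.1 ((hle (z - x)).trans hz)).1
    rw [hx1 z]
    simp only [PiLp.sub_apply] at this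
    rw [← hx1 x] at this
    linarith
  have hsub : ∀ z ∈ Metric.closedBall x (x1 x / 2), z ∈ halfSpace n ∩ Metric.ball 0 R := by
    intro z hz
    refine ⟨show 0 < x1 z from by linarith [hr z hz], ?_⟩
    rw [mem_closedBall_iff_norm] at hz
    rw [mem_ball_zero_iff]
    have := norm_add_le (z - x) x
    simp only [sub_add_cancel] at this
    linarith
  have h := ko_local (μ := μ) hp1 (half_pos hd) x u
    (fun z hz => hu.contDiffAt (hopen.mem_nhds (hsub z hz)))
    (fun z hz => hpos z (hsub z hz)) hr (fun z hz => heq z (hsub z hz)) α K hα hK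
  refine h.trans (le_of_eq ?_)
  rw [← hα, Real.div_rpow hd.le (by norm_num), Real.rpow_neg (by norm_num : (0 : ℝ) ≤ 2)]
  field_simp
end
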